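/- Let d ≥ 1, let r be a power of a prime, and let t ≥ 2r−1. Let 𝓕 be a family of (d+1)·t hyperplanes in general position in ℝ^d, colored with d+1 colors so that each color is used on exactly t hyperplanes. Then one can choose r pairwise disjoint subfamilies 𝓕_1, …, 𝓕_r ⊆ 𝓕, each consisting of d+1 hyperplanes carrying all d+1 colors, such that the r simplexes formed by these subfamilies have a common interior point. -/

import Mathlib

open scoped InnerProductSpace

/-- A hyperplane in `ℝ^d`: the solution set of one nontrivial linear equation. -/
def IsHyperplane {d : ℕ} (h : Set (EuclideanSpace ℝ (Fin d))) : Prop :=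
  ∃ (v : EuclideanSpace ℝ (Fin d)) (c : ℝ), v ≠ 0 ∧ h = {y | ⟪y, v⟫_ℝ = c}

/-- A family of hyperplanes in `ℝ^d` is in general position if any `d` of them have
exactly one point in common and any `d+1` of them have no common point. -/
def InGeneralPosition {d n : ℕ} (H : Fin n → Set (EuclideanSpace ℝ (Fin d))) : Prop :=
  (∀ s : Finset (Fin n), s.card = d → ∃! x, ∀ i ∈ s, x ∈ H i) ∧
  (∀ s : Finset (Fin n), s.card = d + 1 → ¬ ∃ x, ∀ i ∈ s, x ∈ H i)

/-- The vertex set of the simplex formed by a subfamily `s` of `d+1` hyperplanes: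
for each `i ∈ s`, the (unique) common point of the other `d` hyperplanes of `s`
is a vertex. -/
def SimplexVerticesOf {d N : ℕ} (H : Fin N → Set (EuclideanSpace ℝ (Fin d)))
    (s : Finset (Fin N)) : Set (EuclideanSpace ℝ (Fin d)) :=
  {x | ∃ i ∈ s, ∀ j ∈ s, j ≠ i → x ∈ H j}

/-!
Let `K` be the field with `r` elements. A configuration consists of open half-spaces bounded by
hyperplanes of the family, at most one per hyperplane, and labelled by elements of `K` in such a way
that hyperplanes of the same color carry different labels; it may also contain some of `d + 1` fixed
half-spaces near infinity, and all these half-spaces must have a common point. The group `K` acts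
by translating labels. Cutting `ℝ^d` along the hyperplanes reduces the acyclicity of the complex of
configurations, in degrees below `(d + 1) r`, to the half-spaces containing a single point, and
these form a chessboard complex in each color; this is where `2 r ≤ t + 1` enters.

Test a weighted configuration by the total weight and the weighted sum of outward normals carried
by each label, both centred by their averages over the labels, together with the weighted sum of all
normals. If some coordinate were always positive, the sets of positive coordinates would define an
equivariant chain map to a complex `E` of smaller dimension that restricts to the identity on the
fixed simplexes, those at infinity. Acyclicity lets us lift it back, not equivariantly, but
compatibly with the operator `∑ bᵢ (T(bᵢ) - 1)` on chains, where `T` is the action and `bᵢ` a basis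
of `K` over `ZMod p`; this operator is half of a Weyl pair on the span of the moved simplexes. The
composite chain map on `E` is null-homotopic, so its Lefschetz number vanishes; the moved simplexes
contribute the trace of a commutator, which is zero. What remains is the reduced Euler
characteristic of the boundary of a simplex, which is `±1`.

So the test map has a zero, and a zero without half-spaces at infinity is obtained by letting these
recede. All labels then have the same positive total weight, and outward normals with weighted sum
zero. By general position each label is carried by `d + 1` half-spaces, of different colors, and
their intersection is the interior of the simplex formed by their hyperplanes: the common point of
the configuration is interior to all these simplexes.
-/

namespace DualColorfulTverberg

open Finsupp

section Supported

variable {R M B : Type*} [Ring R] [AddCommGroup M] [Module R M] {s : Set B}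

theorem map_mem_of_mem_supported {f : (B →₀ R) →ₗ[R] M} {U : Submodule R M}
    (h : ∀ x ∈ s, f (single x 1) ∈ U) {c : B →₀ R} (hc : c ∈ supported R R s) : f c ∈ U := by
  suffices supported R R s ≤ U.comap f from this hc
  rw [supported_eq_span_single, Submodule.span_le]
  rintro _ ⟨x, hx, rfl⟩
  exact h x hx

theorem eq_of_mem_supported {f g : (B →₀ R) →ₗ[R] M}
    (h : ∀ x ∈ s, f (single x 1) = g (single x 1)) {c : B →₀ R} (hc : c ∈ supported R R s) :
    f c = g c :=
  map_mem_of_mem_supported (U := LinearMap.eqLocus f g) (f := LinearMap.id) h hc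

end Supported

section Chains

variable {R V : Type*} [Ring R]

/-- Prepending the vertex `v` to every list of a chain: the cone operator with apex `v`. Chains are
finite formal combinations of vertex lists, ordered and possibly with repetitions. -/
noncomputable def consChain (v : V) : (List V →₀ R) →ₗ[R] (List V →₀ R) :=
  lmapDomain R R (List.cons v)

@[simp] theorem consChain_single (v : V) (l : List V) (a : R) :
    consChain v (single l a) = single (v :: l) a := by
  simp [consChain, mapDomain_single]

/-- The simplicial boundary of an ordered simplex, given as the list of its vertices; the empty
list is a face of every vertex, so that the theory is augmented. -/
noncomputable def listBoundary : List V → (List V →₀ R)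
  | [] => 0
  | v :: l => single l 1 - consChain v (listBoundary l)

/-- The boundary operator of the augmented chain complex of ordered simplices. -/
noncomputable def boundary : (List V →₀ R) →ₗ[R] (List V →₀ R) := linearCombination R listBoundary

@[simp] theorem boundary_single (l : List V) (a : R) :
    boundary (single l a) = a • listBoundary l := by
  simp [boundary]

theorem boundary_consChain (v : V) (c : List V →₀ R) :
    boundary (consChain v c) = c - consChain v (boundary c) := by
  induction c using Finsupp.induction_linear with
  | zero => simp
  | add f g hf hg => simp only [map_add, hf, hg]; abel
  | single l a => simp [listBoundary, smul_sub]

theorem boundary_boundary (c : List V →₀ R) : boundary (boundary c) = 0 := by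
  have boundary_listBoundary (l : List V) : boundary (listBoundary l : List V →₀ R) = 0 := by
    induction l with
    | nil => simp [listBoundary]
    | cons v l ih => simp [listBoundary, boundary_consChain, ih]
  induction c using Finsupp.induction_linear with
  | zero => simp
  | add f g hf hg => simp [map_add, hf, hg]
  | single l a => simp [boundary_listBoundary]

/-- The chains of `X` of degree `m`, the degree being the number of vertices. -/
def chains (R : Type*) [Ring R] (X : Set (List V)) (m : ℕ) : Submodule R (List V →₀ R) :=
  supported R R {l | l ∈ X ∧ l.length = m}

variable {X Y : Set (List V)} {m : ℕ}

theorem single_mem_chains {l : List V} (hl : l ∈ X) (hm : l.length = m) (a : R) :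
    single l a ∈ chains R X m :=
  single_mem_supported R a ⟨hl, hm⟩

theorem map_mem_of_mem_chains {M : Type*} [AddCommGroup M] [Module R M]
    {f : (List V →₀ R) →ₗ[R] M} {N : Submodule R M}
    (h : ∀ l ∈ X, l.length = m → f (single l 1) ∈ N) {c : List V →₀ R} (hc : c ∈ chains R X m) :
    f c ∈ N :=
  map_mem_of_mem_supported (fun l hl => h l hl.1 hl.2) hc

theorem eq_of_mem_chains {M : Type*} [AddCommGroup M] [Module R M] {f g : (List V →₀ R) →ₗ[R] M}
    (h : ∀ l ∈ X, l.length = m → f (single l 1) = g (single l 1))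
    {c : List V →₀ R} (hc : c ∈ chains R X m) : f c = g c :=
  eq_of_mem_supported (fun l hl => h l hl.1 hl.2) hc

theorem chains_mono (h : ∀ l ∈ X, l.length = m → l ∈ Y) : chains R X m ≤ chains R Y m :=
  supported_mono fun _ hl => ⟨h _ hl.1 hl.2, hl.2⟩

theorem chains_inter : chains R (X ∩ Y) m = chains R X m ⊓ chains R Y m := by
  rw [chains, chains, chains, ← supported_inter]
  congr 1
  ext l
  simp only [Set.mem_inter_iff, Set.mem_ofPred_eq]
  tauto

theorem exists_mem_chains_add_mem_chains {c : List V →₀ R} (hc : c ∈ chains R (X ∪ Y) m) :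
    ∃ a ∈ chains R X m, ∃ b ∈ chains R Y m, a + b = c := by
  rw [← Submodule.mem_sup, chains, chains, ← supported_union]
  have support_eq : {l | l ∈ X ∧ l.length = m} ∪ {l | l ∈ Y ∧ l.length = m} =
      {l | l ∈ X ∪ Y ∧ l.length = m} := by
    ext l
    simp only [Set.mem_union, Set.mem_ofPred_eq]
    tauto
  rwa [support_eq]

/-- Abstract ordered simplicial complexes: sets of lists closed under passing to faces. -/
def SublistClosed (X : Set (List V)) : Prop := ∀ ⦃l l'⦄, l'.Sublist l → l ∈ X → l' ∈ X

theorem SublistClosed.inter (hX : SublistClosed X) (hY : SublistClosed Y) :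
    SublistClosed (X ∩ Y) :=
  fun _ _ h hl => ⟨hX h hl.1, hY h hl.2⟩

theorem SublistClosed.biUnion {ι : Type*} {Q : Set ι} {A : ι → Set (List V)}
    (hA : ∀ i, SublistClosed (A i)) : SublistClosed (⋃ i ∈ Q, A i) := by
  intro l l' h hl
  simp only [Set.mem_iUnion] at hl ⊢
  obtain ⟨i, hi, hl⟩ := hl
  exact ⟨i, hi, hA i h hl⟩

theorem listBoundary_mem_chains (l : List V) (hm : l.length = m + 1) :
    (listBoundary l : List V →₀ R) ∈ chains R {l' | l'.Sublist l} m := by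
  induction l generalizing m with
  | nil => simp at hm
  | cons v l ih =>
    have hm : l.length = m := by simpa using hm
    refine Submodule.sub_mem _ (single_mem_chains (X := {l' | l'.Sublist (v :: l)})
      (List.sublist_cons_self v l) hm 1) ?_
    rcases m with _ | m
    · simp [List.length_eq_zero_iff.1 hm, listBoundary]
    · refine map_mem_of_mem_chains (f := consChain v) (fun l' hl' hm' => ?_) (ih hm)
      rw [consChain_single]
      exact single_mem_chains (X := {l' | l'.Sublist (v :: l)}) (List.Sublist.cons_cons v hl')
        (by simp [hm']) 1

theorem boundary_mem_chains (hX : SublistClosed X) {c : List V →₀ R}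
    (hc : c ∈ chains R X (m + 1)) : boundary c ∈ chains R X m := by
  refine map_mem_of_mem_chains (fun l hl hm => ?_) hc
  rw [boundary_single, one_smul]
  exact chains_mono (fun l' hl' _ => hX hl' hl) (listBoundary_mem_chains l hm)

theorem boundary_eq_zero_of_mem_chains_zero {c : List V →₀ R} (hc : c ∈ chains R X 0) :
    boundary c = 0 := by
  refine eq_of_mem_chains (g := 0) (fun l _ hm => ?_) hc
  simp [List.length_eq_zero_iff.1 hm, listBoundary]

/-- Every cycle of `X` of degree `m` bounds in `X`; as degrees count vertices, this is the vanishing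
of reduced homology in dimension `m - 1`. -/
def AcyclicAt (R : Type*) [Ring R] (X : Set (List V)) (m : ℕ) : Prop :=
  ∀ c ∈ chains R X m, boundary c = 0 → ∃ b ∈ chains R X (m + 1), boundary b = c

theorem acyclicAt_of_cons_mem (v : V) (hv : ∀ l ∈ X, v :: l ∈ X) : AcyclicAt R X m := by
  intro c hc hb
  refine ⟨consChain v c, map_mem_of_mem_chains (fun l hl hm => ?_) hc, ?_⟩
  · rw [consChain_single]
    exact single_mem_chains (hv l hl) (by simp [hm]) 1
  · rw [boundary_consChain, hb, map_zero, sub_zero]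

open scoped Classical in
/-- The cone operator with apex `v` when `v` may occur only once in a list: lists already containing
`v` are sent to zero. -/
noncomputable def insertChain (v : V) : (List V →₀ R) →ₗ[R] (List V →₀ R) :=
  linearCombination R fun l => if v ∈ l then 0 else single (v :: l) 1

theorem insertChain_single_of_mem {v : V} {l : List V} (h : v ∈ l) :
    insertChain v (single l (1 : R)) = 0 := by
  simp [insertChain, h]

theorem insertChain_single_of_notMem {v : V} {l : List V} (h : v ∉ l) :
    insertChain v (single l (1 : R)) = single (v :: l) 1 := by
  simp [insertChain, h]

theorem insertChain_listBoundary {v : V} {l : List V} (h : v ∉ l) :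
    insertChain v (listBoundary l : List V →₀ R) = consChain v (listBoundary l) := by
  rcases l with _ | ⟨w, l⟩
  · simp [listBoundary]
  · refine eq_of_mem_chains (fun l' hl' _ => ?_) (listBoundary_mem_chains (w :: l) rfl)
    rw [insertChain_single_of_notMem fun h' => h (hl'.subset h'), consChain_single]

theorem insertChain_consChain (v : V) (c : List V →₀ R) : insertChain v (consChain v c) = 0 := by
  induction c using Finsupp.induction_linear with
  | zero => simp
  | add f g hf hg => simp only [map_add, hf, hg, add_zero]
  | single l a => simp [insertChain]

theorem boundary_insertChain_add {v : V} {l : List V}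
    (h : v ∉ l ∨ ∃ l', l = v :: l' ∧ v ∉ l') :
    boundary (insertChain v (single l (1 : R))) + insertChain v (boundary (single l 1)) =
      single l 1 := by
  rcases h with h | ⟨l, rfl, h⟩
  · rw [insertChain_single_of_notMem h, boundary_single, boundary_single, one_smul, one_smul,
      listBoundary, insertChain_listBoundary h, sub_add_cancel]
  · rw [insertChain_single_of_mem (by simp), boundary_single, one_smul, listBoundary, map_sub,
      map_zero, zero_add, insertChain_consChain, insertChain_single_of_notMem h, sub_zero]

theorem acyclicAt_of_cons_mem_of_notMem (v : V)
    (hv : ∀ l ∈ X, (v ∉ l ∧ v :: l ∈ X) ∨ ∃ l', l = v :: l' ∧ v ∉ l') : AcyclicAt R X m := by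
  intro c hc hb
  refine ⟨insertChain v c, map_mem_of_mem_chains (fun l hl hm => ?_) hc, ?_⟩
  · rcases hv l hl with ⟨h, hvl⟩ | ⟨l', rfl, -⟩
    · rw [insertChain_single_of_notMem h]
      exact single_mem_chains hvl (by simp [hm]) 1
    · rw [insertChain_single_of_mem (by simp)]
      exact Submodule.zero_mem _
  · have homotopy := eq_of_mem_chains (f := boundary ∘ₗ insertChain v + insertChain v ∘ₗ boundary)
      (g := LinearMap.id)
      (fun l hl _ => boundary_insertChain_add ((hv l hl).imp And.left id)) hc
    simpa [hb] using homotopy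

theorem AcyclicAt.mono_zero (h : AcyclicAt R X 0) (hX : [] ∈ X) (hXY : X ⊆ Y) :
    AcyclicAt R Y 0 := by
  intro c hc hb
  obtain ⟨b, hbX, rfl⟩ :=
    h c (chains_mono (fun l _ hm => List.length_eq_zero_iff.1 hm ▸ hX) hc) hb
  exact ⟨b, chains_mono (fun l hl _ => hXY hl) hbX, rfl⟩

/-- The Mayer–Vietoris argument. -/
theorem AcyclicAt.union (hX : SublistClosed X) (hY : SublistClosed Y)
    (aX : AcyclicAt R X (m + 1)) (aY : AcyclicAt R Y (m + 1)) (aXY : AcyclicAt R (X ∩ Y) m) :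
    AcyclicAt R (X ∪ Y) (m + 1) := by
  intro c hc hb
  obtain ⟨a, ha, b, hb', rfl⟩ := exists_mem_chains_add_mem_chains hc
  rw [map_add] at hb
  have hmem : boundary a ∈ chains R (X ∩ Y) m := by
    rw [chains_inter]
    refine ⟨boundary_mem_chains hX ha, ?_⟩
    rw [eq_neg_of_add_eq_zero_left hb]
    exact Submodule.neg_mem _ (boundary_mem_chains hY hb')
  obtain ⟨z, hz, hza⟩ := aXY _ hmem (boundary_boundary _)
  rw [chains_inter] at hz
  obtain ⟨x, hx, hxa⟩ := aX (a - z) (Submodule.sub_mem _ ha hz.1) (by rw [map_sub, hza, sub_self])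
  obtain ⟨y, hy, hyb⟩ := aY (b + z) (Submodule.add_mem _ hb' hz.2) (by
    rw [map_add, hza, add_comm, hb])
  refine ⟨x + y, Submodule.add_mem _ (chains_mono (fun _ h _ => Or.inl h) hx)
    (chains_mono (fun _ h _ => Or.inr h) hy), ?_⟩
  rw [map_add, hxa, hyb, sub_add_add_cancel]

/-- The nerve lemma: a union is as acyclic as the intersections of its pieces allow. -/
theorem acyclicAt_biUnion {ι : Type*} {Q : Finset ι} (hQ : Q.Nonempty) {A : ι → Set (List V)}
    (hA : ∀ i, SublistClosed (A i)) (hnil : ∀ i ∈ Q, [] ∈ A i)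
    (h : ∀ T ⊆ Q, T.Nonempty → ∀ m', m' + T.card ≤ m + 1 → AcyclicAt R (⋂ i ∈ T, A i) m') :
    AcyclicAt R (⋃ i ∈ Q, A i) m := by
  classical
  induction hQ using Finset.Nonempty.cons_induction generalizing A m with
  | singleton a => simpa using h {a} subset_rfl (by simp) m (by simp)
  | cons a Q ha _ ih =>
    have hQa : Q ⊆ Finset.cons a Q ha := Finset.subset_cons ha
    have acyclic_a : AcyclicAt R (A a) m := by simpa using h {a} (by simp) (by simp) m (by simp)
    have union_eq : ⋃ i ∈ Finset.cons a Q ha, A i = A a ∪ ⋃ i ∈ Q, A i := by simp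
    rw [union_eq]
    rcases m with _ | m
    · exact acyclic_a.mono_zero (hnil a (by simp)) Set.subset_union_left
    refine acyclic_a.union (hA a) (SublistClosed.biUnion hA)
      (ih hA (fun i hi => hnil i (hQa hi)) fun T hT => h T (hT.trans hQa)) ?_
    rw [Set.inter_iUnion₂]
    refine ih (fun i => (hA a).inter (hA i))
      (fun i hi => ⟨hnil a (by simp), hnil i (hQa hi)⟩) fun T hT hTn m' hm' => ?_
    have inter_eq : ⋂ i ∈ T, (A a ∩ A i) = ⋂ i ∈ insert a T, A i := by
      rw [Finset.set_biInter_insert]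
      exact Set.inter_biInter hTn A (A a)
    rw [inter_eq]
    refine h _ ?_ (Finset.insert_nonempty a T) m' ?_
    · rw [Finset.cons_eq_insert]
      exact Finset.insert_subset_insert a hT
    · rw [Finset.card_insert_of_notMem fun h => ha (hT h)]
      omega

variable {W : Type*}

/-- The chain map induced by a map of vertices. -/
noncomputable def mapChain (R : Type*) [Ring R] (f : V → W) :
    (List V →₀ R) →ₗ[R] (List W →₀ R) :=
  lmapDomain R R (List.map f)

@[simp] theorem mapChain_single (f : V → W) (l : List V) (a : R) :
    mapChain R f (single l a) = single (l.map f) a := by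
  simp [mapChain, mapDomain_single]

theorem mapChain_consChain (f : V → W) (v : V) (c : List V →₀ R) :
    mapChain R f (consChain v c) = consChain (f v) (mapChain R f c) := by
  induction c using Finsupp.induction_linear with
  | zero => simp
  | add f g hf hg => simp only [map_add, hf, hg]
  | single l a => simp

theorem boundary_mapChain (f : V → W) (c : List V →₀ R) :
    boundary (mapChain R f c) = mapChain R f (boundary c) := by
  have listBoundary_map (l : List V) :
      (listBoundary (l.map f) : List W →₀ R) = mapChain R f (listBoundary l) := by
    induction l with
    | nil => simp [listBoundary]
    | cons v l ih => simp [listBoundary, ih, mapChain_consChain]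
  induction c using Finsupp.induction_linear with
  | zero => simp
  | add f g hf hg => simp only [map_add, hf, hg]
  | single l a => simp [listBoundary_map]

theorem mapChain_mem_chains {f : V → W} {Y : Set (List W)} (h : ∀ l ∈ X, l.map f ∈ Y)
    {c : List V →₀ R} (hc : c ∈ chains R X m) : mapChain R f c ∈ chains R Y m :=
  map_mem_of_mem_chains (fun l hl hm => by
    rw [mapChain_single]
    exact single_mem_chains (h l hl) (by simpa using hm) 1) hc

theorem AcyclicAt.image_map {f : V → W} (hf : Function.Injective f) (h : AcyclicAt R X m) :
    AcyclicAt R (List.map f '' X) m := by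
  intro c hc hb
  obtain ⟨c, hcX, rfl⟩ : c ∈ (chains R X m).map (mapChain R f) := by
    refine map_mem_of_mem_chains (f := LinearMap.id) ?_ hc
    rintro _ ⟨l, hl, rfl⟩ hm
    exact ⟨single l 1, single_mem_chains hl (by simpa using hm) 1, mapChain_single f l 1⟩
  have hb' : boundary c = 0 := by
    refine mapDomain_injective (List.map_injective_iff.2 hf) ?_
    rw [mapDomain_zero]
    rwa [boundary_mapChain] at hb
  obtain ⟨b, hbX, rfl⟩ := h c hcX hb'
  exact ⟨mapChain R f b, mapChain_mem_chains (fun l hl => Set.mem_image_of_mem _ hl) hbX,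
    boundary_mapChain f b⟩

end Chains

section Nerve

open AffineMap Filter Topology SignType

variable {R V κ E : Type*}

/-- The subcomplex of the lists in `X` whose labels `O v` have a common point in `Q`. -/
def nerve (X : Set (List V)) (O : V → Set E) (Q : Set E) : Set (List V) :=
  {l | l ∈ X ∧ ∃ q ∈ Q, ∀ v ∈ l, q ∈ O v}

variable {X : Set (List V)} {O : V → Set E} {Q Q' : Set E} {m : ℕ}

theorem nerve_mono (h : Q ⊆ Q') : nerve X O Q ⊆ nerve X O Q' :=
  fun _ ⟨hl, q, hq, hv⟩ => ⟨hl, q, h hq, hv⟩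

theorem nerve_union : nerve X O (Q ∪ Q') = nerve X O Q ∪ nerve X O Q' := by
  ext l
  simp only [nerve, Set.mem_union, Set.mem_ofPred_eq, or_and_right, exists_or, and_or_left]

theorem sublistClosed_nerve (hX : SublistClosed X) : SublistClosed (nerve X O Q) :=
  fun _ _ h ⟨hl, q, hq, hv⟩ => ⟨hX h hl, q, hq, fun v hv' => hv v (h.subset hv')⟩

theorem nil_mem_nerve (hnil : [] ∈ X) (hQ : Q.Nonempty) : [] ∈ nerve X O Q :=
  ⟨hnil, hQ.some, hQ.some_mem, by simp⟩

variable [Ring R] [AddCommGroup E] [Module ℝ E]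

/-- Sets that contain an initial piece of every segment starting in them. -/
def RadiallyOpen (s : Set E) : Prop :=
  ∀ q ∈ s, ∀ q', ∀ᶠ t in 𝓝[>] (0 : ℝ), lineMap q q' t ∈ s

/-- The cell of the hyperplane `f = 0` on which `f` has sign `σ`. -/
def signCell (f : E →ᵃ[ℝ] ℝ) (σ : SignType) : Set E := {q | sign (f q) = σ}

variable {f : E →ᵃ[ℝ] ℝ} {σ : SignType}

theorem convex_signCell : Convex ℝ (signCell f σ) := by
  cases σ
  · have eq_preimage : signCell f .zero = f ⁻¹' {0} := by ext q; exact sign_eq_zero_iff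
    exact eq_preimage ▸ (convex_singleton 0).affine_preimage f
  · have eq_preimage : signCell f .neg = f ⁻¹' Set.Iio 0 := by ext q; exact sign_eq_neg_one_iff
    exact eq_preimage ▸ (convex_Iio 0).affine_preimage f
  · have eq_preimage : signCell f .pos = f ⁻¹' Set.Ioi 0 := by ext q; exact sign_eq_one_iff
    exact eq_preimage ▸ (convex_Ioi 0).affine_preimage f

theorem radiallyOpen_signCell (hσ : σ ≠ 0) : RadiallyOpen (signCell f σ) := by
  rintro q rfl q'
  have continuous_line : Continuous fun t : ℝ => f (lineMap q q' t) := by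
    simp only [apply_lineMap, lineMap_apply_ring]
    fun_prop
  have sign_locally_constant : {x : ℝ | sign x = sign (f q)} ∈ 𝓝 (f (lineMap q q' (0 : ℝ))) := by
    rw [lineMap_apply_zero]
    exact continuousAt_sign_of_ne_zero (by simpa using hσ)
      (isOpen_discrete {sign (f q)} |>.mem_nhds rfl)
  exact nhdsWithin_le_nhds (continuous_line.continuousAt sign_locally_constant)

theorem eventually_lineMap_mem (hQ : Convex ℝ Q) {q q' : E} (hq : q ∈ Q) (hq' : q' ∈ Q) :
    ∀ᶠ t in 𝓝[>] (0 : ℝ), lineMap q q' t ∈ Q := by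
  filter_upwards [Ioo_mem_nhdsGT (zero_lt_one (α := ℝ))] with t ht
  exact hQ.lineMap_mem hq hq' ⟨ht.1.le, ht.2.le⟩

theorem exists_mem_signCell_of_mem_zero (hO : ∀ v, RadiallyOpen (O v)) (hQ : Convex ℝ Q)
    {l : List V} {q q' : E} (hq : q ∈ Q ∩ signCell f 0) (hq' : q' ∈ Q ∩ signCell f σ)
    (hl : ∀ v ∈ l, q ∈ O v) : ∃ q'' ∈ Q ∩ signCell f σ, ∀ v ∈ l, q'' ∈ O v := by
  have eventually_mem : ∀ᶠ t in 𝓝[>] (0 : ℝ), ∀ v ∈ {v | v ∈ l}, lineMap q q' t ∈ O v :=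
    (eventually_all_finite l.finite_toSet).2 fun v hv => hO v q (hl v hv) q'
  obtain ⟨t, htO, htQ, ht⟩ :=
    (eventually_mem.and ((eventually_lineMap_mem hQ hq.1 hq'.1).and self_mem_nhdsWithin)).exists
  refine ⟨lineMap q q' t, ⟨htQ, ?_⟩, htO⟩
  have zero_at_q : f q = 0 := sign_eq_zero_iff.1 hq.2
  have sign_eq : sign (f (lineMap q q' t)) = sign (f q') := by
    rw [apply_lineMap, lineMap_apply_ring, zero_at_q, mul_zero, zero_add, sign_mul, sign_pos ht,
      one_mul]
  exact sign_eq.trans hq'.2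

theorem exists_mem_signCell_zero (hO : ∀ v, Convex ℝ (O v)) (hQ : Convex ℝ Q) {l : List V}
    {q q' : E} (hq : q ∈ Q ∩ signCell f 1) (hq' : q' ∈ Q ∩ signCell f (-1))
    (hl : ∀ v ∈ l, q ∈ O v) (hl' : ∀ v ∈ l, q' ∈ O v) :
    ∃ z ∈ Q ∩ signCell f 0, ∀ v ∈ l, z ∈ O v := by
  have hpos : 0 < f q := sign_eq_one_iff.1 hq.2
  have hneg : f q' < 0 := sign_eq_neg_one_iff.1 hq'.2
  have hlt : 0 < f q - f q' := by linarith
  have ht : f q / (f q - f q') ∈ Set.Icc (0 : ℝ) 1 :=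
    ⟨by positivity, (div_le_one hlt).2 (by linarith)⟩
  refine ⟨lineMap q q' (f q / (f q - f q')), ⟨hQ.lineMap_mem hq.1 hq'.1 ht, ?_⟩,
    fun v hv => (hO v).lineMap_mem (hl v hv) (hl' v hv) ht⟩
  refine sign_eq_zero_iff.2 ?_
  rw [apply_lineMap, lineMap_apply_ring]
  field_simp
  ring

theorem nerve_zero_subset (hO : ∀ v, RadiallyOpen (O v)) (hQ : Convex ℝ Q)
    (hne : (Q ∩ signCell f σ).Nonempty) :
    nerve X O (Q ∩ signCell f 0) ⊆ nerve X O (Q ∩ signCell f σ) := by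
  rintro l ⟨hl, q, hq, hv⟩
  exact ⟨hl, exists_mem_signCell_of_mem_zero hO hQ hq hne.some_mem hv⟩

theorem nerve_pos_inter_neg (hOc : ∀ v, Convex ℝ (O v)) (hO : ∀ v, RadiallyOpen (O v))
    (hQ : Convex ℝ Q) (hpos : (Q ∩ signCell f 1).Nonempty)
    (hneg : (Q ∩ signCell f (-1)).Nonempty) :
    nerve X O (Q ∩ signCell f 1) ∩ nerve X O (Q ∩ signCell f (-1)) =
      nerve X O (Q ∩ signCell f 0) := by
  refine subset_antisymm ?_
    (Set.subset_inter (nerve_zero_subset hO hQ hpos) (nerve_zero_subset hO hQ hneg))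
  rintro l ⟨⟨hl, q, hq, hv⟩, -, q', hq', hv'⟩
  exact ⟨hl, exists_mem_signCell_zero hOc hQ hq hq' hv hv'⟩

theorem nerve_eq_pos_union_neg (hO : ∀ v, RadiallyOpen (O v)) (hQ : Convex ℝ Q)
    (hf : ∃ q ∈ Q, f q ≠ 0) :
    nerve X O Q = nerve X O (Q ∩ signCell f 1) ∪ nerve X O (Q ∩ signCell f (-1)) := by
  refine subset_antisymm ?_ (Set.union_subset (nerve_mono Set.inter_subset_left)
    (nerve_mono Set.inter_subset_left))
  have zero_subset : nerve X O (Q ∩ signCell f 0) ⊆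
      nerve X O (Q ∩ signCell f 1) ∪ nerve X O (Q ∩ signCell f (-1)) := by
    obtain ⟨q, hq, hq0⟩ := hf
    rcases lt_or_gt_of_ne hq0 with h | h
    · exact (nerve_zero_subset hO hQ ⟨q, hq, sign_neg h⟩).trans Set.subset_union_right
    · exact (nerve_zero_subset hO hQ ⟨q, hq, sign_pos h⟩).trans Set.subset_union_left
  have cells_cover : Q = Q ∩ signCell f 0 ∪ (Q ∩ signCell f 1 ∪ Q ∩ signCell f (-1)) := by
    rw [← Set.inter_union_distrib_left, ← Set.inter_union_distrib_left, eq_comm,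
      Set.inter_eq_left]
    intro q _
    rcases lt_trichotomy (f q) 0 with h | h | h <;> simp [signCell, h, sign_pos]
  conv_lhs => rw [cells_cover, nerve_union, nerve_union]
  exact Set.union_subset zero_subset subset_rfl

theorem acyclicAt_nerve_of_signCell (hX : SublistClosed X) (hnil : [] ∈ X)
    (hOc : ∀ v, Convex ℝ (O v)) (hO : ∀ v, RadiallyOpen (O v)) (hQ : Convex ℝ Q)
    (hf : ∃ q ∈ Q, f q ≠ 0)
    (hs : ∀ σ ≠ 0, (Q ∩ signCell f σ).Nonempty → AcyclicAt R (nerve X O (Q ∩ signCell f σ)) m)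
    (hz : ∀ m', m' + 1 = m → (Q ∩ signCell f 0).Nonempty →
      AcyclicAt R (nerve X O (Q ∩ signCell f 0)) m') :
    AcyclicAt R (nerve X O Q) m := by
  by_cases hpos : (Q ∩ signCell f 1).Nonempty
  · by_cases hneg : (Q ∩ signCell f (-1)).Nonempty
    · rcases m with _ | m
      · exact (hs 1 (by decide) hpos).mono_zero (nil_mem_nerve hnil hpos)
          (nerve_mono Set.inter_subset_left)
      obtain ⟨z, hzQ, -⟩ := exists_mem_signCell_zero (l := []) hOc hQ hpos.some_mem hneg.some_mem
        (by simp) (by simp)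
      rw [nerve_eq_pos_union_neg hO hQ hf]
      refine (hs 1 (by decide) hpos).union (sublistClosed_nerve hX) (sublistClosed_nerve hX)
        (hs (-1) (by decide) hneg) ?_
      rw [nerve_pos_inter_neg hOc hO hQ hpos hneg]
      exact hz m rfl ⟨z, hzQ⟩
    · rw [nerve_eq_pos_union_neg hO hQ hf, Set.not_nonempty_iff_eq_empty.1 hneg]
      simpa [nerve] using hs 1 (by decide) hpos
  · have hneg : (Q ∩ signCell f (-1)).Nonempty := by
      obtain ⟨q, hq, hq0⟩ := hf
      exact ⟨q, hq, sign_neg (hq0.lt_of_le (not_lt.1 fun h => hpos ⟨q, hq, sign_pos h⟩))⟩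
    rw [nerve_eq_pos_union_neg hO hQ hf, Set.not_nonempty_iff_eq_empty.1 hpos]
    simpa [nerve] using hs (-1) (by decide) hneg

/-- Finite intersections of open half-spaces bounded by the hyperplanes `ℓ k = 0`; the second
component of an index selects the side. -/
def IsOpenPolyhedron (ℓ : κ → E →ᵃ[ℝ] ℝ) (s : Set E) : Prop :=
  ∃ A : Finset (κ × SignType), (∀ x ∈ A, x.2 ≠ 0) ∧ s = ⋂ x ∈ A, signCell (ℓ x.1) x.2

variable {ℓ : κ → E →ᵃ[ℝ] ℝ}

theorem IsOpenPolyhedron.convex {s : Set E} (hs : IsOpenPolyhedron ℓ s) : Convex ℝ s := by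
  obtain ⟨A, -, rfl⟩ := hs
  exact convex_iInter₂ fun x _ => convex_signCell

theorem IsOpenPolyhedron.radiallyOpen {s : Set E} (hs : IsOpenPolyhedron ℓ s) :
    RadiallyOpen s := by
  obtain ⟨A, hA, rfl⟩ := hs
  intro q hq q'
  simp only [Set.mem_iInter] at hq ⊢
  refine (eventually_all_finset A).2 fun x hx => radiallyOpen_signCell (hA x hx) q (hq x hx) q'

/-- The sign of `f` does not vary on `Q`. -/
def SignConstantOn (f : E →ᵃ[ℝ] ℝ) (Q : Set E) : Prop :=
  ∀ q ∈ Q, ∀ q' ∈ Q, sign (f q) = sign (f q')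

theorem signConstantOn_inter_signCell : SignConstantOn f (Q ∩ signCell f σ) :=
  fun _ hq _ hq' => hq.2.trans hq'.2.symm

theorem SignConstantOn.mono (h : SignConstantOn f Q') (hQ : Q ⊆ Q') : SignConstantOn f Q :=
  fun q hq q' hq' => h q (hQ hq) q' (hQ hq')

theorem acyclicAt_nerve_of_signConstantOn (hO : ∀ v, IsOpenPolyhedron ℓ (O v)) {q : E}
    (hq : q ∈ Q) (hsc : ∀ k, SignConstantOn (ℓ k) Q) (h : AcyclicAt R (nerve X O {q}) m) :
    AcyclicAt R (nerve X O Q) m := by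
  suffices nerve X O Q ⊆ nerve X O {q} by
    rwa [subset_antisymm this (nerve_mono (Set.singleton_subset_iff.2 hq))]
  rintro l ⟨hl, q', hq', hv⟩
  refine ⟨hl, q, rfl, fun v hvl => ?_⟩
  obtain ⟨A, -, hA⟩ := hO v
  have mem_of_mem := hv v hvl
  rw [hA] at mem_of_mem ⊢
  simp only [Set.mem_iInter] at mem_of_mem ⊢
  exact fun x hx => (hsc x.1 q hq q' hq').trans (mem_of_mem x hx)

theorem SignConstantOn.inter_signCell_of_notMem_insert [DecidableEq κ] {F : Finset κ} {k : κ}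
    (h : ∀ k' ∉ insert k F, SignConstantOn (ℓ k') Q) (σ : SignType) :
    ∀ k' ∉ F, SignConstantOn (ℓ k') (Q ∩ signCell (ℓ k) σ) := by
  intro k' hk'
  by_cases hkk : k' = k
  · exact hkk ▸ signConstantOn_inter_signCell
  · exact (h k' (by simp [hkk, hk'])).mono Set.inter_subset_left

/-- If the labels are polyhedra, the nerve over a convex set is as acyclic as the nerves at its
points: cut the convex set by one hyperplane after the other. -/
theorem acyclicAt_nerve_of_forall_mem (hX : SublistClosed X) (hnil : [] ∈ X)
    (hO : ∀ v, IsOpenPolyhedron ℓ (O v)) (F : Finset κ) (hQ : Convex ℝ Q) (hQn : Q.Nonempty)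
    (hsc : ∀ k ∉ F, SignConstantOn (ℓ k) Q)
    (h : ∀ q ∈ Q, ∀ m' ≤ m, AcyclicAt R (nerve X O {q}) m') : AcyclicAt R (nerve X O Q) m := by
  classical
  induction F using Finset.induction_on generalizing Q m with
  | empty =>
    exact acyclicAt_nerve_of_signConstantOn hO hQn.some_mem (fun k => hsc k (by simp))
      (h _ hQn.some_mem m le_rfl)
  | insert k F _ ih =>
    by_cases hk : ∃ q ∈ Q, ℓ k q ≠ 0
    · have hsc' := SignConstantOn.inter_signCell_of_notMem_insert hsc
      exact acyclicAt_nerve_of_signCell hX hnil (fun v => (hO v).convex)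
        (fun v => (hO v).radiallyOpen) hQ hk
        (fun σ _ hne => ih (hQ.inter convex_signCell) hne (hsc' σ) fun q hq => h q hq.1)
        (fun m' hm' hne => ih (hQ.inter convex_signCell) hne (hsc' 0) fun q hq m'' hm'' =>
          h q hq.1 m'' (by omega))
    · push Not at hk
      refine ih hQ hQn (fun k' hk' => ?_) h
      by_cases hkk : k' = k
      · intro q hq q' hq'
        rw [hkk, hk q hq, hk q' hq']
      · exact hsc k' (by simp [hkk, hk'])

/-- The hyperplanes indexed by `I` cut each other properly inside `Q`: none of them contains
a nonempty intersection of others. -/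
def CutsProperly (ℓ : κ → E →ᵃ[ℝ] ℝ) (I : Finset κ) (Q : Set E) : Prop :=
  ∀ T ⊆ I, ∀ k ∈ I, k ∉ T → ∀ q ∈ Q, (∀ i ∈ T, ℓ i q = 0) → ℓ k q = 0 →
    ∃ q' ∈ Q, (∀ i ∈ T, ℓ i q' = 0) ∧ ℓ k q' ≠ 0

theorem CutsProperly.inter_signCell [DecidableEq κ] {I : Finset κ} {k : κ} (hk : k ∉ I)
    (h : CutsProperly ℓ (insert k I) Q) (hQ : Convex ℝ Q) (σ : SignType) :
    CutsProperly ℓ I (Q ∩ signCell (ℓ k) σ) := by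
  intro T hT k' hk' hkT q hq hqT hqk
  have hkk : k ≠ k' := fun h => hk (h ▸ hk')
  rcases eq_or_ne σ 0 with rfl | hσ
  · obtain ⟨q', hq', hq'T, hne⟩ := h (insert k T) (Finset.insert_subset_insert k hT) k'
      (Finset.mem_insert_of_mem hk') (by simp [hkT, hkk.symm]) q hq.1
      (Finset.forall_mem_insert .. |>.2 ⟨sign_eq_zero_iff.1 hq.2, hqT⟩) hqk
    rw [Finset.forall_mem_insert] at hq'T
    exact ⟨q', ⟨hq', sign_eq_zero_iff.2 hq'T.1⟩, hq'T.2, hne⟩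
  · obtain ⟨q', hq', hq'T, hne⟩ := h T (hT.trans (Finset.subset_insert k I)) k'
      (Finset.mem_insert_of_mem hk') hkT q hq.1 hqT hqk
    obtain ⟨t, htσ, htQ, ht⟩ := ((radiallyOpen_signCell hσ q hq.2 q').and
      ((eventually_lineMap_mem hQ hq.1 hq').and self_mem_nhdsWithin)).exists
    refine ⟨lineMap q q' t, ⟨htQ, htσ⟩, fun i hi => ?_, ?_⟩
    · simp [apply_lineMap, hqT i hi, hq'T i hi]
    · simpa [apply_lineMap, lineMap_apply_ring, hqk, hne] using ht.ne'

/-- Each of the hyperplanes in `I` through a point `q` costs one degree less of acyclicity at `q`,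
because cutting by it separates the nerve into two pieces meeting over the hyperplane. -/
theorem acyclicAt_nerve_of_cutsProperly [Finite κ] (hX : SublistClosed X) (hnil : [] ∈ X)
    (hO : ∀ v, IsOpenPolyhedron ℓ (O v)) (I : Finset κ) (hI : CutsProperly ℓ I Q)
    (hQ : Convex ℝ Q) (hQn : Q.Nonempty)
    (h : ∀ q ∈ Q, ∀ m', m' + {k ∈ I | ℓ k q = 0}.card ≤ m → AcyclicAt R (nerve X O {q}) m') :
    AcyclicAt R (nerve X O Q) m := by
  classical
  have := Fintype.ofFinite κ
  induction I using Finset.induction_on generalizing Q m with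
  | empty =>
    exact acyclicAt_nerve_of_forall_mem hX hnil hO Finset.univ hQ hQn (by simp) (by simpa using h)
  | insert k I hk ih =>
    have not_identically_zero : ∃ q ∈ Q, ℓ k q ≠ 0 := by
      by_cases h0 : ℓ k hQn.some = 0
      · obtain ⟨q', hq', -, hne⟩ := hI ∅ (by simp) k (by simp) (by simp) _ hQn.some_mem (by simp) h0
        exact ⟨q', hq', hne⟩
      · exact ⟨_, hQn.some_mem, h0⟩
    refine acyclicAt_nerve_of_signCell hX hnil (fun v => (hO v).convex)
      (fun v => (hO v).radiallyOpen) hQ not_identically_zero (fun σ hσ hne => ?_)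
      (fun m' hm' hne => ?_)
    · refine ih (hI.inter_signCell hk hQ σ) (hQ.inter convex_signCell) hne fun q hq m' hm' =>
        h q hq.1 m' ?_
      rwa [Finset.filter_insert, if_neg fun h0 => hσ (hq.2.symm.trans (sign_eq_zero_iff.2 h0))]
    · refine ih (hI.inter_signCell hk hQ 0) (hQ.inter convex_signCell) hne fun q hq m'' hm'' =>
        h q hq.1 m'' ?_
      rw [Finset.filter_insert, if_pos (sign_eq_zero_iff.1 hq.2),
        Finset.card_insert_of_notMem (by simp [hk])]
      omega

end Nerve

section Chessboard

variable {R I C G : Type*}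

/-- The join over all colors of chessboard complexes: lists of distinct rooks `(i, b)` with row `i`
in `T`, column `b` available for the color of `i`, at most one rook in each row, and no two rooks of
the same color in the same column. -/
def chessboard (col : I → C) (T : Finset I) (S : C → Finset G) : Set (List (I × G)) :=
  {l | (∀ v ∈ l, v.1 ∈ T ∧ v.2 ∈ S (col v.1)) ∧
    ∀ v ∈ l, ∀ w ∈ l, (v.1 = w.1 ∨ col v.1 = col w.1 ∧ v.2 = w.2) → v = w}

variable {col : I → C} {T : Finset I} {S : C → Finset G} {l l' : List (I × G)} {i : I} {b : G}

theorem mem_chessboard_of_subset (h : l' ⊆ l) (hl : l ∈ chessboard col T S) :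
    l' ∈ chessboard col T S :=
  ⟨fun v hv => hl.1 v (h hv), fun v hv w hw => hl.2 v (h hv) w (h hw)⟩

theorem cons_mem_chessboard :
    (i, b) :: l ∈ chessboard col T S ↔ (i ∈ T ∧ b ∈ S (col i)) ∧ l ∈ chessboard col T S ∧
      ∀ v ∈ l, (v.1 = i ∨ col v.1 = col i ∧ v.2 = b) → v = (i, b) := by
  simp only [chessboard, Set.mem_ofPred_eq, List.forall_mem_cons, true_or, forall_const, true_and]
  constructor
  · rintro ⟨⟨hib, hl⟩, -, h⟩
    exact ⟨hib, ⟨hl, fun v hv => (h v hv).2⟩, fun v hv => (h v hv).1⟩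
  · rintro ⟨hib, ⟨hl, hll⟩, h⟩
    exact ⟨⟨hib, hl⟩, fun w hw hiw => (h w hw (hiw.imp Eq.symm (.imp Eq.symm Eq.symm))).symm,
      fun v hv => ⟨h v hv, hll v hv⟩⟩

variable [DecidableEq C]

theorem exists_cons_mem_chessboard (hl : l ∈ chessboard col T S) {c : C} (hb : b ∈ S c)
    (hc : (S c).card ≤ {i ∈ T | col i = c}.card) :
    ∃ i ∈ {i ∈ T | col i = c}, (i, b) :: l ∈ chessboard col T S := by
  classical
  by_cases column_occupied : ∃ i, col i = c ∧ (i, b) ∈ l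
  · obtain ⟨i, hi, hil⟩ := column_occupied
    exact ⟨i, Finset.mem_filter.2 ⟨(hl.1 _ hil).1, hi⟩,
      mem_chessboard_of_subset (List.cons_subset.2 ⟨hil, List.Subset.refl l⟩) hl⟩
  · push Not at column_occupied
    obtain ⟨i, hi, row_free⟩ : ∃ i ∈ {i ∈ T | col i = c}, ∀ b', (i, b') ∉ l := by
      by_contra! hcon
      have : Nonempty G := ⟨b⟩
      choose! g hg using hcon
      have mapsTo : Set.MapsTo g ({i ∈ T | col i = c} : Finset I) ((S c).erase b : Finset G) := by
        intro i hi
        have hic := (Finset.mem_filter.1 hi).2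
        exact Finset.mem_erase.2 ⟨fun h => column_occupied i hic (h ▸ hg i hi),
          hic ▸ (hl.1 _ (hg i hi)).2⟩
      have injOn : Set.InjOn g ({i ∈ T | col i = c} : Finset I) := fun i hi j hj hij =>
        congrArg Prod.fst (hl.2 _ (hg i hi) _ (hg j hj) (.inr
          ⟨(Finset.mem_filter.1 hi).2.trans (Finset.mem_filter.1 hj).2.symm, hij⟩))
      have := Finset.card_le_card_of_injOn g mapsTo injOn
      have := Finset.card_erase_lt_of_mem hb
      omega
    have hi' := Finset.mem_filter.1 hi
    refine ⟨i, hi, cons_mem_chessboard.2 ⟨⟨hi'.1, hi'.2 ▸ hb⟩, hl, ?_⟩⟩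
    rintro ⟨j, b'⟩ hv (rfl | ⟨hj, rfl⟩)
    · exact absurd hv (row_free b')
    · exact absurd hv (column_occupied j (hj.trans hi'.2))

theorem chessboard_eq_biUnion {c : C} {b : G} (hb : b ∈ S c)
    (hc : (S c).card ≤ {i ∈ T | col i = c}.card) :
    chessboard col T S =
      ⋃ i ∈ ({i ∈ T | col i = c} : Finset I), {l | (i, b) :: l ∈ chessboard col T S} := by
  ext l
  simp only [Set.mem_iUnion₂, Set.mem_ofPred_eq, exists_prop]
  exact ⟨fun hl => exists_cons_mem_chessboard hl hb hc, fun ⟨i, _, hl⟩ =>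
    mem_chessboard_of_subset (List.subset_cons_self _ l) hl⟩

section SubBoards

variable [DecidableEq I] [DecidableEq G]

/-- Rooks in at least two rows of the column `b` of color `c` exclude every further rook from these
rows and from that column. -/
theorem forall_cons_mem_chessboard_iff {c : C} (hb : b ∈ S c) {P : Finset I}
    (hP : P ⊆ {i ∈ T | col i = c}) (hcard : 2 ≤ P.card) :
    (∀ i ∈ P, (i, b) :: l ∈ chessboard col T S) ↔
      l ∈ chessboard col (T \ P) (Function.update S c ((S c).erase b)) := by
  have hP' (i) (hi : i ∈ P) : i ∈ T ∧ col i = c := Finset.mem_filter.1 (hP hi)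
  have update_apply (c' : C) :
      Function.update S c ((S c).erase b) c' = (S c').filter fun b' => ¬(c' = c ∧ b' = b) := by
    rcases eq_or_ne c' c with rfl | h
    · ext; simp [and_comm]
    · simp [h]
  obtain ⟨j₁, hj₁, j₂, hj₂, hj⟩ := Finset.one_lt_card.1 hcard
  have two_rows (i : I) : ∃ j ∈ P, j ≠ i := by
    by_cases h : j₁ = i
    · exact ⟨j₂, hj₂, fun h' => hj (h.trans h'.symm)⟩
    · exact ⟨j₁, hj₁, h⟩
  simp only [cons_mem_chessboard]
  constructor
  · intro h
    have column_free (v) (hv : v ∈ l) : ¬(col v.1 = c ∧ v.2 = b) := by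
      rintro ⟨hvc, hvb⟩
      obtain ⟨j, hjP, hne⟩ := two_rows v.1
      have eq_rook := (h j hjP).2.2 v hv (.inr ⟨hvc.trans (hP' j hjP).2.symm, hvb⟩)
      exact hne (by rw [eq_rook])
    refine ⟨fun v hv => ?_, (h j₁ hj₁).2.1.2⟩
    obtain ⟨hvT, hvS⟩ := (h j₁ hj₁).2.1.1 v hv
    rw [update_apply, Finset.mem_filter, Finset.mem_sdiff]
    refine ⟨⟨hvT, fun hvP => column_free v hv ⟨(hP' _ hvP).2, ?_⟩⟩, hvS, column_free v hv⟩
    rw [(h _ hvP).2.2 v hv (.inl rfl)]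
  · intro h i hi
    simp only [chessboard, Set.mem_ofPred_eq, update_apply, Finset.mem_filter,
      Finset.mem_sdiff] at h ⊢
    refine ⟨⟨(hP' i hi).1, (hP' i hi).2 ▸ hb⟩, ⟨fun v hv => ⟨(h.1 v hv).1.1, (h.1 v hv).2.1⟩, h.2⟩,
      ?_⟩
    rintro v hv (rfl | ⟨hvc, hvb⟩)
    · exact absurd hi (h.1 v hv).1.2
    · exact absurd ⟨hvc.trans (hP' i hi).2, hvb⟩ (h.1 v hv).2.2

theorem card_filter_sdiff_add {c : C} {P : Finset I} (hP : P ⊆ {i ∈ T | col i = c}) :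
    {i ∈ T \ P | col i = c}.card + P.card = {i ∈ T | col i = c}.card := by
  rw [← Finset.card_sdiff_add_card_eq_card hP]
  congr 2
  ext i
  simp only [Finset.mem_filter, Finset.mem_sdiff]
  tauto

theorem filter_sdiff_of_ne {c c' : C} (h : c' ≠ c) {P : Finset I}
    (hP : P ⊆ {i ∈ T | col i = c}) : {i ∈ T \ P | col i = c'} = {i ∈ T | col i = c'} := by
  ext i
  simp only [Finset.mem_filter, Finset.mem_sdiff, and_congr_left_iff, and_iff_left_iff_imp]
  rintro rfl - hi
  exact h (Finset.mem_filter.1 (hP hi)).2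

end SubBoards

variable [Ring R] [Fintype C]

/-- The connectivity of chessboard complexes: cover the complex by the stars of the rooks in one
column and apply the nerve lemma. -/
theorem acyclicAt_chessboard (n : C → ℕ) (hn : ∀ c, n c ≤ (S c).card)
    (hS : ∀ c, n c ≠ 0 → (S c).card + n c ≤ {i ∈ T | col i = c}.card + 1) {m : ℕ}
    (hm : m < ∑ c, n c) : AcyclicAt R (chessboard col T S) m := by
  classical
  induction m using Nat.strong_induction_on generalizing T S n with | _ m ih
  obtain ⟨c, -, hc⟩ : ∃ c ∈ Finset.univ, n c ≠ 0 := Finset.exists_ne_zero_of_sum_ne_zero (by omega)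
  obtain ⟨b, hb⟩ : (S c).Nonempty := Finset.card_pos.1 (by have := hn c; omega)
  have hSc := hS c hc
  have hnc := hn c
  have nil_mem : [] ∈ chessboard col T S := ⟨by simp, by simp⟩
  rw [chessboard_eq_biUnion hb (by omega)]
  refine acyclicAt_biUnion (Finset.card_pos.1 (by omega))
    (fun i l l' h => mem_chessboard_of_subset (List.cons_subset_cons _ h.subset))
    (fun i hi => ?_) fun P hP hPn m' hm' => ?_
  · obtain ⟨hiT, rfl⟩ := Finset.mem_filter.1 hi
    exact cons_mem_chessboard.2 ⟨⟨hiT, hb⟩, nil_mem, by simp⟩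
  rcases (Nat.succ_le_of_lt hPn.card_pos).eq_or_lt with one | two
  · obtain ⟨i, rfl⟩ := Finset.card_eq_one.1 one.symm
    refine acyclicAt_of_cons_mem (i, b) fun l hl => ?_
    simp only [Finset.mem_singleton, Set.iInter_iInter_eq_left, Set.mem_ofPred_eq] at hl ⊢
    exact mem_chessboard_of_subset (by simp) hl
  have inter_eq : ⋂ i ∈ P, {l | (i, b) :: l ∈ chessboard col T S} =
      chessboard col (T \ P) (Function.update S c ((S c).erase b)) := by
    ext l
    simpa using forall_cons_mem_chessboard_iff hb hP two
  have card_erase := Finset.card_erase_add_one hb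
  have card_rows := card_filter_sdiff_add hP
  rw [inter_eq]
  refine ih m' (by omega) (Function.update n c (n c + 1 - P.card)) (fun c' => ?_)
    (fun c' hc' => ?_) ?_
  · rcases eq_or_ne c' c with rfl | h
    · simp only [Function.update_self]
      omega
    · simpa only [Function.update_of_ne h] using hn c'
  · rcases eq_or_ne c' c with rfl | h
    · simp only [Function.update_self] at hc' ⊢
      omega
    · rw [Function.update_of_ne h] at hc'
      simpa only [Function.update_of_ne h, filter_sdiff_of_ne h hP] using hS c' hc'
  · have := Finset.add_sum_erase Finset.univ n (Finset.mem_univ c)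
    rw [Finset.sum_update_of_mem (Finset.mem_univ c), Finset.sdiff_singleton_eq_erase]
    omega

end Chessboard

section Frobenius

variable {R : Type*} [Ring R] {p : ℕ}

theorem sum_pow_of_commute (hp : p.Prime) (hR : (p : R) = 0) {ι : Type*} (s : Finset ι) (f : ι → R)
    (hf : ∀ i j, Commute (f i) (f j)) : (∑ i ∈ s, f i) ^ p = ∑ i ∈ s, f i ^ p := by
  classical
  induction s using Finset.induction_on with
  | empty => simp [hp.ne_zero]
  | insert i s hi ih =>
    obtain ⟨r, hr⟩ := Commute.exists_add_pow_prime_eq hp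
      (Commute.sum_right s f (f i) fun j _ => hf i j)
    rw [Finset.sum_insert hi, Finset.sum_insert hi, hr, ih, hR]
    simp

theorem sub_pow_of_commute (hp : p.Prime) (hR : (p : R) = 0) {x y : R} (h : Commute x y) :
    (x - y) ^ p = x ^ p - y ^ p := by
  obtain ⟨r, hr⟩ := Commute.exists_add_pow_prime_eq hp (h.sub_left (Commute.refl y))
  rw [sub_add_cancel, hR] at hr
  rw [hr]
  simp

end Frobenius

section Translation

variable {K G B ι : Type*} [Field K]

/-- The operator multiplying the basis vector at `b` by `w b`. -/
noncomputable def diagonal (w : B → K) : Module.End K (B →₀ K) :=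
  linearCombination K fun b => single b (w b)

theorem diagonal_single (w : B → K) (b : B) (x : K) :
    diagonal w (single b x) = single b (x * w b) := by
  simp [diagonal]

theorem diagonal_mul_diagonal (w w' : B → K) : diagonal w * diagonal w' = diagonal (w * w') := by
  refine lhom_ext fun b x => ?_
  simp only [Module.End.mul_apply, diagonal_single, Pi.mul_apply, mul_assoc, mul_comm (w b)]

theorem diagonal_commute (w w' : B → K) : Commute (diagonal w) (diagonal w') := by
  rw [commute_iff_eq, diagonal_mul_diagonal, diagonal_mul_diagonal, mul_comm]

theorem diagonal_const (c : K) : diagonal (fun _ : B => c) = c • 1 := by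
  refine lhom_ext fun b x => ?_
  simp [diagonal_single, mul_comm]

theorem sum_diagonal (s : Finset ι) (w : ι → B → K) :
    ∑ i ∈ s, diagonal (w i) = diagonal (∑ i ∈ s, w i) := by
  refine lhom_ext fun b x => ?_
  simp [diagonal_single, Finset.mul_sum, single_finsetSum]

section AddMonoid

variable [AddMonoid G] [AddAction G B]

/-- The permutation representation of `G` on the free module over `B`. -/
noncomputable def translation (K : Type*) [Field K] (g : G) : Module.End K (B →₀ K) :=
  lmapDomain K K (g +ᵥ ·)

theorem translation_single (g : G) (b : B) (x : K) :
    translation K g (single b x) = single (g +ᵥ b) x := by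
  simp [translation]

theorem translation_zero : translation K (0 : G) = (1 : Module.End K (B →₀ K)) := by
  refine lhom_ext fun b x => ?_
  simp [translation_single]

theorem translation_add (g h : G) :
    (translation K (g + h) : Module.End K (B →₀ K)) = translation K g * translation K h := by
  refine lhom_ext fun b x => ?_
  simp [translation_single, add_vadd]

theorem translation_nsmul (n : ℕ) (g : G) :
    (translation K (n • g) : Module.End K (B →₀ K)) = translation K g ^ n := by
  induction n with
  | zero => simp [translation_zero]
  | succ n ih => rw [pow_succ, ← ih, succ_nsmul, translation_add]

theorem diagonal_mul_translation_sub (w : B → K) (g : G) :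
    diagonal w * translation K g - translation K g * diagonal w =
      translation K g * diagonal fun b => w (g +ᵥ b) - w b := by
  refine lhom_ext fun b x => ?_
  simp only [LinearMap.sub_apply, Module.End.mul_apply, diagonal_single, translation_single,
    mul_sub, ← single_sub]

theorem diagonal_commute_translation {w : B → K} {g : G} (hw : ∀ b, w (g +ᵥ b) = w b) :
    Commute (diagonal w) (translation K g) := by
  refine sub_eq_zero.1 ((diagonal_mul_translation_sub w g).trans ?_)
  simp [hw, diagonal_const]

theorem commute_translation_sub_one {f : Module.End K (B →₀ K)} {g : G}
    (h : Commute f (translation K g)) : Commute f (translation K g - 1) := by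
  exact Commute.sub_right (R := Module.End K (B →₀ K)) h (Commute.one_right f)

/-- The operator `∑ i, w i * (T (g i) - 1)`, where `T` denotes translation. -/
noncomputable def differenceOperator [Fintype ι] (g : ι → G) (w : ι → B → K) :
    Module.End K (B →₀ K) :=
  ∑ i, diagonal (w i) * (translation K (g i) - 1)

theorem commute_differenceOperator [Fintype ι] {g : ι → G} {w : ι → B → K}
    {f : Module.End K (B →₀ K)} (hw : ∀ i, Commute f (diagonal (w i)))
    (hg : ∀ i, Commute f (translation K (g i))) : Commute f (differenceOperator g w) :=
  Commute.sum_right _ _ _ fun i _ => (hw i).mul_right (commute_translation_sub_one (hg i))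

end AddMonoid

variable {p : ℕ} [AddCommMonoid G] [AddAction G B] [Fintype ι]

theorem translation_commute (g h : G) :
    Commute (translation K g : Module.End K (B →₀ K)) (translation K h) := by
  rw [commute_iff_eq, ← translation_add, ← translation_add, add_comm]

theorem differenceOperator_pow_eq_zero (hp : p.Prime) (hK : (p : K) = 0) {g : ι → G}
    (hg : ∀ i, p • g i = 0) {w : ι → B → K} (hw : ∀ i (h : G) b, w i (h +ᵥ b) = w i b) :
    differenceOperator g w ^ p = 0 := by
  have hEnd : (p : Module.End K (B →₀ K)) = 0 := by
    simpa [hK] using (map_natCast (algebraMap K (Module.End K (B →₀ K))) p).symm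
  have diag_comm (i j) : Commute (diagonal (w i)) (translation K (g j) - 1) :=
    commute_translation_sub_one (diagonal_commute_translation (hw i (g j)))
  have trans_comm (i j) : Commute (translation K (g i) - 1 : Module.End K (B →₀ K))
      (translation K (g j) - 1) :=
    commute_translation_sub_one (commute_translation_sub_one (translation_commute _ _)).symm
  rw [differenceOperator, sum_pow_of_commute hp hEnd]
  · refine Finset.sum_eq_zero fun i _ => ?_
    rw [(diag_comm i i).mul_pow, sub_pow_of_commute hp hEnd (Commute.one_right _),
      ← translation_nsmul, hg, translation_zero, one_pow, sub_self, mul_zero]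
  · exact fun i j => ((diagonal_commute _ _).mul_right (diag_comm i j)).mul_left
      ((diag_comm j i).symm.mul_right (trans_comm i j))

end Translation

section MovedPoints

variable {K G B : Type*} [Field K]

/-- The coordinate projection onto the span of the points moved by the action. -/
noncomputable def movedProjection (K G B : Type*) [Field K] [AddMonoid G] [AddAction G B] :
    Module.End K (B →₀ K) :=
  diagonal ((AddAction.fixedPoints G B)ᶜ.indicator 1)

theorem indicator_fixedPoints_compl_vadd [AddCommGroup G] [AddAction G B] (g : G) (b : B) :
    (AddAction.fixedPoints G B)ᶜ.indicator (1 : B → K) (g +ᵥ b) =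
      (AddAction.fixedPoints G B)ᶜ.indicator 1 b := by
  have fixed_iff : g +ᵥ b ∈ AddAction.fixedPoints G B ↔ b ∈ AddAction.fixedPoints G B :=
    forall_congr' fun h => by rw [vadd_comm, (AddAction.injective g).eq_iff]
  classical simp only [Set.indicator_apply, Set.mem_compl_iff, fixed_iff, Pi.one_apply]

/-- On every nontrivial orbit of an elementary abelian group there is a nonconstant affine
coordinate `ξ`, with linear part `lin`. -/
theorem exists_orbit_coordinate (p : ℕ) [Fact p.Prime] [AddCommGroup G] [Module (ZMod p) G]
    [AddAction G B] :
    ∃ (lin : B → Module.Dual (ZMod p) G) (ξ : B → ZMod p),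
      (∀ (g : G) b, lin (g +ᵥ b) = lin b) ∧ (∀ (g : G) b, ξ (g +ᵥ b) = ξ b + lin b g) ∧
      ∀ b, lin b = 0 ↔ b ∈ AddAction.fixedPoints G B := by
  have exists_dual (b : B) : ∃ f : Module.Dual (ZMod p) G,
      (∀ g : G, g +ᵥ b = b → f g = 0) ∧ (f = 0 → b ∈ AddAction.fixedPoints G B) := by
    by_cases hb : AddSubgroup.toZModSubmodule p (AddAction.stabilizer G b) = ⊤
    · exact ⟨0, fun _ _ => rfl, fun _ g => hb.ge (Submodule.mem_top (x := g))⟩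
    · obtain ⟨f, hf, hker⟩ := Submodule.exists_le_ker_of_lt_top _ (lt_top_iff_ne_top.2 hb)
      exact ⟨f, fun g hg => hker hg, fun h => absurd h hf⟩
  choose f f_stab f_zero using exists_dual
  let rep (b : B) : B := Quotient.out (Quotient.mk (AddAction.orbitRel G B) b)
  have rep_vadd (g : G) (b : B) : rep (g +ᵥ b) = rep b :=
    congrArg Quotient.out (@Quotient.sound _ (AddAction.orbitRel G B) _ _ ⟨g, rfl⟩)
  have exists_vadd_rep (b : B) : ∃ s : G, s +ᵥ rep b = b :=
    AddAction.mem_orbit_iff.1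
      ((AddAction.orbitRel G B).symm (Quotient.mk_out (s := AddAction.orbitRel G B) b))
  choose s hs using exists_vadd_rep
  refine ⟨fun b => f (rep b), fun b => f (rep b) (s b), fun g b => by simp only [rep_vadd],
    fun g b => ?_, fun b => ⟨fun h g => ?_, fun h => ?_⟩⟩
  · have stab : (s (g +ᵥ b) - (s b + g)) +ᵥ rep b = rep b := by
      have vadd_rep : s (g +ᵥ b) +ᵥ rep b = (s b + g) +ᵥ rep b := by
        rw [add_comm, add_vadd, hs, ← rep_vadd g, hs]
      rw [sub_eq_neg_add, add_vadd, vadd_rep, neg_vadd_vadd]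
    simp only [rep_vadd]
    rw [← map_add, ← sub_eq_zero, ← map_sub]
    exact f_stab _ _ stab
  · have rep_fixed := f_zero _ h
    rw [← hs b, rep_fixed (s b), rep_fixed g]
  · ext g
    refine f_stab _ _ ?_
    have rep_eq : rep b = b := by rw [← vadd_left_cancel_iff (s b), hs, h]
    rw [rep_eq, h g]

end MovedPoints

section WeylAlgebra

variable {p : ℕ} [Fact p.Prime] {K B ι : Type*} [Field K] [Algebra (ZMod p) K] [AddAction K B]
  [Fintype ι]

theorem sum_commutator {R : Type*} [Ring R] {x : R} {f g h : ι → R}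
    (hf : ∀ i, x * f i - f i * x = g i + h i) :
    x * ∑ i, f i - (∑ i, f i) * x = ∑ i, g i + ∑ i, h i := by
  rw [Finset.mul_sum, Finset.sum_mul, ← Finset.sum_sub_distrib, ← Finset.sum_add_distrib]
  exact Finset.sum_congr rfl fun i _ => hf i

theorem commutator_mul_sub_one {R : Type*} [Ring R] {x c t v : R} (hc : Commute x c)
    (ht : x * t - t * x = v * t) : x * (c * (t - 1)) - c * (t - 1) * x = c * v + c * v * (t - 1) :=
  calc x * (c * (t - 1)) - c * (t - 1) * x = c * (x * t - t * x) := by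
        rw [← mul_assoc, hc.eq]
        noncomm_ring
    _ = c * v + c * v * (t - 1) := by
        rw [ht]
        noncomm_ring

theorem natCast_prime_eq_zero (p : ℕ) (K : Type*) [Ring K] [Algebra (ZMod p) K] : (p : K) = 0 := by
  simpa using (map_natCast (algebraMap (ZMod p) K) p).symm

/-- The nilpotent operator `∑ i, b i • (T (b i) - 1)` on a permutation representation of `K`. -/
noncomputable def weightedDifference (b : ι → K) : Module.End K (B →₀ K) :=
  differenceOperator b fun i _ => b i

theorem weightedDifference_pow_eq_zero (b : ι → K) :
    (weightedDifference b : Module.End K (B →₀ K)) ^ p = 0 :=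
  differenceOperator_pow_eq_zero Fact.out (natCast_prime_eq_zero p K)
    (fun i => by rw [nsmul_eq_mul, natCast_prime_eq_zero, zero_mul]) fun _ _ _ => rfl

theorem commute_weightedDifference {b : ι → K} {f : Module.End K (B →₀ K)}
    (hf : ∀ i, Commute f (translation K (b i))) : Commute f (weightedDifference b) :=
  commute_differenceOperator
    (fun i => by rw [diagonal_const]; exact (Commute.one_right f).smul_right (b i)) hf

theorem diagonal_commutator_weightedDifference {b : ι → K} {u : B → K} {v : ι → B → K}
    (hu : ∀ i x, u (b i +ᵥ x) = u x + v i x) (hv : ∀ i x, v i (b i +ᵥ x) = v i x) :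
    diagonal u * weightedDifference b - weightedDifference b * diagonal u =
      diagonal (∑ i, b i • v i) + differenceOperator b fun i => b i • v i := by
  rw [← sum_diagonal]
  refine sum_commutator (R := Module.End K (B →₀ K)) fun i => ?_
  have commutator : diagonal u * translation K (b i) - translation K (b i) * diagonal u =
      diagonal (v i) * translation K (b i) := by
    rw [diagonal_mul_translation_sub, (diagonal_commute_translation (hv i)).eq]
    simp only [hu, add_sub_cancel_left]
  have product : diagonal (b i • v i) = diagonal (fun _ => b i) * diagonal (v i) :=
    (diagonal_mul_diagonal _ _).symm
  rw [product]
  exact commutator_mul_sub_one (R := Module.End K (B →₀ K)) (diagonal_commute u _) commutator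

/-- A unipotent correction of `X` turns its commutator with `t` into the projection `P`. -/
theorem exists_commutator_eq_of_isNilpotent {R : Type*} [Ring R] {X t P ν : R}
    (h : X * t - t * X = P + ν) (hν : IsNilpotent ν) (hνt : Commute ν t) (hPν : P * ν = ν) :
    ∃ ρ : R, (∀ z, Commute ν z → Commute ρ z) ∧ X * ρ * t - t * (X * ρ) = P := by
  obtain ⟨u, hu⟩ := hν.isUnit_one_add
  have inv_commute (z) (hz : Commute ν z) : Commute (↑u⁻¹ : R) z :=
    Commute.units_inv_left (hu ▸ (Commute.one_left z).add_left hz)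
  refine ⟨↑u⁻¹, inv_commute, ?_⟩
  calc X * ↑u⁻¹ * t - t * (X * ↑u⁻¹) = (X * t - t * X) * ↑u⁻¹ := by
        rw [mul_assoc, (inv_commute t hνt).eq, sub_mul, mul_assoc, mul_assoc]
    _ = P * ↑u * ↑u⁻¹ := by rw [h, hu, mul_add, mul_one, hPν]
    _ = P := Units.mul_inv_cancel_right P u

/-- The linear form `lin x` as an element of `K`, by the dual basis of `b`. -/
noncomputable def orbitWeight (b : ι → K) (lin : B → Module.Dual (ZMod p) K) (x : B) : K :=
  ∑ i, lin x (b i) • b i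

omit [AddAction K B] in
theorem orbitWeight_eq_zero (b : Module.Basis ι (ZMod p) K) (lin : B → Module.Dual (ZMod p) K)
    (x : B) : orbitWeight b lin x = 0 ↔ lin x = 0 := by
  refine ⟨fun h => b.ext ?_, fun h => by simp [orbitWeight, h]⟩
  simpa using Fintype.linearIndependent_iff.1 b.linearIndependent _ h

theorem exists_weyl_weights (b : Module.Basis ι (ZMod p) K) :
    ∃ (u : B → K) (v : ι → B → K), (∀ i x, u (b i +ᵥ x) = u x + v i x) ∧
      (∀ i (g : K) x, v i (g +ᵥ x) = v i x) ∧
      ∑ i, b i • v i = (AddAction.fixedPoints K B)ᶜ.indicator 1 ∧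
      (AddAction.fixedPoints K B)ᶜ.indicator 1 * u = u ∧
      ∀ i, (AddAction.fixedPoints K B)ᶜ.indicator 1 * v i = v i := by
  obtain ⟨lin, ξ, lin_vadd, ξ_vadd, lin_eq_zero⟩ := exists_orbit_coordinate (G := K) (B := B) p
  let κ := orbitWeight b lin
  have κ_vadd (g : K) (x : B) : κ (g +ᵥ x) = κ x := by simp only [κ, orbitWeight, lin_vadd]
  have moved_eq (x : B) :
      (AddAction.fixedPoints K B)ᶜ.indicator (1 : B → K) x = (κ x)⁻¹ * κ x := by
    by_cases hx : x ∈ AddAction.fixedPoints K B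
    · simp [hx, κ, (orbitWeight_eq_zero b lin x).2 ((lin_eq_zero x).2 hx)]
    · rw [inv_mul_cancel₀ (mt (orbitWeight_eq_zero b lin x).1 (mt (lin_eq_zero x).1 hx))]
      simp [hx]
  have absorb (y : B → K) : (AddAction.fixedPoints K B)ᶜ.indicator 1 * (fun x => (κ x)⁻¹ * y x) =
      fun x => (κ x)⁻¹ * y x := by
    ext x
    rw [Pi.mul_apply, moved_eq, ← mul_assoc]
    congr 1
    simpa using mul_inv_mul_cancel (κ x)⁻¹
  refine ⟨fun x => (κ x)⁻¹ * algebraMap (ZMod p) K (ξ x),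
    fun i x => (κ x)⁻¹ * algebraMap (ZMod p) K (lin x (b i)),
    fun i x => by simp only [κ_vadd, ξ_vadd, map_add, mul_add],
    fun i g x => by simp only [κ_vadd, lin_vadd], ?_, absorb _, fun i => absorb _⟩
  ext x
  rw [moved_eq, Finset.sum_apply, show κ x = ∑ i, lin x (b i) • b i from rfl, Finset.mul_sum]
  refine Finset.sum_congr rfl fun i _ => ?_
  simp only [Pi.smul_apply, smul_eq_mul, Algebra.smul_def, κ, orbitWeight]
  ring

/-- On the moved points the weighted difference operator generates, with a suitable partner, a Weyl
algebra. -/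
theorem exists_commutator_weightedDifference_eq_movedProjection (b : Module.Basis ι (ZMod p) K) :
    ∃ Y : Module.End K (B →₀ K),
      Y * weightedDifference b - weightedDifference b * Y = movedProjection K K B ∧
      (∀ w : B → K, (∀ (g : K) x, w (g +ᵥ x) = w x) → Commute Y (diagonal w)) ∧
      Y * movedProjection K K B = Y := by
  obtain ⟨u, v, u_vadd, v_vadd, sum_v, moved_mul_u, moved_mul_v⟩ := exists_weyl_weights (B := B) b
  have commutator := diagonal_commutator_weightedDifference u_vadd fun i => v_vadd i (b i)
  have bv_vadd (i) (g : K) (x : B) : (b i • v i) (g +ᵥ x) = (b i • v i) x := by simp [v_vadd]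
  have commute_translation (g : K) :
      Commute (differenceOperator b fun i => b i • v i) (translation K g) :=
    (commute_differenceOperator (fun i => (diagonal_commute_translation (bv_vadd i g)).symm)
      fun i => translation_commute _ _).symm
  obtain ⟨ρ, ρ_commute, hρ⟩ := exists_commutator_eq_of_isNilpotent
    (R := Module.End K (B →₀ K)) (sum_v ▸ commutator)
    ⟨p, differenceOperator_pow_eq_zero Fact.out (natCast_prime_eq_zero p K)
      (fun i => by rw [nsmul_eq_mul, natCast_prime_eq_zero, zero_mul]) bv_vadd⟩
    (commute_weightedDifference fun i => commute_translation (b i)) (by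
      simp only [differenceOperator, Finset.mul_sum, ← mul_assoc, diagonal_mul_diagonal,
        mul_smul_comm, moved_mul_v])
  have commute_diagonal (w : B → K) (hw : ∀ (g : K) x, w (g +ᵥ x) = w x) :
      Commute ρ (diagonal w) :=
    ρ_commute _ (commute_differenceOperator (fun i => diagonal_commute _ _)
      fun i => diagonal_commute_translation (hw (b i))).symm
  refine ⟨diagonal u * ρ, hρ, fun w hw => (diagonal_commute u w).mul_left (commute_diagonal w hw),
    ?_⟩
  rw [movedProjection, mul_assoc, (commute_diagonal _ indicator_fixedPoints_compl_vadd).eq,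
    ← mul_assoc, diagonal_mul_diagonal, mul_comm u, moved_mul_u]

end WeylAlgebra

section Intertwiner

variable {p : ℕ} {K M N N' : Type*} [Field K] [AddCommGroup M] [Module K M] [AddCommGroup N]
  [Module K N] [AddCommGroup N'] [Module K N']

/-- The operator `ψ ↦ t₂ ∘ ψ - ψ ∘ t₁`, which vanishes on the maps intertwining `t₁` and `t₂`. -/
noncomputable def intertwiningDefect (t₁ : Module.End K M) (t₂ : Module.End K N) :
    Module.End K (M →ₗ[K] N) :=
  LinearMap.compRight K t₂ - LinearMap.lcomp K N t₁

variable {t₁ Y P : Module.End K M} {t₂ : Module.End K N} {t₃ : Module.End K N'}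

theorem intertwiningDefect_apply (ψ : M →ₗ[K] N) :
    intertwiningDefect t₁ t₂ ψ = t₂ ∘ₗ ψ - ψ ∘ₗ t₁ := rfl

theorem intertwiningDefect_pow_eq_zero (hp : p.Prime) (hK : (p : K) = 0) (h₁ : t₁ ^ p = 0)
    (h₂ : t₂ ^ p = 0) (ψ : M →ₗ[K] N) : (intertwiningDefect t₁ t₂ ^ p) ψ = 0 := by
  have compRight_pow (n : ℕ) (ψ : M →ₗ[K] N) :
      ((LinearMap.compRight K t₂ : Module.End K (M →ₗ[K] N)) ^ n) ψ = (t₂ ^ n) ∘ₗ ψ := by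
    induction n with
    | zero => rfl
    | succ n ih => rw [pow_succ', Module.End.mul_apply, ih, pow_succ']; rfl
  have lcomp_pow (n : ℕ) (ψ : M →ₗ[K] N) :
      ((LinearMap.lcomp K N t₁ : Module.End K (M →ₗ[K] N)) ^ n) ψ = ψ ∘ₗ (t₁ ^ n) := by
    induction n with
    | zero => rfl
    | succ n ih => rw [pow_succ', Module.End.mul_apply, ih, pow_succ]; rfl
  have hEnd : (p : Module.End K (M →ₗ[K] N)) = 0 := by
    simpa [hK] using (map_natCast (algebraMap K (Module.End K (M →ₗ[K] N))) p).symm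
  have commute : Commute (LinearMap.compRight K t₂ : Module.End K (M →ₗ[K] N))
      (LinearMap.lcomp K N t₁) := LinearMap.ext fun ψ => rfl
  refine (LinearMap.congr_fun (sub_pow_of_commute hp hEnd commute) ψ).trans ?_
  rw [LinearMap.sub_apply, compRight_pow, lcomp_pow, h₁, h₂, LinearMap.zero_comp,
    LinearMap.comp_zero, sub_zero]

theorem pow_succ_mul_sub {R : Type*} [Ring R] {t Y P : R} (hY : Y * t - t * Y = P)
    (hYP : Y * P = Y) (hPY : P * Y = Y) (j : ℕ) :
    Y ^ (j + 1) * t - t * Y ^ (j + 1) = (j + 1) • (Y ^ j * P) := by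
  induction j with
  | zero => simp [hY]
  | succ j ih =>
    have pow_mul_P : Y ^ (j + 1) * P = Y ^ (j + 1) := by rw [pow_succ, mul_assoc, hYP]
    calc Y ^ (j + 1 + 1) * t - t * Y ^ (j + 1 + 1)
        = (Y ^ (j + 1) * t - t * Y ^ (j + 1)) * Y + Y ^ (j + 1) * (Y * t - t * Y) := by
          rw [pow_succ Y (j + 1)]; noncomm_ring
      _ = (j + 1 + 1) • (Y ^ (j + 1) * P) := by
          rw [ih, hY, smul_mul_assoc, mul_assoc, hPY, ← pow_succ, pow_mul_P, ← succ_nsmul]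

/-- The truncated exponential series that corrects `ψ` to an intertwiner of `t₁` and `t₂`, given a
partner `Y` of `t₁`. -/
noncomputable def intertwiner (p : ℕ) (t₁ : Module.End K M) (t₂ : Module.End K N)
    (Y : Module.End K M) (ψ : M →ₗ[K] N) : M →ₗ[K] N :=
  ∑ j ∈ Finset.range p, ((j.factorial : K)⁻¹) • ((intertwiningDefect t₁ t₂ ^ j) ψ ∘ₗ Y ^ j)

theorem intertwiningDefect_comp_pow (hY : Y * t₁ - t₁ * Y = P) (hYP : Y * P = Y) (hPY : P * Y = Y)
    (χ : M →ₗ[K] N) (j : ℕ) :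
    intertwiningDefect t₁ t₂ (χ ∘ₗ Y ^ (j + 1)) =
      intertwiningDefect t₁ t₂ χ ∘ₗ Y ^ (j + 1) - (j + 1) • (χ ∘ₗ (Y ^ j * P)) := by
  ext x
  have commutator := congrArg χ (LinearMap.congr_fun (pow_succ_mul_sub hY hYP hPY j) x)
  simp only [LinearMap.sub_apply, Module.End.mul_apply, LinearMap.smul_apply, map_sub,
    map_nsmul] at commutator
  simp [intertwiningDefect_apply, ← commutator]

theorem intertwiningDefect_sum_range_succ (hK : ∀ j, 0 < j → j < p → (j : K) ≠ 0)
    (hY : Y * t₁ - t₁ * Y = P) (hYP : Y * P = Y) (hPY : P * Y = Y) {ψ : M →ₗ[K] N}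
    (hψ : intertwiningDefect t₁ t₂ ψ ∘ₗ P = intertwiningDefect t₁ t₂ ψ) {n : ℕ} (hn : n < p) :
    intertwiningDefect t₁ t₂ (∑ j ∈ Finset.range (n + 1),
        ((j.factorial : K)⁻¹) • ((intertwiningDefect t₁ t₂ ^ j) ψ ∘ₗ Y ^ j)) =
      ((n.factorial : K)⁻¹) • ((intertwiningDefect t₁ t₂ ^ (n + 1)) ψ ∘ₗ Y ^ n) := by
  induction n with
  | zero => simp [Module.End.one_eq_id]
  | succ n ih =>
    have absorb : (intertwiningDefect t₁ t₂ ^ (n + 1)) ψ ∘ₗ (Y ^ n * P) =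
        (intertwiningDefect t₁ t₂ ^ (n + 1)) ψ ∘ₗ Y ^ n := by
      cases n with
      | zero => rw [zero_add, pow_one, pow_zero, one_mul]; exact hψ
      | succ n => rw [pow_succ Y, mul_assoc, hYP]
    have factorial_inv : ((n + 1).factorial : K)⁻¹ * (n + 1 : ℕ) = (n.factorial : K)⁻¹ := by
      rw [Nat.factorial_succ, Nat.cast_mul, mul_inv, mul_right_comm,
        inv_mul_cancel₀ (hK _ n.succ_pos hn), one_mul]
    rw [Finset.sum_range_succ, map_add, ih (by omega), map_smul,
      intertwiningDefect_comp_pow hY hYP hPY, absorb, smul_sub, ← Nat.cast_smul_eq_nsmul K,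
      smul_smul, factorial_inv, add_sub_cancel, pow_succ' _ (n + 1), Module.End.mul_apply]

theorem intertwiner_intertwines [Fact p.Prime] [CharP K p] (h₁ : t₁ ^ p = 0) (h₂ : t₂ ^ p = 0)
    (hY : Y * t₁ - t₁ * Y = P) (hYP : Y * P = Y) (hPY : P * Y = Y) {ψ : M →ₗ[K] N}
    (hψ : intertwiningDefect t₁ t₂ ψ ∘ₗ P = intertwiningDefect t₁ t₂ ψ) :
    t₂ ∘ₗ intertwiner p t₁ t₂ Y ψ = intertwiner p t₁ t₂ Y ψ ∘ₗ t₁ := by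
  have hp : p.Prime := Fact.out
  have natCast_ne_zero (j : ℕ) (hj : 0 < j) (hjp : j < p) : (j : K) ≠ 0 := by
    rw [Ne, CharP.cast_eq_zero_iff K p]
    exact Nat.not_dvd_of_pos_of_lt hj hjp
  have telescope := intertwiningDefect_sum_range_succ natCast_ne_zero hY hYP hPY hψ
    (Nat.sub_one_lt hp.ne_zero)
  rw [Nat.sub_add_cancel hp.pos, intertwiningDefect_pow_eq_zero hp (CharP.cast_eq_zero K p) h₁ h₂,
    LinearMap.zero_comp, smul_zero] at telescope
  exact sub_eq_zero.1 telescope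

theorem intertwiningDefect_pow_comp_left {L : N →ₗ[K] N'} (hL : L ∘ₗ t₂ = t₃ ∘ₗ L) (j : ℕ)
    (ψ : M →ₗ[K] N) :
    (intertwiningDefect t₁ t₃ ^ j) (L ∘ₗ ψ) = L ∘ₗ (intertwiningDefect t₁ t₂ ^ j) ψ := by
  induction j with
  | zero => rfl
  | succ j ih =>
    rw [pow_succ', pow_succ', Module.End.mul_apply, Module.End.mul_apply, ih,
      intertwiningDefect_apply, intertwiningDefect_apply, LinearMap.comp_sub,
      ← LinearMap.comp_assoc, ← LinearMap.comp_assoc, ← LinearMap.comp_assoc, hL]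

theorem intertwiningDefect_pow_comp_right {Q : Module.End K M} (hQ : Commute Q t₁) (j : ℕ)
    (ψ : M →ₗ[K] N) :
    (intertwiningDefect t₁ t₂ ^ j) (ψ ∘ₗ Q) = (intertwiningDefect t₁ t₂ ^ j) ψ ∘ₗ Q := by
  induction j with
  | zero => rfl
  | succ j ih =>
    have hQ' : Q ∘ₗ t₁ = t₁ ∘ₗ Q := hQ
    rw [pow_succ', Module.End.mul_apply, Module.End.mul_apply, ih, intertwiningDefect_apply,
      intertwiningDefect_apply, LinearMap.sub_comp, LinearMap.comp_assoc, hQ',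
      LinearMap.comp_assoc, LinearMap.comp_assoc]

theorem intertwiner_comp_left {L : N →ₗ[K] N'} (hL : L ∘ₗ t₂ = t₃ ∘ₗ L) (ψ : M →ₗ[K] N) :
    intertwiner p t₁ t₃ Y (L ∘ₗ ψ) = L ∘ₗ intertwiner p t₁ t₂ Y ψ := by
  ext x
  simp [intertwiner, intertwiningDefect_pow_comp_left hL]

theorem intertwiner_comp_right {Q : Module.End K M} (hQ : Commute Q t₁) (hQY : Commute Q Y)
    (ψ : M →ₗ[K] N) : intertwiner p t₁ t₂ Y (ψ ∘ₗ Q) = intertwiner p t₁ t₂ Y ψ ∘ₗ Q := by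
  ext x
  have comp_pow_apply (j : ℕ) : Q ((Y ^ j) x) = (Y ^ j) (Q x) :=
    LinearMap.congr_fun (hQY.pow_right j).eq x
  simp [intertwiner, intertwiningDefect_pow_comp_right hQ, comp_pow_apply]

theorem intertwiner_apply_of_eq_zero (hp : p ≠ 0) (ψ : M →ₗ[K] N) {x : M} (hx : Y x = 0) :
    intertwiner p t₁ t₂ Y ψ x = ψ x := by
  rw [intertwiner, LinearMap.sum_apply, Finset.sum_eq_single_of_mem 0 (by simpa using hp.bot_lt)]
  · simp
  · intro j _ hj
    obtain ⟨j, rfl⟩ := Nat.exists_eq_succ_of_ne_zero hj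
    simp [pow_succ Y, hx]

theorem intertwiner_eq_self (hp : p ≠ 0) {ψ : M →ₗ[K] N} (h : t₂ ∘ₗ ψ = ψ ∘ₗ t₁) :
    intertwiner p t₁ t₂ Y ψ = ψ := by
  rw [intertwiner, Finset.sum_eq_single_of_mem 0 (by simpa using hp.bot_lt)]
  · simp [Module.End.one_eq_id]
  · intro j _ hj
    obtain ⟨j, rfl⟩ := Nat.exists_eq_succ_of_ne_zero hj
    simp [pow_succ (intertwiningDefect t₁ t₂), intertwiningDefect_apply, h]

theorem intertwiner_apply_mem {U : Submodule K N} (hU : ∀ x ∈ U, t₂ x ∈ U) {ψ : M →ₗ[K] N}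
    (hψ : ∀ x, ψ x ∈ U) (x : M) : intertwiner p t₁ t₂ Y ψ x ∈ U := by
  have pow_apply_mem (j : ℕ) (x : M) : (intertwiningDefect t₁ t₂ ^ j) ψ x ∈ U := by
    induction j generalizing x with
    | zero => exact hψ x
    | succ j ih =>
      rw [pow_succ', Module.End.mul_apply, intertwiningDefect_apply]
      exact U.sub_mem (hU _ (ih x)) (ih _)
  simp only [intertwiner, LinearMap.sum_apply, LinearMap.smul_apply, LinearMap.comp_apply]
  exact U.sum_mem fun j _ => U.smul_mem _ (pow_apply_mem j _)

theorem trace_mul_commutator_eq_zero {t Y f : Module.End K M} (hf : Commute f t) :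
    LinearMap.trace K M (f * (Y * t - t * Y)) = 0 := by
  rw [mul_sub, map_sub, ← mul_assoc, ← mul_assoc, hf.eq, LinearMap.trace_mul_comm K (f * Y) t,
    mul_assoc, sub_self]

end Intertwiner

section EquivariantLift

variable {p : ℕ} [Fact p.Prime] {K B N ι : Type*} [Field K] [Algebra (ZMod p) K] [Fintype ι]
  [AddAction K B] [AddCommGroup N] [Module K N]

theorem weightedDifference_single_of_mem_fixedPoints (b : ι → K) {x : B}
    (hx : x ∈ AddAction.fixedPoints K B) (a : K) : weightedDifference b (single x a) = 0 := by
  simp [weightedDifference, differenceOperator, LinearMap.sum_apply, translation_single, hx _]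

theorem movedProjection_single_of_mem {x : B} (hx : x ∈ AddAction.fixedPoints K B) (a : K) :
    movedProjection K K B (single x a) = 0 := by
  simp [movedProjection, diagonal_single, hx]

theorem movedProjection_single_of_notMem {x : B} (hx : x ∉ AddAction.fixedPoints K B) (a : K) :
    movedProjection K K B (single x a) = single x a := by
  simp [movedProjection, diagonal_single, hx]

theorem movedProjection_mul_eq {Y : Module.End K (B →₀ K)}
    (hY : ∀ w : B → K, (∀ (g : K) x, w (g +ᵥ x) = w x) → Commute Y (diagonal w))
    (hYP : Y * movedProjection K K B = Y) : movedProjection K K B * Y = Y :=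
  (hY _ indicator_fixedPoints_compl_vadd).symm.eq.trans hYP

theorem intertwiningDefect_comp_movedProjection {b : ι → K} {t : Module.End K N}
    {ψ : (B →₀ K) →ₗ[K] N} (hψ : ∀ x ∈ AddAction.fixedPoints K B, t (ψ (single x 1)) = 0) :
    intertwiningDefect (weightedDifference b) t ψ ∘ₗ movedProjection K K B =
      intertwiningDefect (weightedDifference b) t ψ := by
  refine lhom_ext' fun x => LinearMap.ext_ring ?_
  simp only [LinearMap.comp_apply, lsingle_apply]
  by_cases hx : x ∈ AddAction.fixedPoints K B
  · rw [movedProjection_single_of_mem hx, map_zero, intertwiningDefect_apply]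
    simp [hψ x hx, weightedDifference_single_of_mem_fixedPoints b hx]
  · rw [movedProjection_single_of_notMem hx]

theorem exists_intertwining_eqOn_fixedPoints (b : Module.Basis ι (ZMod p) K)
    {t L : Module.End K N} (ht : t ^ p = 0) (hL : Commute L t) {ψ : (B →₀ K) →ₗ[K] N}
    (hψ : ∀ x ∈ AddAction.fixedPoints K B, t (ψ (single x 1)) = 0)
    (hLψ : t ∘ₗ L ∘ₗ ψ = (L ∘ₗ ψ) ∘ₗ weightedDifference b)
    {U : Submodule K N} (hU : ∀ x ∈ U, t x ∈ U) (hψU : ∀ x, ψ x ∈ U)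
    {w : B → K} (hw : ∀ (g : K) x, w (g +ᵥ x) = w x) (hψw : ψ ∘ₗ diagonal w = ψ) :
    ∃ χ : (B →₀ K) →ₗ[K] N, t ∘ₗ χ = χ ∘ₗ weightedDifference b ∧ L ∘ₗ χ = L ∘ₗ ψ ∧
      (∀ x ∈ AddAction.fixedPoints K B, χ (single x 1) = ψ (single x 1)) ∧ (∀ x, χ x ∈ U) ∧
      χ ∘ₗ diagonal w = χ := by
  have hp : p ≠ 0 := (Fact.out : p.Prime).ne_zero
  have : CharP K p := charP_of_injective_algebraMap (algebraMap (ZMod p) K).injective p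
  obtain ⟨Y, hY, hYw, hYP⟩ :=
    exists_commutator_weightedDifference_eq_movedProjection (B := B) b
  refine ⟨intertwiner p (weightedDifference b) t Y ψ,
    intertwiner_intertwines (weightedDifference_pow_eq_zero _) ht hY hYP
      (movedProjection_mul_eq hYw hYP) (intertwiningDefect_comp_movedProjection hψ),
    ?_, fun x hx => intertwiner_apply_of_eq_zero hp ψ ?_, intertwiner_apply_mem hU hψU, ?_⟩
  · rw [← intertwiner_comp_left (t₃ := t) hL]
    exact intertwiner_eq_self hp hLψ
  · rw [← hYP, Module.End.mul_apply, movedProjection_single_of_mem hx, map_zero]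
  · rw [← intertwiner_comp_right (commute_weightedDifference fun i =>
      diagonal_commute_translation (hw _)) (hYw w hw).symm, hψw]

/-- A differential `d` on the span of `B` lowering the degree `deg` by one, for an action on `B`
that preserves the differential and the degree, whose fixed points contain the basis elements of
degree zero and span a subcomplex. -/
structure IsEquivariantDifferential (deg : B → ℕ) (d : Module.End K (B →₀ K)) : Prop where
  deg_vadd (g : K) (x : B) : deg (g +ᵥ x) = deg x
  commute (g : K) : Commute d (translation K g)
  apply_apply (c : B →₀ K) : d (d c) = 0
  apply_single_mem (x : B) : d (single x 1) ∈ supported K K {y | deg y + 1 = deg x}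
  mem_fixedPoints {x : B} (hx : deg x = 0) : x ∈ AddAction.fixedPoints K B
  apply_single_mem_fixedPoints {x : B} (hx : x ∈ AddAction.fixedPoints K B) :
    d (single x 1) ∈ supported K K (AddAction.fixedPoints K B)

/-- The map `φ` is, through degrees below `n`, an intertwining chain map that extends the map `ζ`
given on the fixed points; in higher degrees it vanishes. The chains of degree `m` in the target
complex are `C m`. -/
structure IsLiftBelow (b : ι → K) (deg : B → ℕ) (d : Module.End K (B →₀ K))
    (δ t : Module.End K N) (C : ℕ → Submodule K N) (ζ : (B →₀ K) →ₗ[K] N) (n : ℕ)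
    (φ : (B →₀ K) →ₗ[K] N) : Prop where
  intertwines : t ∘ₗ φ = φ ∘ₗ weightedDifference b
  mem {x : B} (hx : deg x < n) : φ (single x 1) ∈ C (deg x)
  boundary {x : B} (hx : deg x < n) : δ (φ (single x 1)) = φ (d (single x 1))
  fixed {x : B} (hx : deg x < n) (hf : x ∈ AddAction.fixedPoints K B) :
    φ (single x 1) = ζ (single x 1)
  eq_zero {x : B} (hx : n ≤ deg x) : φ (single x 1) = 0

variable {b : Module.Basis ι (ZMod p) K} {deg : B → ℕ} {d : Module.End K (B →₀ K)}
  {δ t : Module.End K N} {C : ℕ → Submodule K N} {ζ φ : (B →₀ K) →ₗ[K] N} {n D : ℕ}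

theorem exists_filling_of_isLiftBelow (hd : IsEquivariantDifferential deg d)
    (hC : ∀ m < D, ∀ c ∈ C m, δ c = 0 → ∃ c' ∈ C (m + 1), δ c' = c)
    (hζ : ∀ x ∈ AddAction.fixedPoints K B,
      ζ (single x 1) ∈ C (deg x) ∧ δ (ζ (single x 1)) = ζ (d (single x 1)))
    (hφ : IsLiftBelow b deg d δ t C ζ n φ) (hn : n ≤ D) {x : B} (hx : deg x = n) :
    ∃ y ∈ C n, δ y = φ (d (single x 1)) ∧
      (x ∈ AddAction.fixedPoints K B → y = ζ (single x 1)) := by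
  by_cases hf : x ∈ AddAction.fixedPoints K B
  · refine ⟨ζ (single x 1), hx ▸ (hζ x hf).1, (hζ x hf).2.trans ?_, fun _ => rfl⟩
    refine eq_of_mem_supported (s := {y | deg y + 1 = deg x} ∩ AddAction.fixedPoints K B)
      (fun y hy => (hφ.fixed (by have : deg y + 1 = deg x := hy.1; omega) hy.2).symm) ?_
    rw [supported_inter]
    exact ⟨hd.apply_single_mem x, hd.apply_single_mem_fixedPoints hf⟩
  · obtain ⟨m, rfl⟩ := Nat.exists_eq_succ_of_ne_zero (n := n)
      fun h => hf (hd.mem_fixedPoints (hx.trans h))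
    have deg_lt {y : B} (hy : deg y + 1 = deg x) : deg y = m ∧ deg y < m + 1 := by omega
    have mem : φ (d (single x 1)) ∈ C m :=
      map_mem_of_mem_supported (fun y hy => (deg_lt hy).1 ▸ hφ.mem (deg_lt hy).2)
        (hd.apply_single_mem x)
    have cycle : δ (φ (d (single x 1))) = 0 :=
      calc δ (φ (d (single x 1))) = φ (d (d (single x 1))) :=
            eq_of_mem_supported (f := δ ∘ₗ φ) (g := φ ∘ₗ d)
              (fun y hy => hφ.boundary (deg_lt hy).2) (hd.apply_single_mem x)
        _ = 0 := by rw [hd.apply_apply, map_zero]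
    obtain ⟨y, hy, boundary_y⟩ := hC m (by omega) _ mem cycle
    exact ⟨y, hy, boundary_y, fun h => absurd h hf⟩

theorem IsLiftBelow.exists_correction (hd : IsEquivariantDifferential deg d) (ht : t ^ p = 0)
    (hδt : Commute δ t) (hCt : ∀ m, ∀ c ∈ C m, t c ∈ C m)
    (hζt : ∀ x ∈ AddAction.fixedPoints K B, t (ζ (single x 1)) = 0)
    (hφ : IsLiftBelow b deg d δ t C ζ n φ) {y : B → N}
    (hy : ∀ x, deg x = n → y x ∈ C n ∧ δ (y x) = φ (d (single x 1)) ∧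
      (x ∈ AddAction.fixedPoints K B → y x = ζ (single x 1))) :
    ∃ χ : (B →₀ K) →ₗ[K] N, t ∘ₗ χ = χ ∘ₗ weightedDifference b ∧ (∀ x, χ x ∈ C n) ∧
      (∀ x, deg x = n → δ (χ (single x 1)) = φ (d (single x 1)) ∧
        (x ∈ AddAction.fixedPoints K B → χ (single x 1) = ζ (single x 1))) ∧
      ∀ x, deg x ≠ n → χ (single x 1) = 0 := by
  let w (x : B) : K := if deg x = n then 1 else 0
  have w_vadd (g : K) (x : B) : w (g +ᵥ x) = w x := by simp only [w, hd.deg_vadd]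
  have w_idem : diagonal w * diagonal w = diagonal w := by
    rw [diagonal_mul_diagonal]
    congr 1
    ext x
    simp [w]
  let ψ : (B →₀ K) →ₗ[K] N := linearCombination K y ∘ₗ diagonal w
  have ψ_single (x : B) : ψ (single x 1) = if deg x = n then y x else 0 := by
    by_cases hx : deg x = n <;> simp [ψ, w, diagonal_single, hx]
  have δ_comp_ψ : δ ∘ₗ ψ = φ ∘ₗ (d * diagonal w) := by
    refine lhom_ext' fun x => LinearMap.ext_ring ?_
    by_cases hx : deg x = n
    · simp [ψ_single, hx, (hy x hx).2.1, diagonal_single, w]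
    · simp [ψ_single, hx, diagonal_single, w]
  have commute_differential : Commute (d * diagonal w) (weightedDifference b) :=
    commute_weightedDifference fun i =>
      (hd.commute (b i)).mul_left (diagonal_commute_translation (w_vadd (b i)))
  obtain ⟨χ, χ_comm, δχ, χ_fixed, χ_mem, χ_w⟩ :=
    exists_intertwining_eqOn_fixedPoints b (ψ := ψ) (U := C n) ht hδt
      (fun x hx => by
        rw [ψ_single]
        split_ifs with hn
        · rw [(hy x hn).2.2 hx, hζt x hx]
        · exact map_zero t)
      (by rw [δ_comp_ψ, ← LinearMap.comp_assoc, hφ.intertwines, LinearMap.comp_assoc,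
            LinearMap.comp_assoc]
          exact congrArg (φ ∘ₗ ·) commute_differential.eq.symm)
      (hCt n)
      (fun c => map_mem_of_mem_supported (s := Set.univ) (fun x _ => by
        rw [ψ_single]
        split_ifs with hn
        exacts [(hy x hn).1, (C n).zero_mem]) (by simp))
      w_vadd (by rw [LinearMap.comp_assoc]; exact congrArg (linearCombination K y ∘ₗ ·) w_idem)
  refine ⟨χ, χ_comm, χ_mem, fun x hx => ⟨?_, fun hf => ?_⟩, fun x hx => ?_⟩
  · rw [← LinearMap.comp_apply, δχ, LinearMap.comp_apply, ψ_single, if_pos hx, (hy x hx).2.1]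
  · rw [χ_fixed x hf, ψ_single, if_pos hx, (hy x hx).2.2 hf]
  · rw [← χ_w, LinearMap.comp_apply, diagonal_single]
    simp [w, hx]

theorem exists_isLiftBelow (hd : IsEquivariantDifferential deg d) (ht : t ^ p = 0)
    (hδt : Commute δ t) (hCt : ∀ m, ∀ c ∈ C m, t c ∈ C m)
    (hC : ∀ m < D, ∀ c ∈ C m, δ c = 0 → ∃ c' ∈ C (m + 1), δ c' = c)
    (hζ : ∀ x ∈ AddAction.fixedPoints K B,
      ζ (single x 1) ∈ C (deg x) ∧ δ (ζ (single x 1)) = ζ (d (single x 1)))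
    (hζt : ∀ x ∈ AddAction.fixedPoints K B, t (ζ (single x 1)) = 0) (hn : n ≤ D + 1) :
    ∃ φ, IsLiftBelow b deg d δ t C ζ n φ := by
  induction n with
  | zero => exact ⟨0, by simp, by simp, by simp, by simp, by simp⟩
  | succ n ih =>
    obtain ⟨φ, hφ⟩ := ih (by omega)
    have exists_filling (x : B) : ∃ y, deg x = n → y ∈ C n ∧ δ y = φ (d (single x 1)) ∧
        (x ∈ AddAction.fixedPoints K B → y = ζ (single x 1)) := by
      by_cases hx : deg x = n
      · obtain ⟨y, hy⟩ := exists_filling_of_isLiftBelow hd hC hζ hφ (by omega) hx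
        exact ⟨y, fun _ => hy⟩
      · exact ⟨0, fun h => absurd h hx⟩
    choose y hy using exists_filling
    obtain ⟨χ, χ_comm, χ_mem, χ_eq, χ_zero⟩ := hφ.exists_correction hd ht hδt hCt hζt hy
    have χ_boundary {x : B} (hx : deg x < n + 1) : χ (d (single x 1)) = 0 :=
      eq_of_mem_supported (g := 0)
        (fun z hz => χ_zero z (by have : deg z + 1 = deg x := hz; omega)) (hd.apply_single_mem x)
    have eq_left {x : B} (hx : deg x < n) : (φ + χ) (single x 1) = φ (single x 1) := by
      simp [χ_zero x hx.ne]
    have eq_right {x : B} (hx : n ≤ deg x) : (φ + χ) (single x 1) = χ (single x 1) := by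
      simp [hφ.eq_zero hx]
    refine ⟨φ + χ, ?_, fun {x} hx => ?_, fun {x} hx => ?_, fun {x} hx hf => ?_, fun {x} hx => ?_⟩
    · rw [LinearMap.comp_add, LinearMap.add_comp, hφ.intertwines, χ_comm]
    · rcases Nat.lt_succ_iff_lt_or_eq.1 hx with hlt | heq
      · exact eq_left hlt ▸ hφ.mem hlt
      · exact eq_right heq.ge ▸ heq ▸ χ_mem _
    · rw [LinearMap.add_apply φ χ (d _), χ_boundary hx, add_zero]
      rcases Nat.lt_succ_iff_lt_or_eq.1 hx with hlt | heq
      · rw [eq_left hlt, hφ.boundary hlt]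
      · rw [eq_right heq.ge, (χ_eq x heq).1]
    · rcases Nat.lt_succ_iff_lt_or_eq.1 hx with hlt | heq
      · rw [eq_left hlt, hφ.fixed hlt hf]
      · rw [eq_right heq.ge, (χ_eq x heq).2 hf]
    · rw [eq_right (by omega), χ_zero x (by omega)]

theorem exists_nullhomotopy_filling (hd : IsEquivariantDifferential deg d)
    (hC : ∀ m ≤ D, ∀ c ∈ C m, δ c = 0 → ∃ c' ∈ C (m + 1), δ c' = c)
    (hφ : ∀ x, deg x ≤ D → φ (single x 1) ∈ C (deg x) ∧
      δ (φ (single x 1)) = φ (d (single x 1))) {s : (B →₀ K) →ₗ[K] N}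
    (hs : ∀ x, deg x < n → s (single x 1) ∈ C (deg x + 1) ∧
      δ (s (single x 1)) + s (d (single x 1)) = φ (single x 1)) (hn : n ≤ D) {x : B}
    (hx : deg x = n) :
    ∃ y ∈ C (n + 1), δ y = φ (single x 1) - s (d (single x 1)) := by
  have deg_lt {z : B} (hz : deg z + 1 = deg x) : deg z < n := by omega
  have mem : φ (single x 1) - s (d (single x 1)) ∈ C n := by
    refine (C n).sub_mem (hx ▸ (hφ x (by omega)).1) ?_
    refine map_mem_of_mem_supported (fun z hz => ?_) (hd.apply_single_mem x)
    rw [← hx, ← show deg z + 1 = deg x from hz]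
    exact (hs z (deg_lt hz)).1
  have homotopy := eq_of_mem_supported (f := δ ∘ₗ s + s ∘ₗ d) (g := φ)
    (fun z hz => (hs z (deg_lt hz)).2) (hd.apply_single_mem x)
  refine hC n hn _ mem ?_
  rw [map_sub, (hφ x (by omega)).2, ← homotopy]
  simp [hd.apply_apply]

theorem exists_nullhomotopy (hd : IsEquivariantDifferential deg d)
    (hC : ∀ m ≤ D, ∀ c ∈ C m, δ c = 0 → ∃ c' ∈ C (m + 1), δ c' = c)
    (hφ : ∀ x, deg x ≤ D → φ (single x 1) ∈ C (deg x) ∧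
      δ (φ (single x 1)) = φ (d (single x 1))) (hn : n ≤ D + 1) :
    ∃ s : (B →₀ K) →ₗ[K] N, ∀ x, deg x < n → s (single x 1) ∈ C (deg x + 1) ∧
      δ (s (single x 1)) + s (d (single x 1)) = φ (single x 1) := by
  induction n with
  | zero => exact ⟨0, by simp⟩
  | succ n ih =>
    obtain ⟨s, hs⟩ := ih (by omega)
    have exists_filling (x : B) : ∃ y, deg x = n → y ∈ C (n + 1) ∧
        δ y = φ (single x 1) - s (d (single x 1)) := by
      by_cases hx : deg x = n
      · obtain ⟨y, hy⟩ := exists_nullhomotopy_filling hd hC hφ hs (by omega) hx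
        exact ⟨y, fun _ => hy⟩
      · exact ⟨0, fun h => absurd h hx⟩
    choose y hy using exists_filling
    let s' : (B →₀ K) →ₗ[K] N :=
      linearCombination K fun x => if deg x = n then y x else s (single x 1)
    have s'_single (x : B) : s' (single x 1) = if deg x = n then y x else s (single x 1) := by
      simp [s']
    have s'_boundary {x : B} (hx : deg x < n + 1) : s' (d (single x 1)) = s (d (single x 1)) :=
      eq_of_mem_supported (fun z hz => by
        have : deg z + 1 = deg x := hz
        rw [s'_single, if_neg (by omega)]) (hd.apply_single_mem x)
    refine ⟨s', fun x hx => ?_⟩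
    rw [s'_boundary hx, s'_single]
    split_ifs with hxn
    · exact ⟨hxn ▸ (hy x hxn).1, by rw [(hy x hxn).2, sub_add_cancel]⟩
    · exact hs x (by omega)

omit [AddAction K B] in
theorem trace_diagonal [Fintype B] (w : B → K) :
    LinearMap.trace K (B →₀ K) (diagonal w) = ∑ x, w x := by
  classical
  rw [LinearMap.trace_eq_matrix_trace K (Finsupp.basisSingleOne (R := K) (ι := B)), Matrix.trace]
  refine Finset.sum_congr rfl fun x _ => ?_
  rw [Matrix.diag_apply, LinearMap.toMatrix_apply]
  simp [diagonal_single]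

/-- The operator of degree parity, whose trace against a chain map is its Lefschetz number. -/
noncomputable def signOperator (K : Type*) [Field K] (deg : B → ℕ) : Module.End K (B →₀ K) :=
  diagonal fun x => (-1) ^ deg x

theorem IsEquivariantDifferential.mul_signOperator (hd : IsEquivariantDifferential deg d) :
    d * signOperator K deg = -(signOperator K deg * d) := by
  refine lhom_ext' fun x => LinearMap.ext_ring ?_
  have sign_boundary : signOperator K deg (d (single x 1)) =
      ((-(-1) ^ deg x : K) • LinearMap.id) (d (single x 1)) :=
    eq_of_mem_supported (fun z hz => by
      rw [← show deg z + 1 = deg x from hz, pow_succ]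
      simp [signOperator, diagonal_single]) (hd.apply_single_mem x)
  have single_eq : signOperator K deg (single x 1) = (-1 : K) ^ deg x • single x 1 := by
    simp [signOperator, diagonal_single]
  simp only [LinearMap.comp_apply, lsingle_apply, Module.End.mul_apply, LinearMap.neg_apply,
    single_eq, sign_boundary, map_smul, neg_smul, LinearMap.smul_apply, LinearMap.id_apply, neg_neg]

theorem trace_anticommutator_mul_eq_zero {d h s : Module.End K N} (hs : d * s = -(s * d)) :
    LinearMap.trace K N ((d * h + h * d) * s) = 0 := by
  rw [add_mul, map_add, mul_assoc h, hs, mul_neg, map_neg, ← mul_assoc h,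
    LinearMap.trace_mul_comm K (h * s), mul_assoc, add_neg_cancel]

/-- A nullhomotopic equivariant operator that is the identity at the fixed points has Lefschetz
number zero, while the moved points contribute nothing to that number. -/
theorem sum_fixedPoints_eq_zero_of_nullhomotopic [Fintype B] (b : Module.Basis ι (ZMod p) K)
    (hd : IsEquivariantDifferential deg d) {f h : Module.End K (B →₀ K)}
    (hf : f = d * h + h * d) (hfb : Commute f (weightedDifference b))
    (hfix : ∀ x ∈ AddAction.fixedPoints K B, f (single x 1) = single x 1) :
    ∑ x, (AddAction.fixedPoints K B).indicator (fun x => (-1 : K) ^ deg x) x = 0 := by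
  obtain ⟨Y, hY, -, -⟩ := exists_commutator_weightedDifference_eq_movedProjection (B := B) b
  have sign_commute : Commute (signOperator K deg) (weightedDifference b) :=
    commute_weightedDifference fun i => diagonal_commute_translation fun x => by
      rw [hd.deg_vadd]
  have trace_moved : LinearMap.trace K (B →₀ K)
      (f * signOperator K deg * movedProjection K K B) = 0 :=
    hY ▸ trace_mul_commutator_eq_zero (hfb.mul_left sign_commute)
  have trace_all : LinearMap.trace K (B →₀ K) (f * signOperator K deg) = 0 :=
    hf ▸ trace_anticommutator_mul_eq_zero hd.mul_signOperator
  have decomposition : f * signOperator K deg =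
      diagonal ((AddAction.fixedPoints K B).indicator fun x => (-1 : K) ^ deg x) +
        f * signOperator K deg * movedProjection K K B := by
    refine lhom_ext fun x a => ?_
    by_cases hx : x ∈ AddAction.fixedPoints K B
    · have scalar : single x (a * (-1) ^ deg x) = (a * (-1) ^ deg x) • single x 1 := by simp
      simp [movedProjection_single_of_mem hx, signOperator, diagonal_single, hx, scalar, hfix,
        -smul_single]
    · simp [movedProjection_single_of_notMem hx, diagonal_single, hx]
  rwa [decomposition, map_add, trace_moved, add_zero, trace_diagonal] at trace_all

end EquivariantLift

section ListAction

variable {K G V : Type*} [Field K] [AddMonoid G] [AddAction G V]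

/-- The entrywise action on lists. -/
instance listAddAction : AddAction G (List V) where
  vadd g l := l.map (g +ᵥ ·)
  zero_vadd l := (List.map_congr_left fun v _ => zero_vadd G v).trans l.map_id'
  add_vadd g h l := by
    simp only [HVAdd.hVAdd, List.map_map]
    exact List.map_congr_left fun v _ => add_vadd g h v

theorem list_vadd_eq_map (g : G) (l : List V) : g +ᵥ l = l.map (g +ᵥ ·) := rfl

theorem length_list_vadd (g : G) (l : List V) : (g +ᵥ l).length = l.length := List.length_map _

theorem mem_fixedPoints_subAddAction {E : SubAddAction G V} {v : E} :
    v ∈ AddAction.fixedPoints G E ↔ v.1 ∈ AddAction.fixedPoints G V := by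
  simp only [AddAction.mem_fixedPoints, Subtype.ext_iff, SubAddAction.val_vadd]

theorem mem_fixedPoints_list {l : List V} :
    l ∈ AddAction.fixedPoints G (List V) ↔ ∀ v ∈ l, v ∈ AddAction.fixedPoints G V := by
  simp only [AddAction.mem_fixedPoints, list_vadd_eq_map]
  refine ⟨fun h v hv g => ?_, fun h g => (List.map_congr_left fun v hv => h v hv g).trans l.map_id⟩
  exact List.map_inj_left.1 ((h g).trans l.map_id.symm) v hv

theorem sublistClosed_fixedPoints : SublistClosed (AddAction.fixedPoints G (List V)) :=
  fun _ _ hl h => mem_fixedPoints_list.2 fun v hv => mem_fixedPoints_list.1 h v (hl.subset hv)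

theorem boundary_translation (g : G) (c : List V →₀ K) :
    boundary (translation K g c) = translation K g (boundary c) :=
  boundary_mapChain (g +ᵥ ·) c

theorem translation_mem_chains {X Y : Set (List V)} {m : ℕ} {g : G} (h : ∀ l ∈ X, g +ᵥ l ∈ Y)
    {c : List V →₀ K} (hc : c ∈ chains K X m) : translation K g c ∈ chains K Y m :=
  mapChain_mem_chains h hc

end ListAction

section RestrictedChains

variable {K V S : Type*} [Field K] [SetLike S (List V)] {m : ℕ} {X : S}

/-- The inclusion of the chains with simplices in `X` into all chains. -/
noncomputable def chainInclusion (K : Type*) [Field K] (X : S) :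
    (X →₀ K) →ₗ[K] (List V →₀ K) :=
  lmapDomain K K Subtype.val

/-- The projection onto the chains with simplices in `X`, dropping all other simplices. -/
noncomputable def chainRestriction (K : Type*) [Field K] (X : S) :
    (List V →₀ K) →ₗ[K] (X →₀ K) :=
  lsubtypeDomain (X : Set (List V))

/-- The boundary operator of a complex on the span of its simplices; faces outside `X` are
dropped. -/
noncomputable def restrictedBoundary (K : Type*) [Field K] (X : S) :
    Module.End K (X →₀ K) :=
  chainRestriction K X ∘ₗ boundary ∘ₗ chainInclusion K X

@[simp] theorem chainInclusion_single (l : X) (a : K) :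
    chainInclusion K X (single l a) = single l.1 a := by
  simp [chainInclusion]

theorem chainInclusion_injective : Function.Injective (chainInclusion K X) :=
  mapDomain_injective Subtype.val_injective

theorem chainRestriction_single (l : X) (a : K) :
    chainRestriction K X (single l.1 a) = single l a := by
  ext l'
  exact single_apply_left Subtype.val_injective l l' a

theorem chainInclusion_chainRestriction {c : List V →₀ K} (hc : c ∈ chains K (X : Set (List V)) m) :
    chainInclusion K X (chainRestriction K X c) = c :=
  eq_of_mem_chains (f := chainInclusion K X ∘ₗ chainRestriction K X) (g := LinearMap.id)
    (fun l hl _ => by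
      rw [LinearMap.comp_apply, chainRestriction_single ⟨l, hl⟩, chainInclusion_single,
        LinearMap.id_apply]) hc

theorem mem_supported_of_chainInclusion_mem {c : X →₀ K} {A : Set (List V)}
    (hc : chainInclusion K X c ∈ supported K K A) : c ∈ supported K K {l | l.1 ∈ A} := by
  intro l hl
  refine hc (mem_support_iff.2 ?_)
  rw [chainInclusion, lmapDomain_apply, mapDomain_apply Subtype.val_injective]
  exact mem_support_iff.1 hl

theorem chainInclusion_restrictedBoundary (hX : SublistClosed (X : Set (List V))) (c : X →₀ K) :
    chainInclusion K X (restrictedBoundary K X c) = boundary (chainInclusion K X c) := by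
  induction c using Finsupp.induction_linear with
  | zero => simp
  | add c c' hc hc' => simp only [map_add, hc, hc']
  | single l a =>
    have hl := single_mem_chains (X := (X : Set (List V))) l.2 rfl a
    simp only [restrictedBoundary, LinearMap.comp_apply, chainInclusion_single]
    rcases hm : l.1.length with _ | m
    · rw [boundary_eq_zero_of_mem_chains_zero (hm ▸ hl), map_zero, map_zero]
    · exact chainInclusion_chainRestriction (boundary_mem_chains hX (hm ▸ hl))

theorem restrictedBoundary_single_mem_supported (hX : SublistClosed (X : Set (List V))) (l : X) :
    restrictedBoundary K X (single l 1) ∈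
      supported K K {l' : X | l'.1.Sublist l.1 ∧ l'.1.length + 1 = l.1.length} := by
  refine mem_supported_of_chainInclusion_mem
    (A := {l' | l'.Sublist l.1 ∧ l'.length + 1 = l.1.length}) ?_
  rw [chainInclusion_restrictedBoundary hX, chainInclusion_single, boundary_single, one_smul]
  rcases hm : l.1.length with _ | m
  · simp [List.length_eq_zero_iff.1 hm, listBoundary]
  · refine supported_mono ?_ (listBoundary_mem_chains l.1 hm)
    exact fun l' hl' => ⟨hl'.1, congrArg (· + 1) hl'.2⟩

end RestrictedChains

section EquivariantChainMap

variable {K G V W : Type*} [Field K] {Z : Set (List V)} {Γ : List V → Set (List W)}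
  {Ψ : (List V →₀ K) →ₗ[K] (List W →₀ K)} {n m : ℕ}

/-- On the simplices of `Z` with at most `n` vertices, `Ψ` is an equivariant chain map carried
by `Γ`. -/
structure IsEquivariantlyCarried (G : Type*) [AddMonoid G] [AddAction G V] [AddAction G W]
    (Γ : List V → Set (List W)) (Z : Set (List V)) (n : ℕ)
    (Ψ : (List V →₀ K) →ₗ[K] (List W →₀ K)) : Prop where
  mem {l : List V} (hl : l ∈ Z) (hn : l.length ≤ n) : Ψ (single l 1) ∈ chains K (Γ l) l.length
  boundary {l : List V} (hl : l ∈ Z) (hn : l.length ≤ n) :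
    boundary (Ψ (single l 1)) = Ψ (listBoundary l)
  vadd {l : List V} (hl : l ∈ Z) (hn : l.length ≤ n) (g : G) :
    Ψ (single (g +ᵥ l) 1) = translation K g (Ψ (single l 1))

namespace IsEquivariantlyCarried

variable [AddMonoid G] [AddAction G V] [AddAction G W] {E : Set (List W)} {c : List V →₀ K}

theorem mono {Z' : Set (List V)} (h : IsEquivariantlyCarried G Γ Z n Ψ) (hZ : Z' ⊆ Z) :
    IsEquivariantlyCarried G Γ Z' n Ψ :=
  ⟨fun hl => h.mem (hZ hl), fun hl => h.boundary (hZ hl), fun hl => h.vadd (hZ hl)⟩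

theorem apply_mem (h : IsEquivariantlyCarried G Γ Z n Ψ) (hΓ : ∀ l ∈ Z, Γ l ⊆ E) (hm : m ≤ n)
    (hc : c ∈ chains K Z m) : Ψ c ∈ chains K E m :=
  map_mem_of_mem_chains (fun l hl hlm => hlm ▸
    chains_mono (fun _ hl' _ => hΓ l hl hl') (h.mem hl (hlm.trans_le hm))) hc

theorem boundary_apply (h : IsEquivariantlyCarried G Γ Z n Ψ) (hm : m ≤ n)
    (hc : c ∈ chains K Z m) :
    DualColorfulTverberg.boundary (Ψ c) = Ψ (DualColorfulTverberg.boundary c) :=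
  eq_of_mem_chains (f := DualColorfulTverberg.boundary ∘ₗ Ψ)
    (g := Ψ ∘ₗ DualColorfulTverberg.boundary)
    (fun l hl hlm => by simpa using h.boundary hl (hlm.trans_le hm)) hc

theorem translation_apply (h : IsEquivariantlyCarried G Γ Z n Ψ) (hm : m ≤ n)
    (hc : c ∈ chains K Z m) (g : G) : Ψ (translation K g c) = translation K g (Ψ c) :=
  eq_of_mem_chains (f := Ψ ∘ₗ translation K g) (g := translation K g ∘ₗ Ψ)
    (fun l hl hlm => by simpa [translation_single] using h.vadd hl (hlm.trans_le hm) g) hc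

end IsEquivariantlyCarried

section LefschetzNumber

variable [AddAction K V] [AddAction K W] {p : ℕ} [Fact p.Prime] {ι : Type*} [Algebra (ZMod p) K]
  [Fintype ι]

theorem weightedDifference_apply {B : Type*} [AddAction K B] (b : ι → K) (c : B →₀ K) :
    weightedDifference b c = ∑ i, b i • (translation K (b i) c - c) := by
  simp [weightedDifference, differenceOperator, diagonal_const, LinearMap.sum_apply]

theorem map_weightedDifference {B B' : Type*} [AddAction K B] [AddAction K B'] (b : ι → K)
    (f : (B →₀ K) →ₗ[K] (B' →₀ K)) {c : B →₀ K}
    (h : ∀ g : K, f (translation K g c) = translation K g (f c)) :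
    f (weightedDifference b c) = weightedDifference b (f c) := by
  simp only [weightedDifference_apply, map_sum, map_smul, map_sub, h]

theorem weightedDifference_mem_chains (b : ι → K) (hZ : ∀ (g : K), ∀ l ∈ Z, g +ᵥ l ∈ Z)
    {c : List V →₀ K} (hc : c ∈ chains K Z m) : weightedDifference b c ∈ chains K Z m := by
  rw [weightedDifference_apply]
  exact Submodule.sum_mem _ fun i _ => Submodule.smul_mem _ _
    (Submodule.sub_mem _ (translation_mem_chains (hZ _) hc) hc)

variable (E : SubAddAction K (List W))

theorem chainInclusion_translation (g : K) (c : E →₀ K) :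
    chainInclusion K E (translation K g c) =
      translation K g (chainInclusion K E c) := by
  induction c using Finsupp.induction_linear with
  | zero => simp
  | add c c' hc hc' => simp only [map_add, hc, hc']
  | single l a =>
    rw [translation_single]
    exact (chainInclusion_single _ a).trans
      ((translation_single _ _ _).symm.trans (congrArg _ (chainInclusion_single l a).symm))

variable {E}

theorem isEquivariantDifferential_restrictedBoundary (hE : SublistClosed (E : Set (List W))) :
    IsEquivariantDifferential (fun l : E => l.1.length)
      (restrictedBoundary K E) where
  deg_vadd g l := length_list_vadd g l.1
  commute g := LinearMap.ext fun c => chainInclusion_injective <| by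
    simp only [Module.End.mul_apply, chainInclusion_restrictedBoundary hE,
      chainInclusion_translation, boundary_translation]
  apply_apply c := chainInclusion_injective <| by
    simp only [chainInclusion_restrictedBoundary hE, boundary_boundary, map_zero]
  apply_single_mem l :=
    supported_mono (fun _ h => h.2) (restrictedBoundary_single_mem_supported hE l)
  mem_fixedPoints {l} hl := by
    rw [mem_fixedPoints_subAddAction, List.length_eq_zero_iff.1 hl]
    exact mem_fixedPoints_list.2 (by simp)
  apply_single_mem_fixedPoints {l} hl :=
    supported_mono (fun _ h => mem_fixedPoints_subAddAction.2
      (sublistClosed_fixedPoints h.1 (mem_fixedPoints_subAddAction.1 hl)))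
      (restrictedBoundary_single_mem_supported hE l)

/-- On the fixed points, the vertex map `c` is a section of `Ψ`. -/
structure IsFixedSection (E : SubAddAction K (List W)) (Z : Set (List V))
    (Ψ : (List V →₀ K) →ₗ[K] (List W →₀ K)) (c : W → V) : Prop where
  map_mem {l : List W} (hl : l ∈ E) (hf : l ∈ AddAction.fixedPoints K (List W)) : l.map c ∈ Z
  map_mem_fixedPoints {l : List W} (hl : l ∈ E) (hf : l ∈ AddAction.fixedPoints K (List W)) :
    l.map c ∈ AddAction.fixedPoints K (List V)
  apply_map {l : List W} (hl : l ∈ E) (hf : l ∈ AddAction.fixedPoints K (List W)) :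
    Ψ (single (l.map c) 1) = single l 1

theorem IsFixedSection.exists_isLiftBelow (b : Module.Basis ι (ZMod p) K)
    (hE : SublistClosed (E : Set (List W))) (hZ : ∀ (g : K), ∀ l ∈ Z, g +ᵥ l ∈ Z)
    {D : ℕ} (hZD : ∀ m < D, AcyclicAt K Z m) {c : W → V} (hc : IsFixedSection E Z Ψ c) :
    ∃ φ, IsLiftBelow b (fun l : E => l.1.length) (restrictedBoundary K E) boundary
      (weightedDifference b) (chains K Z) (mapChain K c ∘ₗ chainInclusion K E) (D + 1) φ := by
  refine DualColorfulTverberg.exists_isLiftBelow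
    (isEquivariantDifferential_restrictedBoundary hE) (weightedDifference_pow_eq_zero b)
    (commute_weightedDifference fun i => LinearMap.ext fun _ => boundary_translation _ _)
    (fun m _ => weightedDifference_mem_chains b hZ) hZD (fun l hl => ?_) (fun l hl => ?_) le_rfl
  · simp only [LinearMap.comp_apply, chainInclusion_restrictedBoundary hE, ← boundary_mapChain,
      chainInclusion_single, mapChain_single, and_true]
    exact single_mem_chains (hc.map_mem l.2 (mem_fixedPoints_subAddAction.1 hl))
      (List.length_map c) 1
  · rw [LinearMap.comp_apply, chainInclusion_single, mapChain_single]
    exact weightedDifference_single_of_mem_fixedPoints b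
      (hc.map_mem_fixedPoints l.2 (mem_fixedPoints_subAddAction.1 hl)) 1

/-- A Lefschetz fixed point theorem modulo `p`: the equivariant chain maps from an acyclic complex
over a finite complex `E` that split over the fixed points of `E` force these points to have Euler
characteristic zero. -/
theorem sum_fixedPoints_eq_zero_of_isEquivariantlyCarried [Fintype E]
    (b : Module.Basis ι (ZMod p) K) (hE : SublistClosed (E : Set (List W))) {D : ℕ}
    (hD : ∀ l ∈ E, l.length ≤ D) (hZ : ∀ (g : K), ∀ l ∈ Z, g +ᵥ l ∈ Z)
    (hZD : ∀ m ≤ D, AcyclicAt K Z m) (hΓ : ∀ l ∈ Z, Γ l ⊆ E)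
    (hΨ : IsEquivariantlyCarried K Γ Z (D + 1) Ψ) {c : W → V} (hc : IsFixedSection E Z Ψ c) :
    ∑ l, (AddAction.fixedPoints K E).indicator (fun l => (-1 : K) ^ l.1.length) l = 0 := by
  have hd := isEquivariantDifferential_restrictedBoundary (K := K) hE
  have length_lt (l : E) : l.1.length < D + 1 := Nat.lt_succ_of_le (hD l.1 l.2)
  obtain ⟨φ, hφ⟩ := hc.exists_isLiftBelow b hE hZ fun m hm => hZD m hm.le
  have φ_mem (l : E) : φ (single l 1) ∈ chains K Z l.1.length := hφ.mem (length_lt l)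
  obtain ⟨s, hs⟩ := exists_nullhomotopy hd hZD
    (fun l _ => ⟨φ_mem l, hφ.boundary (length_lt l)⟩) le_rfl
  have incl_f (l : E) : chainInclusion K E (chainRestriction K E (Ψ (φ (single l 1)))) =
      Ψ (φ (single l 1)) :=
    chainInclusion_chainRestriction (hΨ.apply_mem hΓ (length_lt l).le (φ_mem l))
  refine sum_fixedPoints_eq_zero_of_nullhomotopic b hd
    (f := chainRestriction K E ∘ₗ Ψ ∘ₗ φ) (h := chainRestriction K E ∘ₗ Ψ ∘ₗ s) ?_ ?_ ?_
  · refine lhom_ext' fun l => LinearMap.ext_ring ?_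
    obtain ⟨s_mem, s_boundary⟩ := hs l (length_lt l)
    simp only [LinearMap.comp_apply, lsingle_apply, LinearMap.add_apply, Module.End.mul_apply]
    rw [restrictedBoundary, LinearMap.comp_apply, LinearMap.comp_apply,
      chainInclusion_chainRestriction (hΨ.apply_mem hΓ (by have := length_lt l; omega) s_mem),
      hΨ.boundary_apply (by have := length_lt l; omega) s_mem, ← map_add, ← map_add,
      ← s_boundary, restrictedBoundary]
  · refine lhom_ext' fun l => LinearMap.ext_ring (chainInclusion_injective ?_)
    simp only [LinearMap.comp_apply, lsingle_apply, Module.End.mul_apply]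
    have φ_wd : φ (weightedDifference b (single l 1)) = weightedDifference b (φ (single l 1)) :=
      (LinearMap.congr_fun hφ.intertwines (single l 1)).symm
    rw [map_weightedDifference b (chainInclusion K E) fun g => chainInclusion_translation E g _,
      incl_f, φ_wd, chainInclusion_chainRestriction (hΨ.apply_mem hΓ (length_lt l).le
        (weightedDifference_mem_chains b hZ (φ_mem l))),
      map_weightedDifference b Ψ (hΨ.translation_apply (length_lt l).le (φ_mem l))]
  · intro l hl
    have hl' := mem_fixedPoints_subAddAction.1 hl
    refine chainInclusion_injective ((incl_f l).trans ?_)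
    rw [hφ.fixed (length_lt l) hl, LinearMap.comp_apply, chainInclusion_single, mapChain_single,
      hc.apply_map l.2 hl']

end LefschetzNumber
end EquivariantChainMap

section AcyclicCarrier

variable {K G V W : Type*} [Field K] [AddGroup G] [AddAction G V] [AddAction G W]
  {Γ : List V → Set (List W)} {P Z : Set (List V)} {ρ : V → W} {β : List V → G}
  {Ψ : (List V →₀ K) →ₗ[K] (List W →₀ K)} {l : List V} {n m : ℕ}

/-- An equivariant carrier `Γ`: each simplex is assigned a subcomplex, monotonically. A simplex is
either free, with its position in its orbit read off by `β`, or fixed together with its carrier. On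
the subcomplex `P` of fixed simplices the vertex map `ρ` is carried by `Γ`. -/
structure IsEquivariantCarrier (Γ : List V → Set (List W)) (β : List V → G) (P : Set (List V))
    (ρ : V → W) : Prop where
  mono {l l' : List V} (h : l'.Sublist l) : Γ l' ⊆ Γ l
  vadd_mem (g : G) {l : List V} {k : List W} (hk : k ∈ Γ l) : g +ᵥ k ∈ Γ (g +ᵥ l)
  free_or_fixed (l : List V) : (∀ g, β (g +ᵥ l) = g + β l) ∨
    (l ∈ AddAction.fixedPoints G (List V) ∧ Γ l ⊆ AddAction.fixedPoints G (List W))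
  sublistClosed : SublistClosed P
  nil_mem : [] ∈ P
  map_mem {l : List V} (hl : l ∈ P) : l.map ρ ∈ Γ l
  mem_fixedPoints {l : List V} (hl : l ∈ P) : l ∈ AddAction.fixedPoints G (List V)
  subset_fixedPoints {l : List V} (hl : l ∈ P) : Γ l ⊆ AddAction.fixedPoints G (List W)

theorem translation_eq_self_of_mem_chains {E : Set (List W)}
    (hE : E ⊆ AddAction.fixedPoints G (List W)) {c : List W →₀ K} (hc : c ∈ chains K E m) (g : G) :
    translation K g c = c :=
  eq_of_mem_chains (f := translation K g) (g := LinearMap.id)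
    (fun l hl _ => by rw [translation_single, hE hl g, LinearMap.id_apply]) hc

namespace IsEquivariantCarrier

theorem exists_filling (h : IsEquivariantCarrier Γ β P ρ) (hZ : SublistClosed Z)
    (hΨ : IsEquivariantlyCarried G Γ Z n Ψ)
    (hΨP : ∀ l ∈ Z ∩ P, l.length ≤ n → Ψ (single l 1) = single (l.map ρ) 1)
    (hl : l ∈ Z) (hln : l.length = n + 1) (hfill : AcyclicAt K (Γ l) n) :
    ∃ y ∈ chains K (Γ l) (n + 1), boundary y = Ψ (listBoundary l) ∧
      (l ∈ P → y = single (l.map ρ) 1) := by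
  have faces := listBoundary_mem_chains (R := K) l hln
  by_cases hP : l ∈ P
  · refine ⟨_, single_mem_chains (h.map_mem hP) (by simpa using hln) 1, ?_, fun _ => rfl⟩
    have mapChain_eq : mapChain K ρ (listBoundary l) = Ψ (listBoundary l) :=
      eq_of_mem_chains (fun l' hl' hl'n => by
        rw [mapChain_single, hΨP l' ⟨hZ hl' hl, h.sublistClosed hl' hP⟩ hl'n.le]) faces
    rw [← mapChain_eq, ← mapChain_single, boundary_mapChain, boundary_single, one_smul]
  · have faces_carried : IsEquivariantlyCarried G Γ {l' | l'.Sublist l} n Ψ :=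
      hΨ.mono fun l' hl' => hZ hl' hl
    have cycle : boundary (Ψ (listBoundary l)) = 0 := by
      have := boundary_boundary (single l (1 : K))
      rw [boundary_single, one_smul] at this
      rw [faces_carried.boundary_apply le_rfl faces, this, map_zero]
    obtain ⟨y, hy, hby⟩ :=
      hfill _ (faces_carried.apply_mem (fun l' hl' => h.mono hl') le_rfl faces) cycle
    exact ⟨y, hy, hby, fun hl => absurd hl hP⟩

/-- Choosing the filling at the base point of each orbit and translating it makes it equivariant. -/
theorem exists_equivariant_filling (h : IsEquivariantCarrier Γ β P ρ) (hZ : SublistClosed Z)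
    (hZG : ∀ (g : G), ∀ l ∈ Z, g +ᵥ l ∈ Z) (hfill : ∀ l ∈ Z, l ≠ [] → AcyclicAt K (Γ l) n)
    (hΨ : IsEquivariantlyCarried G Γ Z n Ψ)
    (hΨP : ∀ l ∈ Z ∩ P, l.length ≤ n → Ψ (single l 1) = single (l.map ρ) 1) :
    ∃ Y : List V → (List W →₀ K), ∀ l ∈ Z, l.length = n + 1 → Y l ∈ chains K (Γ l) (n + 1) ∧
      boundary (Y l) = Ψ (listBoundary l) ∧ (∀ g : G, Y (g +ᵥ l) = translation K g (Y l)) ∧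
      (l ∈ P → Y l = single (l.map ρ) 1) := by
  have exists_choice (l : List V) : ∃ y, l ∈ Z → l.length = n + 1 → y ∈ chains K (Γ l) (n + 1) ∧
      boundary y = Ψ (listBoundary l) ∧ (l ∈ P → y = single (l.map ρ) 1) := by
    by_cases hl : l ∈ Z ∧ l.length = n + 1
    · obtain ⟨y, hy⟩ := h.exists_filling hZ hΨ hΨP hl.1 hl.2
        (hfill l hl.1 (by rintro rfl; simp at hl))
      exact ⟨y, fun _ _ => hy⟩
    · exact ⟨0, fun hl₁ hl₂ => absurd ⟨hl₁, hl₂⟩ hl⟩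
  choose y hy using exists_choice
  refine ⟨fun l => translation K (β l) (y (-β l +ᵥ l)), fun l hl hln => ?_⟩
  obtain ⟨y_mem, y_boundary, y_P⟩ := hy _ (hZG (-β l) l hl) ((length_list_vadd _ l).trans hln)
  have Y_mem : translation K (β l) (y (-β l +ᵥ l)) ∈ chains K (Γ l) (n + 1) :=
    translation_mem_chains (fun k hk => by simpa using h.vadd_mem (β l) hk) y_mem
  refine ⟨Y_mem, ?_, fun g => ?_, fun hP => ?_⟩
  · have base_boundary : (listBoundary (-β l +ᵥ l) : List V →₀ K) =
        translation K (-β l) (listBoundary l) := by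
      simpa [translation_single] using boundary_translation (-β l) (single l (1 : K))
    have faces_carried : IsEquivariantlyCarried G Γ {l' | l'.Sublist l} n Ψ :=
      hΨ.mono fun l' hl' => hZ hl' hl
    rw [boundary_translation, y_boundary, base_boundary,
      faces_carried.translation_apply le_rfl (listBoundary_mem_chains l hln),
      ← Module.End.mul_apply, ← translation_add, add_neg_cancel, translation_zero,
      Module.End.one_apply]
  · rcases h.free_or_fixed l with free | ⟨fixed, Γ_fixed⟩
    · simp only [free g]
      rw [neg_add_rev, add_vadd, neg_vadd_vadd, translation_add, Module.End.mul_apply]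
    · rw [fixed g, translation_eq_self_of_mem_chains Γ_fixed Y_mem]
  · have base_eq : -β l +ᵥ l = l := h.mem_fixedPoints hP _
    simp only [base_eq] at y_mem y_P ⊢
    rw [translation_eq_self_of_mem_chains (h.subset_fixedPoints hP) y_mem, y_P hP]

theorem exists_isEquivariantlyCarried_zero (h : IsEquivariantCarrier Γ β P ρ) :
    ∃ Ψ : (List V →₀ K) →ₗ[K] (List W →₀ K), IsEquivariantlyCarried G Γ Z 0 Ψ ∧
      ∀ l ∈ Z ∩ P, l.length ≤ 0 → Ψ (single l 1) = single (l.map ρ) 1 := by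
  have apply_nil : mapChain K ρ (single [] 1) = single [] 1 := mapChain_single ρ [] 1
  refine ⟨mapChain K ρ, ⟨?_, ?_, ?_⟩, fun l _ _ => mapChain_single ρ l 1⟩
  all_goals
    intro l _ hl
    obtain rfl := List.length_eq_zero_iff.1 (Nat.le_zero.1 hl)
  · exact apply_nil ▸ single_mem_chains (h.map_mem h.nil_mem) rfl 1
  · rw [boundary_mapChain, boundary_single, one_smul]
  · intro g
    rw [apply_nil, translation_single]
    exact apply_nil

/-- The equivariant acyclic carrier theorem, relative to the simplices of `P`. -/
theorem exists_isEquivariantlyCarried (h : IsEquivariantCarrier Γ β P ρ) (hZ : SublistClosed Z)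
    (hZG : ∀ (g : G), ∀ l ∈ Z, g +ᵥ l ∈ Z)
    (hfill : ∀ l ∈ Z, l ≠ [] → ∀ m, AcyclicAt K (Γ l) m) (n : ℕ) :
    ∃ Ψ : (List V →₀ K) →ₗ[K] (List W →₀ K), IsEquivariantlyCarried G Γ Z n Ψ ∧
      ∀ l ∈ Z ∩ P, l.length ≤ n → Ψ (single l 1) = single (l.map ρ) 1 := by
  classical
  induction n with
  | zero => exact h.exists_isEquivariantlyCarried_zero
  | succ n ih =>
    obtain ⟨Ψ, hΨ, hΨP⟩ := ih
    obtain ⟨Y, hY⟩ := h.exists_equivariant_filling hZ hZG (fun l hl hl' => hfill l hl hl' n) hΨ hΨP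
    let Ψ' : (List V →₀ K) →ₗ[K] (List W →₀ K) :=
      linearCombination K fun l => if l.length ≤ n then Ψ (single l 1) else Y l
    have eq_of_le {l : List V} (hl : l.length ≤ n) : Ψ' (single l 1) = Ψ (single l 1) := by
      simp [Ψ', hl]
    have eq_of_eq {l : List V} (hl : l.length = n + 1) : Ψ' (single l 1) = Y l := by
      simp [Ψ', hl]
    have eq_faces {l : List V} (hl : l.length ≤ n + 1) :
        Ψ' (listBoundary l) = Ψ (listBoundary l) := by
      rcases hk : l.length with _ | k
      · simp [List.length_eq_zero_iff.1 hk, listBoundary]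
      · exact eq_of_mem_chains (fun l' _ hl' => eq_of_le (by omega)) (listBoundary_mem_chains l hk)
    refine ⟨Ψ', ⟨fun {l} hl hln => ?_, fun {l} hl hln => ?_, fun {l} hl hln g => ?_⟩,
      fun l hl hln => ?_⟩
    all_goals rcases Nat.le_succ_iff.1 hln with hlt | heq
    · exact eq_of_le hlt ▸ hΨ.mem hl hlt
    · exact eq_of_eq heq ▸ heq ▸ (hY l hl heq).1
    · rw [eq_faces hln, eq_of_le hlt, hΨ.boundary hl hlt]
    · rw [eq_faces hln, eq_of_eq heq, (hY l hl heq).2.1]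
    · rw [eq_of_le hlt, eq_of_le ((length_list_vadd g l).trans_le hlt), hΨ.vadd hl hlt]
    · rw [eq_of_eq heq, eq_of_eq ((length_list_vadd g l).trans heq), (hY l hl heq).2.2.1]
    · rw [eq_of_le hlt, hΨP l hl hlt]
    · rw [eq_of_eq heq, (hY l hl.1 heq).2.2.2 hl.2]

end IsEquivariantCarrier
end AcyclicCarrier

section Flags

variable {J L K : Type*} {e : ℕ}

/-- The indices `(j, k)`, whose labels `k` are translated by `K`, and `e` indices fixed by `K`. -/
abbrev LabelledIndex (J K : Type*) (e : ℕ) := (J × K) ⊕ Fin e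

/-- The vertices of the target complex: the sets of labelled indices, and the fixed indices. -/
abbrev FlagVertex (L K : Type*) (e : ℕ) := Finset (L × K) ⊕ Fin e

/-- The order of the vertices along a flag: decreasing sets, then decreasing fixed indices. -/
def FlagVertex.Precedes : FlagVertex L K e → FlagVertex L K e → Prop
  | Sum.inl A, Sum.inl B => B ⊂ A
  | Sum.inl _, Sum.inr _ => True
  | Sum.inr _, Sum.inl _ => False
  | Sum.inr i, Sum.inr j => j < i

theorem FlagVertex.Precedes.asymm :
    ∀ {u v : FlagVertex L K e}, u.Precedes v → ¬ v.Precedes u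
  | Sum.inl _, Sum.inl _, h, h' => (h.trans h').ne rfl
  | Sum.inl _, Sum.inr _, _, h' => h'
  | Sum.inr _, Sum.inl _, h, _ => h
  | Sum.inr _, Sum.inr _, h, h' => lt_asymm h h'

/-- A strictly decreasing height, with values below `e` at the fixed indices only. -/
def FlagVertex.height : FlagVertex L K e → ℕ
  | Sum.inl A => e + A.card
  | Sum.inr i => i

theorem FlagVertex.Precedes.height_lt :
    ∀ {u v : FlagVertex L K e}, u.Precedes v → v.height < u.height
  | Sum.inl _, Sum.inl _, h => Nat.add_lt_add_left (Finset.card_lt_card h) e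
  | Sum.inl _, Sum.inr i, _ => i.2.trans_le (Nat.le_add_right ..)
  | Sum.inr _, Sum.inr _, h => h

/-- The flags of nonempty sets, followed by decreasing lists of fixed indices. -/
def flags (L K : Type*) (e : ℕ) : Set (List (FlagVertex L K e)) :=
  {l | l.Pairwise FlagVertex.Precedes ∧ Sum.inl ∅ ∉ l}

theorem nil_mem_flags : [] ∈ flags L K e := ⟨.nil, by simp⟩

theorem sublistClosed_flags : SublistClosed (flags L K e) :=
  fun _ _ h ⟨hl, hne⟩ => ⟨hl.sublist h, fun h' => hne (h.subset h')⟩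

theorem map_inr_mem_flags_iff {s : List (Fin e)} :
    s.map Sum.inr ∈ flags L K e ↔ s.Pairwise (· > ·) := by
  simp only [flags, Set.mem_ofPred_eq, List.pairwise_map, List.mem_map, reduceCtorEq, and_false,
    exists_false, not_false_eq_true, and_true]
  rfl

theorem card_le_of_forall_exists_notMem [Fintype L] [Fintype K] {A : Finset (L × K)}
    (hA : ∀ i, ∃ a, (i, a) ∉ A) : A.card ≤ Fintype.card L * (Fintype.card K - 1) := by
  classical
  choose a ha using hA
  have missing : (Finset.univ.image fun i => (i, a i)) ⊆ Aᶜ := by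
    simpa [Finset.subset_iff] using ha
  have card_missing := Finset.card_le_card missing
  rw [Finset.card_image_of_injective _ fun i j h => (Prod.mk.inj h).1, Finset.card_compl,
    Finset.card_univ, Fintype.card_prod] at card_missing
  have := A.card_le_univ
  rw [Fintype.card_prod] at this
  rw [Nat.mul_sub, mul_one]
  omega

theorem exists_eq_map_inr {A B : Type*} {l : List (A ⊕ B)} (h : ∀ a, Sum.inl a ∉ l) :
    ∃ s : List B, l = s.map Sum.inr := by
  refine ⟨l.filterMap Sum.getRight?, ?_⟩
  induction l with
  | nil => rfl
  | cons v l ih =>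
    rcases v with a | b
    · exact absurd (List.mem_cons_self ..) (h a)
    · simpa using ih fun a ha => h a (List.mem_cons_of_mem _ ha)

variable [AddGroup K]

instance labelledIndexAddAction : AddAction K (LabelledIndex J K e) where
  vadd g := Sum.map (fun a => (a.1, g + a.2)) id
  zero_vadd := by rintro (⟨j, h⟩ | i) <;> simp [HVAdd.hVAdd]
  add_vadd g h := by rintro (⟨j, k⟩ | i) <;> simp [HVAdd.hVAdd, ← add_assoc]

@[simp] theorem vadd_inl (g : K) (j : J) (h : K) :
    g +ᵥ (Sum.inl (j, h) : LabelledIndex J K e) = Sum.inl (j, g + h) := rfl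

@[simp] theorem vadd_inr (g : K) (i : Fin e) :
    g +ᵥ (Sum.inr i : LabelledIndex J K e) = Sum.inr i := rfl

variable (L) in
/-- Translation of the labels, as a permutation of `L × K`. -/
def translateLabels (g : K) : L × K ≃ L × K := Equiv.prodCongrRight fun _ => Equiv.addLeft g

theorem translateLabels_apply (g : K) (a : L × K) : translateLabels L g a = (a.1, g + a.2) := rfl

instance flagVertexAddAction : AddAction K (FlagVertex L K e) where
  vadd g := Sum.map (Finset.map (translateLabels L g).toEmbedding) id
  zero_vadd := by
    rintro (A | i)
    · refine congrArg Sum.inl (Eq.trans (congrArg A.map ?_) Finset.map_refl)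
      ext a <;> simp [translateLabels_apply]
    · rfl
  add_vadd g h := by
    rintro (A | i)
    · refine congrArg Sum.inl ?_
      rw [Finset.map_map]
      congr 1
      ext a <;> simp [translateLabels_apply, add_assoc]
    · rfl

theorem vadd_flagVertex_inl (g : K) (A : Finset (L × K)) :
    g +ᵥ (Sum.inl A : FlagVertex L K e) =
      Sum.inl (A.map (translateLabels L g).toEmbedding) := rfl

@[simp] theorem vadd_flagVertex_inr (g : K) (i : Fin e) :
    g +ᵥ (Sum.inr i : FlagVertex L K e) = Sum.inr i := rfl

theorem map_inr_mem_fixedPoints_labelledIndex (s : List (Fin e)) :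
    s.map Sum.inr ∈ AddAction.fixedPoints K (List (LabelledIndex J K e)) := by
  simp only [mem_fixedPoints_list, List.forall_mem_map]
  exact fun _ _ _ => rfl

theorem map_inr_mem_fixedPoints_flagVertex (s : List (Fin e)) :
    s.map Sum.inr ∈ AddAction.fixedPoints K (List (FlagVertex L K e)) := by
  simp only [mem_fixedPoints_list, List.forall_mem_map]
  exact fun _ _ _ => rfl

/-- The label of the first labelled index of a list. -/
def firstLabel : List (LabelledIndex J K e) → K
  | [] => 0
  | Sum.inl a :: _ => a.2
  | Sum.inr _ :: l => firstLabel l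

theorem firstLabel_vadd {l : List (LabelledIndex J K e)} {a : J × K} (ha : Sum.inl a ∈ l) (g : K) :
    firstLabel (g +ᵥ l) = g + firstLabel l := by
  induction l with
  | nil => simp at ha
  | cons v l ih =>
    rcases v with b | i
    · rfl
    · exact ih (by simpa using ha)

theorem FlagVertex.Precedes.vadd (g : K) :
    ∀ {u v : FlagVertex L K e}, u.Precedes v → (g +ᵥ u).Precedes (g +ᵥ v)
  | Sum.inl _, Sum.inl _, h => Finset.map_ssubset_map.2 h
  | Sum.inl _, Sum.inr _, _ => trivial
  | Sum.inr _, Sum.inr _, h => h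

theorem vadd_mem_flags (g : K) {l : List (FlagVertex L K e)} (hl : l ∈ flags L K e) :
    g +ᵥ l ∈ flags L K e := by
  refine ⟨hl.1.map _ fun _ _ => FlagVertex.Precedes.vadd g, fun hmem => ?_⟩
  obtain ⟨A | i, hA, h⟩ := List.mem_map.1 hmem
  · rw [vadd_flagVertex_inl, Sum.inl.injEq, Finset.map_eq_empty] at h
    exact hl.2 (h ▸ hA)
  · simp at h

variable (L K e) in
/-- The join of the complex of flags of sets that contain no full row `{i} × K` with the boundary
of the simplex on `Fin e`. -/
def properFlags : SubAddAction K (List (FlagVertex L K e)) where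
  carrier := {l | l ∈ flags L K e ∧ (∀ A, Sum.inl A ∈ l → ∀ i, ∃ a, (i, a) ∉ A) ∧
    ∃ i, Sum.inr i ∉ l}
  vadd_mem' g l := by
    rintro ⟨hl, hrow, i, hi⟩
    refine ⟨vadd_mem_flags g hl, fun A hA j => ?_, i, fun h => ?_⟩
    · obtain ⟨B | i, hB, h⟩ := List.mem_map.1 hA
      · obtain ⟨a, ha⟩ := hrow B hB j
        rw [vadd_flagVertex_inl, Sum.inl.injEq] at h
        refine ⟨g + a, ?_⟩
        rwa [← h, ← translateLabels_apply g (j, a), ← Equiv.toEmbedding_apply, Finset.mem_map']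
      · simp at h
    · obtain ⟨B | j, hj, h⟩ := List.mem_map.1 h
      · simp [vadd_flagVertex_inl] at h
      · rw [vadd_flagVertex_inr] at h
        exact hi (h ▸ hj)

theorem mem_properFlags {l : List (FlagVertex L K e)} : l ∈ properFlags L K e ↔
    l ∈ flags L K e ∧ (∀ A, Sum.inl A ∈ l → ∀ i, ∃ a, (i, a) ∉ A) ∧ ∃ i, Sum.inr i ∉ l := Iff.rfl

theorem sublistClosed_properFlags :
    SublistClosed (properFlags L K e : Set (List (FlagVertex L K e))) :=
  fun _ _ h ⟨hl, hrow, i, hi⟩ =>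
    ⟨sublistClosed_flags h hl, fun A hA => hrow A (h.subset hA), i, fun h' => hi (h.subset h')⟩

theorem map_inr_mem_properFlags_iff {s : List (Fin e)} :
    s.map Sum.inr ∈ properFlags L K e ↔ s.Pairwise (· > ·) ∧ ∃ i, i ∉ s := by
  simp [mem_properFlags, map_inr_mem_flags_iff]

theorem exists_eq_map_inr_of_mem_fixedPoints {l : List (FlagVertex L K e)}
    (hl : l ∈ properFlags L K e) (hfix : l ∈ AddAction.fixedPoints K (List (FlagVertex L K e))) :
    ∃ s : List (Fin e), l = s.map Sum.inr := by
  refine exists_eq_map_inr fun A hA => ?_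
  obtain rfl | ⟨⟨i, a⟩, ha⟩ := A.eq_empty_or_nonempty
  · exact hl.1.2 hA
  · obtain ⟨b, hb⟩ := hl.2.1 A hA i
    have fixed := mem_fixedPoints_list.1 hfix _ hA (b - a)
    rw [vadd_flagVertex_inl, Sum.inl.injEq] at fixed
    refine hb (fixed ▸ Finset.mem_map.2 ⟨(i, a), ha, ?_⟩)
    simp [translateLabels_apply]

section Length

variable [Fintype L] [Fintype K]

theorem length_le_of_mem_properFlags {l : List (FlagVertex L K e)} (hl : l ∈ properFlags L K e) :
    l.length ≤ (e - 1) + Fintype.card L * (Fintype.card K - 1) := by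
  obtain ⟨⟨hflag, hne⟩, hrow, i, hi⟩ := hl
  set M := Fintype.card L * (Fintype.card K - 1)
  have nodup : (l.map FlagVertex.height).Nodup :=
    List.pairwise_map.2 (hflag.imp fun h => h.height_lt.ne')
  have heights : (l.map FlagVertex.height).toFinset ⊆
      ((Finset.range (e + M + 1)).erase e).erase i := by
    intro n hn
    obtain ⟨A | j, hv, rfl⟩ := List.mem_map.1 (List.mem_toFinset.1 hn)
    · have card_le := card_le_of_forall_exists_notMem (hrow A hv)
      have card_pos : 0 < A.card :=
        Finset.card_pos.2 (Finset.nonempty_iff_ne_empty.2 fun h => hne (h ▸ hv))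
      simp only [FlagVertex.height, Finset.mem_erase, Finset.mem_range]
      omega
    · have ne_missing : (j : ℕ) ≠ i := fun h => hi (Fin.ext h ▸ hv)
      simp only [FlagVertex.height, Finset.mem_erase, Finset.mem_range]
      omega
  have card_le := Finset.card_le_card heights
  rw [List.toFinset_card_of_nodup nodup, List.length_map,
    Finset.card_erase_of_mem (by simp; omega), Finset.card_erase_of_mem (by simp),
    Finset.card_range] at card_le
  omega

end Length

theorem finite_properFlags [Finite L] [Finite K] : Finite (properFlags L K e) := by
  have := Fintype.ofFinite L
  have := Fintype.ofFinite K
  exact ((List.finite_length_le (FlagVertex L K e) _).subset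
    fun _ => length_le_of_mem_properFlags).to_subtype

variable (L K) in
/-- The proper face of the simplex on `Fin e` with vertices `s`, as a flag. -/
noncomputable def boundaryFlag (s : {s : Finset (Fin e) // s ≠ Finset.univ}) :
    properFlags L K e :=
  ⟨(s.1.sort (· ≥ ·)).map Sum.inr, map_inr_mem_properFlags_iff.2 ⟨s.1.sortedGT_sort.pairwise, by
    simpa [Finset.eq_univ_iff_forall] using s.2⟩⟩

theorem boundaryFlag_injective : Function.Injective (boundaryFlag L K (e := e)) := by
  intro s t h
  have sort_eq : s.1.sort (· ≥ ·) = t.1.sort (· ≥ ·) :=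
    List.map_injective_iff.2 Sum.inr_injective (congrArg Subtype.val h)
  simpa [Subtype.ext_iff] using congrArg List.toFinset sort_eq

theorem boundaryFlag_mem_fixedPoints (s : {s : Finset (Fin e) // s ≠ Finset.univ}) :
    boundaryFlag L K s ∈ AddAction.fixedPoints K (properFlags L K e) := by
  rw [mem_fixedPoints_subAddAction]
  exact map_inr_mem_fixedPoints_flagVertex _

theorem mem_range_boundaryFlag {l : properFlags L K e}
    (hl : l ∈ AddAction.fixedPoints K (properFlags L K e)) : l ∈ Set.range (boundaryFlag L K) := by
  rw [mem_fixedPoints_subAddAction] at hl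
  obtain ⟨l, hproper⟩ := l
  obtain ⟨s, rfl⟩ := exists_eq_map_inr_of_mem_fixedPoints hproper hl
  obtain ⟨hs, i, hi⟩ := map_inr_mem_properFlags_iff.1 hproper
  refine ⟨⟨s.toFinset, fun h => hi (List.mem_toFinset.1 (h ▸ Finset.mem_univ i))⟩,
    Subtype.ext (congrArg (List.map Sum.inr) ?_)⟩
  exact ((Finset.sort_perm_toList _ _).trans (List.toFinset_toList (hs.imp fun h => h.ne')))
    |>.eq_of_pairwise' (Finset.pairwise_sort _ _) (hs.imp fun h => h.le)

/-- The fixed proper flags form the boundary of a simplex, a sphere of reduced Euler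
characteristic `± 1`. -/
theorem sum_fixedPoints_properFlags {R : Type*} [CommRing R] (he : 0 < e)
    [Fintype (properFlags L K e)] :
    ∑ l, (AddAction.fixedPoints K (properFlags L K e)).indicator
      (fun l => (-1 : R) ^ l.1.length) l = -(-1) ^ e := by
  classical
  have : NeZero e := ⟨he.ne'⟩
  have alternating : ∑ s : Finset (Fin e), (-1 : R) ^ s.card = 0 := by
    simpa using congrArg (Int.cast : ℤ → R)
      ((Finset.sum_powerset_neg_one_pow_card (x := (Finset.univ : Finset (Fin e)))).trans
        (if_neg Finset.univ_nonempty.ne_empty))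
  rw [← Finset.sum_erase_add _ _ (Finset.mem_univ Finset.univ), Finset.card_univ, Fintype.card_fin,
    ← Finset.filter_ne' , ← Finset.sum_subtype_eq_sum_filter] at alternating
  rw [← eq_neg_of_add_eq_zero_left alternating, Finset.subtype_univ]
  refine (Finset.sum_of_injOn (boundaryFlag L K) boundaryFlag_injective.injOn (by simp)
    (fun l _ hl => Set.indicator_of_notMem (fun hfix => hl ?_) _) fun s _ => ?_).symm
  · simpa using mem_range_boundaryFlag hfix
  · rw [Set.indicator_of_mem (boundaryFlag_mem_fixedPoints s)]
    simp [boundaryFlag]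

end Flags

section PositivityCarrier

variable {V L K R : Type*} {e : ℕ}

/-- The face of the standard simplex spanned by the vertices in a list. -/
def face [Fintype V] (l : List V) : Set (V → ℝ) := {q ∈ stdSimplex ℝ V | ∀ v ∉ l, q v = 0}

variable [Fintype V] {x : V → LabelledIndex L K e → ℝ} {l l' : List V} {q : V → ℝ}

theorem face_mono (h : l' ⊆ l) : face l' ⊆ face l :=
  fun _ hq => ⟨hq.1, fun v hv => hq.2 v (mt (@h v) hv)⟩

theorem convex_face : Convex ℝ (face l) := by
  refine (convex_stdSimplex ℝ V).inter fun q hq q' hq' s t _ _ _ v hv => ?_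
  simp [hq v hv, hq' v hv]

theorem face_nonempty (hl : l ≠ []) : (face l).Nonempty := by
  classical
  obtain ⟨v, hv⟩ := List.exists_mem_of_ne_nil l hl
  refine ⟨Pi.single v 1, single_mem_stdSimplex ℝ v, fun u hu => Pi.single_eq_of_ne ?_ 1⟩
  rintro rfl
  exact hu hv

/-- The linear extension to `ℝ^V` of the value at `a` of the vectors `x v`. -/
def combination (x : V → LabelledIndex L K e → ℝ) (a : LabelledIndex L K e) : (V → ℝ) →ₗ[ℝ] ℝ :=
  Fintype.linearCombination ℝ fun v => x v a

theorem combination_apply (a : LabelledIndex L K e) : combination x a q = ∑ v, q v * x v a := rfl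

theorem sum_combination_eq_zero {ι : Type*} [Fintype ι] {f : ι → LabelledIndex L K e}
    (h : ∀ v, ∑ i, x v (f i) = 0) : ∑ i, combination x (f i) q = 0 := by
  simp only [combination_apply]
  rw [Finset.sum_comm]
  simp [← Finset.mul_sum, h]

theorem combination_eq_zero_of_mem_face {a : LabelledIndex L K e} (hq : q ∈ face l)
    (h : ∀ v ∈ l, x v a = 0) : combination x a q = 0 := by
  refine Finset.sum_eq_zero fun v _ => ?_
  by_cases hv : v ∈ l
  · simp [h v hv]
  · simp [hq.2 v hv]

/-- Where all coordinates in a set of labelled indices, or a fixed coordinate, are positive. -/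
def positiveCell (x : V → LabelledIndex L K e → ℝ) : FlagVertex L K e → Set (V → ℝ)
  | Sum.inl A => {q | ∀ a ∈ A, 0 < combination x (Sum.inl a) q}
  | Sum.inr i => {q | 0 < combination x (Sum.inr i) q}

theorem isOpenPolyhedron_positiveCell (u : FlagVertex L K e) :
    IsOpenPolyhedron (fun a => (combination x a).toAffineMap) (positiveCell x u) := by
  classical
  rcases u with A | i
  · refine ⟨A.image fun a => (Sum.inl a, 1), Finset.forall_mem_image.2 fun _ _ => one_ne_zero, ?_⟩
    rw [Finset.set_biInter_finset_image]
    ext q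
    simp [positiveCell, signCell, sign_eq_one_iff]
  · refine ⟨{(Sum.inr i, 1)}, by simp, ?_⟩
    ext q
    simp [positiveCell, signCell, sign_eq_one_iff]

variable [Ring R] {m : ℕ}

/-- A first vertex among those whose cells contain `q` is an apex of the complex. -/
theorem acyclicAt_nerve_singleton_of_precedes {u : FlagVertex L K e} (hu : q ∈ positiveCell x u)
    (hne : u ≠ Sum.inl ∅)
    (h : ∀ v, q ∈ positiveCell x v → v ≠ Sum.inl ∅ → v ≠ u → u.Precedes v) :
    AcyclicAt R (nerve (flags L K e) (positiveCell x) {q}) m := by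
  refine acyclicAt_of_cons_mem_of_notMem u ?_
  rintro l ⟨⟨hflag, hl⟩, q, rfl, hq⟩
  have precedes : ∀ v ∈ l, v ≠ u → u.Precedes v :=
    fun v hv => h v (hq v hv) fun h => hl (h ▸ hv)
  by_cases hul : u ∈ l
  · right
    obtain ⟨v, l, rfl⟩ := List.exists_cons_of_ne_nil (List.ne_nil_of_mem hul)
    rw [List.pairwise_cons] at hflag
    obtain rfl : v = u := by
      by_contra hvu
      have hul := (List.mem_cons.1 hul).resolve_left (Ne.symm hvu)
      exact (hflag.1 u hul).asymm (precedes v (by simp) hvu)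
    exact ⟨l, rfl, fun hvl => (hflag.1 v hvl).asymm (hflag.1 v hvl)⟩
  · refine .inl ⟨hul, ⟨List.pairwise_cons.2 ⟨fun v hv => precedes v hv ?_, hflag⟩, ?_⟩, q, rfl, ?_⟩
    · rintro rfl
      exact hul hv
    · simpa [hl] using hne.symm
    · exact List.forall_mem_cons.2 ⟨hu, hq⟩

theorem acyclicAt_nerve_singleton [Finite L] [Finite K] (hq : ∃ a, 0 < combination x a q) :
    AcyclicAt R (nerve (flags L K e) (positiveCell x) {q}) m := by
  classical
  have := Fintype.ofFinite (L × K)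
  set A : Finset (L × K) := {a | 0 < combination x (Sum.inl a) q}
  by_cases hA : A.Nonempty
  · refine acyclicAt_nerve_singleton_of_precedes (u := Sum.inl A) ?_ ?_ ?_
    · exact fun a ha => (Finset.mem_filter.1 ha).2
    · simpa using hA.ne_empty
    · rintro (B | j) hB - hne
      · exact Finset.ssubset_iff_subset_ne.2
          ⟨fun b hb => by simpa [A] using hB b hb, fun h => hne (h ▸ rfl)⟩
      · trivial
  · have nonpos : ∀ a, ¬ 0 < combination x (Sum.inl a) q :=
      fun a ha => hA ⟨a, by simpa [A] using ha⟩
    obtain ⟨i₀, hi₀⟩ : ∃ i, 0 < combination x (Sum.inr i) q := by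
      obtain ⟨a | i, h⟩ := hq
      · exact absurd h (nonpos a)
      · exact ⟨i, h⟩
    obtain ⟨i, hi⟩ := (Set.toFinite {i : Fin e | 0 < combination x (Sum.inr i) q}).exists_maximal
      ⟨i₀, hi₀⟩
    refine acyclicAt_nerve_singleton_of_precedes (u := Sum.inr i) hi.prop (by simp) ?_
    rintro (B | j) hB hne hji
    · obtain ⟨b, hb⟩ := Finset.nonempty_iff_ne_empty.2 fun h => hne (h ▸ rfl)
      exact absurd (hB b hb) (nonpos b)
    · exact lt_of_le_of_ne (not_lt.1 fun h => hi.not_prop_of_gt h hB) fun h => hji (h ▸ rfl)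

/-- The carrier of the map that sends a point to the coordinates that are positive there. The empty
list is added because the empty face has no points. -/
def positivityCarrier (x : V → LabelledIndex L K e → ℝ) (l : List V) :
    Set (List (FlagVertex L K e)) :=
  insert [] (nerve (flags L K e) (positiveCell x) (face l))

theorem acyclicAt_positivityCarrier [Finite L] [Finite K] (hl : l ≠ [])
    (h : ∀ q ∈ face l, ∃ a, 0 < combination x a q) : AcyclicAt R (positivityCarrier x l) m := by
  have := Fintype.ofFinite (LabelledIndex L K e)
  rw [positivityCarrier, Set.insert_eq_of_mem (nil_mem_nerve nil_mem_flags (face_nonempty hl))]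
  exact acyclicAt_nerve_of_forall_mem sublistClosed_flags nil_mem_flags
    isOpenPolyhedron_positiveCell Finset.univ convex_face (face_nonempty hl) (by simp)
    fun q hq _ _ => acyclicAt_nerve_singleton (h q hq)

end PositivityCarrier

section IndexTheorem

variable {J L K : Type*} [AddGroup K] [Fintype J] [Fintype K] {e : ℕ}
  {x : LabelledIndex J K e → LabelledIndex L K e → ℝ} {l : List (LabelledIndex J K e)}
  {s : List (Fin e)}

/-- The vectors `x v ∈ ℝ^(L × K) × ℝ^e` are equivariant in `v`, have zero row sums, and send the
fixed indices to the vertices of a simplex around the origin of the second factor. -/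
structure IsTestMatrix (x : LabelledIndex J K e → LabelledIndex L K e → ℝ) : Prop where
  vadd (g : K) (v : LabelledIndex J K e) (a : LabelledIndex L K e) : x (g +ᵥ v) (g +ᵥ a) = x v a
  sum_row (v : LabelledIndex J K e) (i : L) : ∑ k, x v (Sum.inl (i, k)) = 0
  sum_fixed (v : LabelledIndex J K e) : ∑ i, x v (Sum.inr i) = 0
  inr_inl (j : Fin e) (a : L × K) : x (Sum.inr j) (Sum.inl a) = 0
  inr_inr (i j : Fin e) : x (Sum.inr j) (Sum.inr i) = (if i = j then (e : ℝ) else 0) - 1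

/-- The proper faces of the simplex of fixed indices. -/
def fixedFaces (J K : Type*) (e : ℕ) : Set (List (LabelledIndex J K e)) :=
  List.map Sum.inr '' {s | s.Pairwise (· > ·) ∧ ∃ i, i ∉ s}

omit [AddGroup K] [Fintype J] [Fintype K] in
theorem sublistClosed_fixedFaces : SublistClosed (fixedFaces J K e) := by
  rintro _ _ h ⟨s, ⟨hs, i, hi⟩, rfl⟩
  obtain ⟨s', hs', rfl⟩ := List.sublist_map_iff.1 h
  exact ⟨s', ⟨hs.sublist hs', i, fun h => hi (hs'.subset h)⟩, rfl⟩

/-- The vertex map that keeps the fixed indices and sends all else to an arbitrary vertex `b`. -/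
def keepFixed {A B : Type*} (b : B ⊕ Fin e) : A ⊕ Fin e → B ⊕ Fin e := Sum.elim (fun _ => b) .inr

omit [AddGroup K] [Fintype J] [Fintype K] in
theorem map_keepFixed_map_inr {A B : Type*} (b : B ⊕ Fin e) (s : List (Fin e)) :
    (s.map (Sum.inr : Fin e → A ⊕ Fin e)).map (keepFixed b) = s.map Sum.inr :=
  List.map_map

namespace IsTestMatrix

theorem positivityCarrier_subset [Nonempty K] (hx : IsTestMatrix x) (he : 0 < e) :
    positivityCarrier x l ⊆ properFlags L K e := by
  have : NeZero e := ⟨he.ne'⟩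
  rintro k (rfl | ⟨hk, q, -, hq⟩)
  · exact ⟨nil_mem_flags, by simp, 0, by simp⟩
  refine ⟨hk, fun A hA i => ?_, ?_⟩
  · by_contra! full
    exact (Finset.sum_pos (fun k _ => hq _ hA _ (full k)) Finset.univ_nonempty).ne'
      (sum_combination_eq_zero fun v => hx.sum_row v i)
  · by_contra! full
    exact (Finset.sum_pos (fun i _ => hq _ (full i)) Finset.univ_nonempty).ne'
      (sum_combination_eq_zero hx.sum_fixed)

theorem combination_translate (hx : IsTestMatrix x) (g : K) (a : LabelledIndex L K e)
    (q : LabelledIndex J K e → ℝ) :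
    combination x (g +ᵥ a) (fun v => q (-g +ᵥ v)) = combination x a q := by
  simp only [combination_apply]
  rw [← Equiv.sum_comp (AddAction.toPerm g)]
  refine Finset.sum_congr rfl fun v _ => ?_
  rw [AddAction.toPerm_apply, neg_vadd_vadd, hx.vadd]

theorem vadd_mem_positivityCarrier (hx : IsTestMatrix x) (g : K)
    {k : List (FlagVertex L K e)} (hk : k ∈ positivityCarrier x l) :
    g +ᵥ k ∈ positivityCarrier x (g +ᵥ l) := by
  obtain rfl | ⟨hk, q, ⟨hq, hql⟩, hqk⟩ := hk
  · exact .inl rfl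
  refine .inr ⟨vadd_mem_flags g hk, fun v => q (-g +ᵥ v), ⟨⟨fun v => hq.1 _, ?_⟩, ?_⟩, ?_⟩
  · exact (Equiv.sum_comp (AddAction.toPerm (-g)) q).trans hq.2
  · intro v hv
    refine hql _ fun h => hv ?_
    rw [← vadd_neg_vadd g v, list_vadd_eq_map]
    exact List.mem_map_of_mem h
  · rw [list_vadd_eq_map, List.forall_mem_map]
    rintro (A | i) hu
    · intro a ha
      obtain ⟨b, hb, rfl⟩ := Finset.mem_map.1 ha
      exact (hqk _ hu b hb).trans_eq (hx.combination_translate g (Sum.inl b) q).symm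
    · exact lt_of_lt_of_eq (hqk _ hu) (hx.combination_translate g (Sum.inr i) q).symm

theorem positivityCarrier_map_inr_subset (hx : IsTestMatrix x) :
    positivityCarrier x (s.map Sum.inr) ⊆ AddAction.fixedPoints K (List (FlagVertex L K e)) := by
  rintro k (rfl | ⟨hk, q, hq, hqk⟩)
  · exact map_inr_mem_fixedPoints_flagVertex []
  obtain ⟨t, rfl⟩ := exists_eq_map_inr fun A hA => by
    obtain ⟨a, ha⟩ := Finset.nonempty_iff_ne_empty.2 fun h => hk.2 (h ▸ hA)
    refine (hqk _ hA a ha).ne' (combination_eq_zero_of_mem_face hq ?_)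
    simp [hx.inr_inl]
  exact map_inr_mem_fixedPoints_flagVertex t

/-- At the barycentre of a proper face of the fixed simplex the coordinates of its vertices are
positive. -/
theorem map_inr_mem_positivityCarrier (hx : IsTestMatrix x) (hs : s.Pairwise (· > ·)) {i₀ : Fin e}
    (hi₀ : i₀ ∉ s) : s.map Sum.inr ∈ positivityCarrier x (s.map Sum.inr) := by
  have card_eq : s.toFinset.card = s.length :=
    List.toFinset_card_of_nodup (hs.imp fun h => h.ne')
  have length_lt : s.length < e := by
    simpa [card_eq] using Finset.card_lt_univ_of_notMem (mt List.mem_toFinset.1 hi₀)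
  rcases s.eq_nil_or_concat with rfl | hne
  · exact .inl rfl
  have length_pos : (0 : ℝ) < s.length := by
    obtain ⟨t, i, rfl⟩ := hne
    simp only [List.concat_eq_append, List.length_append, List.length_cons, Nat.cast_add]
    positivity
  have sum_weights (f : Fin e → ℝ) :
      ∑ j, (if j ∈ s then (s.length : ℝ)⁻¹ else 0) * f j =
        (s.length : ℝ)⁻¹ * ∑ j ∈ s.toFinset, f j := by
    simp only [Finset.mul_sum, ite_mul, zero_mul, ← Finset.sum_filter]
    congr 1
    ext j
    simp
  refine .inr ⟨map_inr_mem_flags_iff.2 hs,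
    Sum.elim (fun _ => 0) fun j => if j ∈ s then (s.length : ℝ)⁻¹ else 0, ⟨⟨?_, ?_⟩, ?_⟩, ?_⟩
  · rintro (_ | j)
    · exact le_rfl
    · dsimp only [Sum.elim_inr]
      positivity
  · simpa [card_eq, length_pos.ne'] using sum_weights fun _ => 1
  · rintro (v | j) hv
    · rfl
    · exact if_neg fun h => hv (List.mem_map_of_mem h)
  · intro v hv
    obtain ⟨i, hi, rfl⟩ := List.mem_map.1 hv
    change 0 < combination _ _ _
    simp only [combination_apply, Fintype.sum_sum_type, Sum.elim_inl, Sum.elim_inr, zero_mul,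
      Finset.sum_const_zero, zero_add, hx.inr_inr]
    rw [sum_weights, Finset.sum_sub_distrib, Finset.sum_ite_eq, if_pos (List.mem_toFinset.2 hi),
      Finset.sum_const, card_eq, nsmul_one]
    have : (s.length : ℝ) < e := by exact_mod_cast length_lt
    exact mul_pos (inv_pos.2 length_pos) (sub_pos.2 this)

theorem isEquivariantCarrier (hx : IsTestMatrix x) (he : 0 < e) :
    IsEquivariantCarrier (positivityCarrier x) firstLabel (fixedFaces J K e)
      (keepFixed (Sum.inl ∅)) where
  mono h := Set.insert_subset_insert (nerve_mono (face_mono h.subset))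
  vadd_mem g _ _ hk := hx.vadd_mem_positivityCarrier g hk
  free_or_fixed l := by
    by_cases h : ∃ a, Sum.inl a ∈ l
    · exact .inl (firstLabel_vadd h.choose_spec)
    · obtain ⟨s, rfl⟩ := exists_eq_map_inr (not_exists.1 h)
      exact .inr ⟨map_inr_mem_fixedPoints_labelledIndex s, hx.positivityCarrier_map_inr_subset⟩
  sublistClosed := sublistClosed_fixedFaces
  nil_mem := ⟨[], ⟨.nil, ⟨0, he⟩, by simp⟩, rfl⟩
  map_mem := by
    rintro _ ⟨s, ⟨hs, i, hi⟩, rfl⟩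
    rw [map_keepFixed_map_inr]
    exact hx.map_inr_mem_positivityCarrier hs hi
  mem_fixedPoints := by
    rintro _ ⟨s, -, rfl⟩
    exact map_inr_mem_fixedPoints_labelledIndex s
  subset_fixedPoints := by
    rintro _ ⟨s, -, rfl⟩
    exact hx.positivityCarrier_map_inr_subset

end IsTestMatrix

/-- The index theorem: the points of a highly acyclic equivariant complex that contains the boundary
of the fixed simplex cannot all have a positive coordinate, since the positivity pattern would then
be an equivariant map to a complex of smaller dimension. -/
theorem IsTestMatrix.exists_combination_nonpos {J L K : Type*} [Fintype J] [Fintype L] [Field K]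
    [Fintype K] {x : LabelledIndex J K e → LabelledIndex L K e → ℝ} (hx : IsTestMatrix x)
    (he : 0 < e) {Z : Set (List (LabelledIndex J K e))} (hZ : SublistClosed Z)
    (hZK : ∀ (g : K), ∀ l ∈ Z, g +ᵥ l ∈ Z) (hfixed : fixedFaces J K e ⊆ Z)
    (hacyclic : ∀ m ≤ (e - 1) + Fintype.card L * (Fintype.card K - 1), AcyclicAt K Z m) :
    ∃ l ∈ Z, ∃ q ∈ face l, ∀ a, combination x a q ≤ 0 := by
  by_contra! hpos
  set D := (e - 1) + Fintype.card L * (Fintype.card K - 1)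
  obtain ⟨Ψ, hΨ, hΨfixed⟩ := (hx.isEquivariantCarrier he).exists_isEquivariantlyCarried (K := K) hZ
    hZK (fun l hl hne m => acyclicAt_positivityCarrier hne (hpos l hl)) (D + 1)
  have := finite_properFlags (L := L) (K := K) (e := e)
  have := Fintype.ofFinite (properFlags L K e)
  have fixed_mem {l} (hl : l ∈ properFlags L K e)
      (hf : l ∈ AddAction.fixedPoints K (List (FlagVertex L K e))) :
      ∃ s : List (Fin e), l = s.map Sum.inr ∧ s.map Sum.inr ∈ fixedFaces J K e := by
    obtain ⟨s, rfl⟩ := exists_eq_map_inr_of_mem_fixedPoints hl hf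
    exact ⟨s, rfl, s, map_inr_mem_properFlags_iff.1 hl, rfl⟩
  have hsection : IsFixedSection (properFlags L K e) Z Ψ (keepFixed (Sum.inr ⟨0, he⟩)) := by
    constructor <;> intro l hl hf <;> obtain ⟨s, rfl, hs⟩ := fixed_mem hl hf <;>
      rw [map_keepFixed_map_inr]
    · exact hfixed hs
    · exact map_inr_mem_fixedPoints_labelledIndex s
    · have length_le := length_le_of_mem_properFlags hl
      rw [hΨfixed _ ⟨hfixed hs, hs⟩ (by simp at length_le ⊢; omega), map_keepFixed_map_inr]
  obtain ⟨p, hp⟩ := CharP.exists K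
  have : Fact p.Prime := ⟨CharP.char_is_prime K p⟩
  let := ZMod.algebra K p
  have euler := sum_fixedPoints_eq_zero_of_isEquivariantlyCarried (Module.finBasis (ZMod p) K)
    sublistClosed_properFlags (fun l => length_le_of_mem_properFlags) hZK hacyclic
    (fun l _ => hx.positivityCarrier_subset he) hΨ hsection
  rw [sum_fixedPoints_properFlags he] at euler
  exact neg_ne_zero.2 (pow_ne_zero e (neg_ne_zero.2 one_ne_zero)) euler

end IndexTheorem

section GenericPosition

open Module

variable {I E : Type*} [AddCommGroup E] [Module ℝ E] {ℓ : I → E →ᵃ[ℝ] ℝ} {s : Finset I}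
  {y : I → ℝ} {γ : ℝ} {x z : E}

/-- General position of the hyperplanes `ℓ i = 0`. -/
structure InGenericPosition (ℓ : I → E →ᵃ[ℝ] ℝ) : Prop where
  existsUnique_zero (s : Finset I) (hs : s.card = finrank ℝ E) : ∃! x, ∀ i ∈ s, ℓ i x = 0
  not_exists_zero (s : Finset I) (hs : s.card = finrank ℝ E + 1) : ¬∃ x, ∀ i ∈ s, ℓ i x = 0

/-- The vertices of the simplex bounded by the hyperplanes `ℓ i = 0`, `i ∈ s`. -/
def simplexVertices (ℓ : I → E →ᵃ[ℝ] ℝ) (s : Finset I) : Set E :=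
  {x | ∃ i ∈ s, ∀ j ∈ s, j ≠ i → ℓ j x = 0}

/-- The affine functions `ℓ i`, `i ∈ s`, satisfy the relation `∑ i ∈ s, y i • ℓ i = γ`. -/
def AffineRelation (ℓ : I → E →ᵃ[ℝ] ℝ) (s : Finset I) (y : I → ℝ) (γ : ℝ) : Prop :=
  ∀ z, ∑ i ∈ s, y i * ℓ i z = γ

theorem apply_add_sub (f : E →ᵃ[ℝ] ℝ) (x z z' : E) : f (x + (z - z')) = f x + (f z - f z') := by
  rw [add_comm, ← vadd_eq_add, f.map_vadd, ← vsub_eq_sub, f.linearMap_vsub, vsub_eq_sub,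
    vadd_eq_add, add_comm]

theorem apply_sum_smul (f : E →ᵃ[ℝ] ℝ) {μ : I → ℝ} (hμ : ∑ i ∈ s, μ i = 1)
    (X : I → E) : f (∑ i ∈ s, μ i • X i) = ∑ i ∈ s, μ i * f (X i) := by
  rw [← s.affineCombination_eq_linear_combination X μ hμ, s.map_affineCombination X μ hμ f]
  exact s.affineCombination_eq_linear_combination _ μ hμ

theorem affineRelation_of_sum_linear_eq_zero (h : ∑ i ∈ s, y i • (ℓ i).linear = 0) :
    AffineRelation ℓ s y (∑ i ∈ s, y i * ℓ i 0) := by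
  intro z
  have linear_eq_zero := LinearMap.congr_fun h z
  simp only [LinearMap.sum_apply, LinearMap.smul_apply, smul_eq_mul, LinearMap.zero_apply]
    at linear_eq_zero
  rw [← zero_add (∑ i ∈ s, y i * ℓ i 0), ← linear_eq_zero, ← Finset.sum_add_distrib]
  refine Finset.sum_congr rfl fun i _ => ?_
  rw [← mul_add, ← vadd_eq_add, ← (ℓ i).map_vadd 0 z, vadd_eq_add, add_zero]

theorem AffineRelation.mul_apply_eq (h : AffineRelation ℓ s y γ) {j : I} (hj : j ∈ s)
    (hx : ∀ i ∈ s, i ≠ j → ℓ i x = 0) : y j * ℓ j x = γ := by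
  rw [← h x, Finset.sum_eq_single_of_mem j hj fun i hi hij => by rw [hx i hi hij, mul_zero]]

namespace InGenericPosition

theorem eq_of_forall_eq (h : InGenericPosition ℓ) (hs : s.card = finrank ℝ E)
    (hxz : ∀ i ∈ s, ℓ i x = ℓ i z) : x = z := by
  obtain ⟨x₀, hx₀, unique⟩ := h.existsUnique_zero s hs
  have translate_eq : x₀ + (x - z) = x₀ := unique _ fun i hi => by
    rw [apply_add_sub, hx₀ i hi, hxz i hi, sub_self, add_zero]
  rwa [add_eq_left, sub_eq_zero] at translate_eq

theorem exists_vertices (h : InGenericPosition ℓ) (hs : s.card = finrank ℝ E + 1) :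
    ∃ X : I → E, ∀ i ∈ s, ∀ j ∈ s, j ≠ i → ℓ j (X i) = 0 := by
  classical
  have exists_vertex (i) (hi : i ∈ s) : ∃ x, ∀ j ∈ s, j ≠ i → ℓ j x = 0 := by
    obtain ⟨x, hx, -⟩ := h.existsUnique_zero (s.erase i) (by simp [hi, hs])
    exact ⟨x, fun j hj hji => hx j (Finset.mem_erase.2 ⟨hji, hj⟩)⟩
  choose! X hX using exists_vertex
  exact ⟨X, hX⟩

theorem card_eq_of_affineRelation [Fintype I] (h : InGenericPosition ℓ)
    (hI : finrank ℝ E ≤ Fintype.card I) (hs : s.card ≤ finrank ℝ E + 1)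
    (hy : AffineRelation ℓ s y γ) (hγ : γ ≠ 0) : s.card = finrank ℝ E + 1 := by
  by_contra hne
  obtain ⟨s', hss', hs'⟩ := Finset.exists_superset_card_eq (s := s) (by omega) hI
  obtain ⟨x, hx, -⟩ := h.existsUnique_zero s' hs'
  exact hγ <| (hy x).symm.trans <| Finset.sum_eq_zero fun i hi => by rw [hx i (hss' hi), mul_zero]

/-- The numbers `y i * ℓ i z / γ` are the barycentric coordinates of `z`. -/
theorem mem_convexHull_simplexVertices (h : InGenericPosition ℓ) (hs : s.card = finrank ℝ E + 1)
    (hy : AffineRelation ℓ s y γ) (hz : ∀ i ∈ s, 0 < y i * ℓ i z) :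
    z ∈ convexHull ℝ (simplexVertices ℓ s) := by
  classical
  obtain ⟨X, hX⟩ := h.exists_vertices hs
  obtain ⟨i₀, hi₀⟩ : s.Nonempty := Finset.card_pos.1 (by omega)
  have hγ : 0 < γ := hy z ▸ Finset.sum_pos hz ⟨i₀, hi₀⟩
  have sum_coord : ∑ i ∈ s, y i * ℓ i z / γ = 1 := by
    rw [← Finset.sum_div, hy z, div_self hγ.ne']
  have apply_combination (j) (hj : j ∈ s) :
      ℓ j (∑ i ∈ s, (y i * ℓ i z / γ) • X i) = ℓ j z := by
    have hyj : y j ≠ 0 := left_ne_zero_of_mul (hz j hj).ne'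
    rw [apply_sum_smul _ sum_coord,
      Finset.sum_eq_single_of_mem j hj fun i hi hij => by rw [hX i hi j hj hij.symm, mul_zero],
      ← hy.mul_apply_eq hj fun i hi hij => hX j hj i hi hij]
    have : ℓ j (X j) ≠ 0 := by
      refine right_ne_zero_of_mul (a := y j) ?_
      rw [hy.mul_apply_eq hj fun i hi hij => hX j hj i hi hij]
      exact hγ.ne'
    field_simp
  rw [← h.eq_of_forall_eq (s := s.erase i₀) (by simp [hi₀, hs]) fun j hj =>
    apply_combination j (Finset.mem_of_mem_erase hj)]
  exact (convex_convexHull ℝ _).sum_mem (fun i hi => (div_pos (hz i hi) hγ).le) sum_coord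
    fun i hi => subset_convexHull ℝ _ ⟨i, hi, hX i hi⟩

theorem exists_affineRelation [FiniteDimensional ℝ E] (h : InGenericPosition ℓ)
    (hs : s.card = finrank ℝ E + 1) : ∃ y γ, γ ≠ 0 ∧ AffineRelation ℓ s y γ := by
  classical
  obtain ⟨X, hX⟩ := h.exists_vertices hs
  have linear_dependent : ¬LinearIndepOn ℝ (fun i => (ℓ i).linear) (s : Set I) := fun hli => by
    have card_le : Fintype.card s ≤ finrank ℝ (Dual ℝ E) := hli.fintype_card_le_finrank
    rw [Fintype.card_coe, hs, Subspace.dual_finrank_eq] at card_le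
    omega
  simp only [linearIndepOn_finset_iff, not_forall] at linear_dependent
  obtain ⟨y, hy, i, hi, hyi⟩ := linear_dependent
  have relation := affineRelation_of_sum_linear_eq_zero hy
  refine ⟨y, _, ?_, relation⟩
  rw [← relation.mul_apply_eq hi (hX i hi)]
  refine mul_ne_zero hyi fun hXi => h.not_exists_zero s hs ⟨X i, fun j hj => ?_⟩
  rcases eq_or_ne j i with rfl | hji
  exacts [hXi, hX i hi j hj hji]

theorem exists_ne_zero_forall_linear_eq_zero [FiniteDimensional ℝ E] (hs : s.card < finrank ℝ E) :
    ∃ u : E, u ≠ 0 ∧ ∀ i ∈ s, (ℓ i).linear u = 0 := by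
  have ker_ne_bot : (LinearMap.pi fun i : s => (ℓ i).linear).ker ≠ ⊥ :=
    LinearMap.ker_ne_bot_of_finrank_lt (by simpa using hs)
  obtain ⟨u, hu, hu0⟩ := Submodule.exists_mem_ne_zero_of_ne_bot ker_ne_bot
  exact ⟨u, hu0, fun i hi => congrFun (LinearMap.mem_ker.1 hu) ⟨i, hi⟩⟩

theorem cutsProperly [Fintype I] [FiniteDimensional ℝ E] (h : InGenericPosition ℓ)
    (hI : finrank ℝ E ≤ Fintype.card I) : CutsProperly ℓ Finset.univ Set.univ := by
  classical
  intro T _ k _ hkT q _ hqT hqk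
  have card_le : (insert k T).card ≤ finrank ℝ E := by
    by_contra! hlt
    obtain ⟨s, hsT, hs⟩ := Finset.exists_subset_card_eq hlt
    exact h.not_exists_zero s hs ⟨q, fun i hi =>
      (Finset.forall_mem_insert k T _).2 ⟨hqk, hqT⟩ i (hsT hi)⟩
  obtain ⟨s, hTs, hs⟩ := Finset.exists_superset_card_eq card_le hI
  rw [Finset.insert_subset_iff] at hTs
  obtain ⟨u, hu0, hu⟩ := exists_ne_zero_forall_linear_eq_zero (ℓ := ℓ) (s := s.erase k)
    (by rw [← hs]; exact Finset.card_erase_lt_of_mem hTs.1)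
  have apply_add (i) (hi : i ∈ s.erase k) : ℓ i (u +ᵥ q) = ℓ i q := by
    rw [(ℓ i).map_vadd, hu i hi, zero_vadd]
  refine ⟨u +ᵥ q, Set.mem_univ _, fun i hi => ?_, fun hk => hu0 ?_⟩
  · rw [apply_add i (Finset.mem_erase.2 ⟨fun hik => hkT (hik ▸ hi), hTs.2 hi⟩), hqT i hi]
  · refine add_eq_right (b := q).1 (h.eq_of_forall_eq hs fun i hi => ?_)
    rcases eq_or_ne i k with rfl | hik
    · exact hk.trans hqk.symm
    · exact apply_add i (Finset.mem_erase.2 ⟨hik, hi⟩)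

variable [TopologicalSpace E]

theorem mem_interior_convexHull_simplexVertices (h : InGenericPosition ℓ)
    (hℓ : ∀ i, Continuous (ℓ i)) (hs : s.card = finrank ℝ E + 1) (hy : AffineRelation ℓ s y γ)
    (hz : ∀ i ∈ s, 0 < y i * ℓ i z) : z ∈ interior (convexHull ℝ (simplexVertices ℓ s)) := by
  refine mem_interior.2 ⟨⋂ i ∈ s, {z | 0 < y i * ℓ i z}, fun z hz => ?_, ?_, by simpa using hz⟩
  · exact h.mem_convexHull_simplexVertices hs hy (by simpa using hz)
  · exact isOpen_biInter_finset fun i _ =>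
      isOpen_lt continuous_const (continuous_const.mul (hℓ i))

theorem nonempty_interior_convexHull_simplexVertices [FiniteDimensional ℝ E]
    (h : InGenericPosition ℓ) (hℓ : ∀ i, Continuous (ℓ i)) (hs : s.card = finrank ℝ E + 1) :
    (interior (convexHull ℝ (simplexVertices ℓ s))).Nonempty := by
  obtain ⟨X, hX⟩ := h.exists_vertices hs
  obtain ⟨y, γ, hγ, hy⟩ := h.exists_affineRelation hs
  have hcard : (0 : ℝ) < s.card := by rw [hs]; positivity
  have sum_weights : ∑ _i ∈ s, (s.card : ℝ)⁻¹ = 1 := by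
    rw [Finset.sum_const, nsmul_eq_mul, mul_inv_cancel₀ hcard.ne']
  have scaled_relation : AffineRelation ℓ s (fun i => γ * y i) (γ * γ) := fun z => by
    simp only [mul_assoc, ← Finset.mul_sum, hy z]
  refine ⟨∑ i ∈ s, (s.card : ℝ)⁻¹ • X i,
    h.mem_interior_convexHull_simplexVertices hℓ hs scaled_relation fun j hj => ?_⟩
  rw [apply_sum_smul _ sum_weights,
    Finset.sum_eq_single_of_mem j hj fun i hi hij => by rw [hX i hi j hj hij.symm, mul_zero],
    mul_left_comm, scaled_relation.mul_apply_eq hj (hX j hj)]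
  have := mul_self_pos.2 hγ
  positivity

end InGenericPosition

theorem CutsProperly.map {κ : Type*} {ℓ : κ → E →ᵃ[ℝ] ℝ} {φ : I ↪ κ} {s : Finset I} {Q : Set E}
    (h : CutsProperly (fun i => ℓ (φ i)) s Q) : CutsProperly ℓ (s.map φ) Q := by
  intro T hT k hk hkT q hq hqT hqk
  obtain ⟨T, hTs, rfl⟩ := Finset.subset_map_iff.1 hT
  obtain ⟨i, hi, rfl⟩ := Finset.mem_map.1 hk
  simp only [Finset.forall_mem_map, Finset.mem_map'] at hqT hkT ⊢
  exact h T hTs i hi hkT q hq hqT hqk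

end GenericPosition

section Slack

variable {I E : Type*} [NormedAddCommGroup E] [InnerProductSpace ℝ E] {n q : E} {b : ℝ}

/-- The affine function that is positive on the half-space of all `q` with `⟪q, n⟫ < b`. -/
noncomputable def slack (n : E) (b : ℝ) : E →ᵃ[ℝ] ℝ :=
  AffineMap.const ℝ E b - ((innerₗ E).flip n).toAffineMap

theorem slack_apply : slack n b q = b - ⟪q, n⟫_ℝ := rfl

theorem continuous_slack : Continuous (slack n b) :=
  continuous_const.sub (continuous_id.inner continuous_const)

theorem slack_smul (σ : ℝ) : slack (σ • n) (σ * b) q = σ * slack n b q := by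
  rw [slack_apply, slack_apply, real_inner_smul_right, mul_sub]

theorem affineRelation_slack {s : Finset I} {y : I → ℝ} {n : I → E} {b : I → ℝ}
    (h : ∑ i ∈ s, y i • n i = 0) :
    AffineRelation (fun i => slack (n i) (b i)) s y (∑ i ∈ s, y i * b i) := by
  intro q
  have inner_eq_zero : ∑ i ∈ s, y i * ⟪q, n i⟫_ℝ = 0 := by
    simp only [← real_inner_smul_right, ← inner_sum, h, inner_zero_right]
  simp only [slack_apply, mul_sub, Finset.sum_sub_distrib, inner_eq_zero, sub_zero]

end Slack

section TestMatrix

variable {J K : Type*} {d : ℕ} {y : J → EuclideanSpace ℝ (Fin d)}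

/-- The outer normals of a simplex in `ℝ^d`, whose facets are moved out to infinity. -/
noncomputable def infinityNormal (i : Fin (d + 1)) : EuclideanSpace ℝ (Fin d) :=
  WithLp.toLp 2 fun k => (if k.castSucc = i then (d + 1 : ℝ) else 0) - 1

/-- The normals of the labelled half-spaces and of the half-spaces at infinity. -/
noncomputable def normal (y : J → EuclideanSpace ℝ (Fin d)) :
    LabelledIndex J K (d + 1) → EuclideanSpace ℝ (Fin d) :=
  Sum.elim (fun u => y u.1) infinityNormal

theorem normal_vadd [AddGroup K] (g : K) (u : LabelledIndex J K (d + 1)) :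
    normal y (g +ᵥ u) = normal y u := by
  rcases u with u | u <;> rfl

theorem snoc_infinityNormal (i j : Fin (d + 1)) :
    (Fin.snoc (infinityNormal j) (-∑ k, infinityNormal j k) : Fin (d + 1) → ℝ) i =
      (if i = j then (d + 1 : ℝ) else 0) - 1 := by
  cases i using Fin.lastCases with
  | cast k => rw [Fin.snoc_castSucc, infinityNormal]
  | last =>
    rw [Fin.snoc_last]
    cases j using Fin.lastCases with
    | cast k => simp [infinityNormal, (Fin.castSucc_lt_last k).ne']
    | last => simp [infinityNormal, (Fin.castSucc_lt_last _).ne]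

variable [Fintype K] [DecidableEq K]

/-- The test matrix of the vectors `y j`. A point `(j, g)` contributes `(1, y j)` to column `g` of
the rows indexed by `Option (Fin d)`, shifted to have zero row sums; its fixed coordinates are
those of `y j`, completed by a last one making their sum zero. -/
noncomputable def testMatrix (y : J → EuclideanSpace ℝ (Fin d)) :
    LabelledIndex J K (d + 1) → LabelledIndex (Option (Fin d)) K (d + 1) → ℝ
  | Sum.inl (j, g), Sum.inl (l, a) =>
      l.elim 1 (y j) * ((if a = g then (Fintype.card K : ℝ) else 0) - 1)
  | Sum.inr _, Sum.inl _ => 0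
  | u, Sum.inr i => (Fin.snoc (normal y u) (-∑ k, normal y u k) : Fin (d + 1) → ℝ) i

theorem testMatrix_inr (u : LabelledIndex J K (d + 1)) (i : Fin (d + 1)) :
    testMatrix y u (Sum.inr i) =
      (Fin.snoc (normal y u) (-∑ k, normal y u k) : Fin (d + 1) → ℝ) i := by
  rcases u with u | u <;> rfl

theorem isTestMatrix_testMatrix [AddGroup K] :
    IsTestMatrix (testMatrix y : LabelledIndex J K (d + 1) → _) where
  vadd g u a := by
    rcases a with ⟨l, a⟩ | i
    · rcases u with ⟨j, h⟩ | _
      · simp [testMatrix]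
      · rfl
    · rw [vadd_inr, testMatrix_inr, testMatrix_inr, normal_vadd]
  sum_row u l := by
    rcases u with ⟨j, g⟩ | _
    · simp only [testMatrix]
      rw [← Finset.mul_sum, Finset.sum_sub_distrib, Finset.sum_ite_eq']
      simp
    · exact Finset.sum_const_zero
  sum_fixed u := by
    simp only [testMatrix_inr]
    rw [Fin.sum_univ_castSucc]
    simp
  inr_inl _ _ := rfl
  inr_inr i j := by
    rw [testMatrix_inr]
    exact (snoc_infinityNormal i j).trans (by push_cast; rfl)

variable [Fintype J] {w : LabelledIndex J K (d + 1) → ℝ}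

theorem sum_smul_normal_eq_zero (hw : ∀ i, combination (testMatrix y) (Sum.inr i) w = 0) :
    ∑ u, w u • normal y u = 0 := by
  ext k
  simpa [combination_apply, testMatrix_inr] using hw k.castSucc

theorem card_mul_sum_label {l : Option (Fin d)} {a : K}
    (hw : combination (testMatrix y) (Sum.inl (l, a)) w = 0) :
    Fintype.card K * ∑ j, w (Sum.inl (j, a)) * l.elim 1 (y j) =
      ∑ u : J × K, w (Sum.inl u) * l.elim 1 (y u.1) := by
  rw [combination_apply, Fintype.sum_sum_type] at hw
  simp only [testMatrix, mul_zero, Finset.sum_const_zero, add_zero, mul_sub, mul_ite, mul_one,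
    Finset.sum_sub_distrib, sub_eq_zero] at hw
  rw [← hw, Fintype.sum_prod_type, Finset.mul_sum]
  refine Finset.sum_congr rfl fun j _ => ?_
  rw [Finset.sum_ite_eq, if_pos (Finset.mem_univ a), mul_comm, mul_assoc]

theorem card_mul_sum_eq_one (hw : ∀ a, combination (testMatrix y) a w = 0)
    (hsimplex : w ∈ stdSimplex ℝ _) (hinf : ∀ i, w (Sum.inr i) = 0) (a : K) :
    Fintype.card K * ∑ j, w (Sum.inl (j, a)) = 1 := by
  have sum_eq_one := hsimplex.2
  rw [Fintype.sum_sum_type] at sum_eq_one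
  simp only [hinf, Finset.sum_const_zero, add_zero] at sum_eq_one
  simpa [sum_eq_one] using card_mul_sum_label (hw (Sum.inl (none, a)))

theorem sum_smul_eq_zero [Nonempty K] (hw : ∀ a, combination (testMatrix y) a w = 0)
    (hinf : ∀ i, w (Sum.inr i) = 0) (a : K) : ∑ j, w (Sum.inl (j, a)) • y j = 0 := by
  ext k
  have sum_normal := congr($(sum_smul_normal_eq_zero fun i => hw (Sum.inr i)) k)
  rw [Fintype.sum_sum_type] at sum_normal
  have sum_label := card_mul_sum_label (hw (Sum.inl (some k, a)))
  simp only [normal, Sum.elim_inl, Sum.elim_inr, hinf, zero_smul, Finset.sum_const_zero,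
    add_zero, WithLp.ofLp_sum, WithLp.ofLp_smul, Finset.sum_apply, Pi.smul_apply, smul_eq_mul,
    WithLp.ofLp_zero, Pi.zero_apply] at sum_normal
  simpa [sum_normal] using sum_label

end TestMatrix

section Configurations

variable {J K : Type*} {d : ℕ}

theorem IsTestMatrix.combination_eq_zero {L : Type*} [Fintype J] [Fintype K] [AddGroup K] {e : ℕ}
    {x : LabelledIndex J K e → LabelledIndex L K e → ℝ} {w : LabelledIndex J K e → ℝ}
    (hx : IsTestMatrix x) (hw : ∀ a, combination x a w ≤ 0) (a : LabelledIndex L K e) :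
    combination x a w = 0 := by
  rcases a with ⟨l, a⟩ | i
  · exact (Finset.sum_eq_zero_iff_of_nonpos fun a _ => hw (Sum.inl (l, a))).1
      (sum_combination_eq_zero fun v => hx.sum_row v l) a (Finset.mem_univ a)
  · exact (Finset.sum_eq_zero_iff_of_nonpos fun i _ => hw (Sum.inr i)).1
      (sum_combination_eq_zero hx.sum_fixed) i (Finset.mem_univ i)

/-- The constants of the labelled half-spaces, and of the half-spaces at distance `C`. -/
def offset (b : J → ℝ) (C : ℝ) : LabelledIndex J K (d + 1) → ℝ :=
  Sum.elim (fun u => b u.1) fun _ => -C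

/-- The half-space of an index, made of the points `q` with `⟪q, normal y u⟫ < offset b C u`. -/
def halfSpace (y : J → EuclideanSpace ℝ (Fin d)) (b : J → ℝ) (C : ℝ)
    (u : LabelledIndex J K (d + 1)) : Set (EuclideanSpace ℝ (Fin d)) :=
  {q | 0 < slack (normal y u) (offset b C u) q}

/-- The complex of lists of half-spaces with a common point, in which any two distinct labelled
half-spaces are related by `r`. -/
def configurations (y : J → EuclideanSpace ℝ (Fin d)) (b : J → ℝ) (r : J × K → J × K → Prop)
    (C : ℝ) : Set (List (LabelledIndex J K (d + 1))) :=
  nerve {l | {u | Sum.inl u ∈ l}.Pairwise r} (halfSpace y b C) Set.univ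

variable {y : J → EuclideanSpace ℝ (Fin d)} {b : J → ℝ} {r : J × K → J × K → Prop} {C : ℝ}
  {l : List (LabelledIndex J K (d + 1))}

theorem isOpenPolyhedron_halfSpace (u : LabelledIndex J K (d + 1)) :
    IsOpenPolyhedron (fun u : LabelledIndex J K (d + 1) => slack (normal y u) (offset b C u))
      (halfSpace y b C u) := by
  refine ⟨{(u, 1)}, by simp, ?_⟩
  ext q
  simp [halfSpace, signCell, sign_eq_one_iff]

theorem sublistClosed_pairwise :
    SublistClosed {l : List (LabelledIndex J K (d + 1)) | {u | Sum.inl u ∈ l}.Pairwise r} :=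
  fun _ _ h hl => hl.mono fun _ hu => h.subset hu

theorem sublistClosed_configurations : SublistClosed (configurations y b r C) :=
  sublistClosed_nerve sublistClosed_pairwise

theorem vadd_mem_configurations [AddGroup K]
    (hr : ∀ g j j' h h', r (j, h) (j', h') → r (j, g + h) (j', g + h')) (g : K)
    (hl : l ∈ configurations y b r C) : g +ᵥ l ∈ configurations y b r C := by
  obtain ⟨hl, q, -, hq⟩ := hl
  rw [list_vadd_eq_map]
  refine ⟨?_, q, Set.mem_univ q, List.forall_mem_map.2 fun u hu => ?_⟩
  · rintro u hu w hw huw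
    obtain ⟨⟨j, h⟩ | _, hjh, ⟨⟩⟩ := List.mem_map.1 hu
    obtain ⟨⟨j', h'⟩ | _, hjh', ⟨⟩⟩ := List.mem_map.1 hw
    exact hr g j j' h h' (hl hjh hjh' (by rintro ⟨⟩; exact huw rfl))
  · have offset_vadd : offset b C (g +ᵥ u) = offset b C u := by rcases u with u | u <;> rfl
    rw [halfSpace, normal_vadd, offset_vadd]
    exact hq u hu

theorem exists_forall_ne_slack_infinityNormal_pos (C : ℝ) (i₀ : Fin (d + 1)) :
    ∃ q, ∀ i ≠ i₀, 0 < slack (infinityNormal i) (-C) q := by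
  have slack_eq (i : Fin (d + 1)) (q : EuclideanSpace ℝ (Fin d)) :
      slack (infinityNormal i) (-C) q =
        ∑ k, q k - (d + 1) * (∑ k, if k.castSucc = i then q k else 0) - C := by
    simp only [slack_apply, PiLp.inner_apply, infinityNormal, RCLike.inner_apply, conj_trivial,
      sub_mul, one_mul, ite_mul, zero_mul, Finset.sum_sub_distrib, Finset.mul_sum, mul_ite,
      mul_zero]
    ring
  cases i₀ using Fin.lastCases with
  | last =>
    refine ⟨WithLp.toLp 2 fun _ => -(C + 1), fun i hi => ?_⟩
    obtain ⟨k, rfl⟩ := Fin.exists_castSucc_eq.2 hi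
    rw [slack_eq]
    simp only [Finset.sum_const, Finset.card_univ, Fintype.card_fin, nsmul_eq_mul,
      Fin.castSucc_inj, Finset.sum_ite_eq', Finset.mem_univ, if_true]
    linarith
  | cast k =>
    refine ⟨WithLp.toLp 2 (Pi.single k (C + 1)), fun i hi => ?_⟩
    have sum_eq_zero :
        ∑ k', (if k'.castSucc = i then (Pi.single k (C + 1) : Fin d → ℝ) k' else 0) = 0 := by
      refine Finset.sum_eq_zero fun k' _ => ite_eq_right_iff.2 fun hk' => Pi.single_eq_of_ne ?_ _
      exact fun h => hi (h ▸ hk'.symm)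
    rw [slack_eq, sum_eq_zero]
    simp

theorem fixedFaces_subset_configurations : fixedFaces J K (d + 1) ⊆ configurations y b r C := by
  rintro _ ⟨s, ⟨-, i₀, hi₀⟩, rfl⟩
  obtain ⟨q, hq⟩ := exists_forall_ne_slack_infinityNormal_pos C i₀
  refine ⟨fun u hu => by simp at hu, q, Set.mem_univ q, List.forall_mem_map.2 fun i hi => ?_⟩
  exact hq i fun h => hi₀ (h ▸ hi)

/-- Sets of labelled half-spaces with a common point, pairwise related by `r`. -/
def Admissible (y : J → EuclideanSpace ℝ (Fin d)) (b : J → ℝ) (r : J × K → J × K → Prop)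
    (σ : Set (J × K)) : Prop :=
  σ.Pairwise r ∧ ∃ q, ∀ u ∈ σ, 0 < slack (y u.1) (b u.1) q

theorem Admissible.mono {σ τ : Set (J × K)} (h : σ ⊆ τ) (hτ : Admissible y b r τ) :
    Admissible y b r σ :=
  ⟨hτ.1.mono h, hτ.2.imp fun _ hq u hu => hq u (h hu)⟩

variable [Fintype J] [Fintype K] [DecidableEq K]

/-- The zeros of the test map, over configurations with half-spaces at any distance. -/
def zeros (y : J → EuclideanSpace ℝ (Fin d)) (b : J → ℝ) (r : J × K → J × K → Prop) :
    Set (LabelledIndex J K (d + 1) → ℝ) :=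
  {w ∈ stdSimplex ℝ _ | (∀ a, combination (testMatrix y) a w = 0) ∧
    Admissible y b r {u | w (Sum.inl u) ≠ 0}}

theorem isCompact_zeros : IsCompact (zeros y b r) := by
  have eq_biUnion : zeros y b r = ⋃ σ ∈ {σ | Admissible y b r σ},
      (stdSimplex ℝ _ ∩ {w | (∀ a, combination (testMatrix y) a w = 0) ∧
        ∀ u ∉ σ, w (Sum.inl u) = 0}) := by
    ext w
    simp only [Set.mem_iUnion]
    refine ⟨fun ⟨h, hw, hσ⟩ => ⟨_, hσ, h, hw, fun _ hu => not_not.1 hu⟩, ?_⟩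
    rintro ⟨σ, hσ, h, hw, hwσ⟩
    exact ⟨h, hw, hσ.mono fun u hu => by_contra fun huσ => hu (hwσ u huσ)⟩
  rw [eq_biUnion]
  refine (Set.toFinite _).isCompact_biUnion fun σ _ => (isCompact_stdSimplex ℝ _).inter_right ?_
  simp only [Set.ofPred_and, Set.ofPred_forall]
  refine (isClosed_iInter fun a => isClosed_eq ?_ continuous_const).inter
    (isClosed_iInter fun u => isClosed_iInter fun _ => isClosed_eq (by fun_prop) continuous_const)
  exact (combination (testMatrix y) a).continuous_of_finiteDimensional

variable {K : Type*} [Fintype K] [DecidableEq K] [Field K] {r : J × K → J × K → Prop}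

theorem exists_mem_zeros_sum_mul_offset_nonneg
    (hr : ∀ g j j' h h', r (j, h) (j', h') → r (j, g + h) (j', g + h'))
    (hacyclic : ∀ m < (d + 1) * Fintype.card K, AcyclicAt K (configurations y b r C) m) :
    ∃ w ∈ zeros y b r, 0 ≤ ∑ u, w u * offset b C u := by
  obtain ⟨l, ⟨hl, q, -, hq⟩, w, hwl, hw⟩ := (isTestMatrix_testMatrix (y := y)
    (K := K)).exists_combination_nonpos d.succ_pos sublistClosed_configurations
    (fun g l => vadd_mem_configurations hr g) fixedFaces_subset_configurations fun m hm => by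
      refine hacyclic m (hm.trans_lt ?_)
      obtain ⟨n, hn⟩ := Nat.exists_eq_add_one.2 (Fintype.card_pos (α := K))
      simp only [hn, Fintype.card_option, Fintype.card_fin, Nat.add_sub_cancel]
      linarith
  have mem_of_ne_zero {u} (hu : w u ≠ 0) : u ∈ l := by_contra fun h => hu (hwl.2 u h)
  have hzero := isTestMatrix_testMatrix.combination_eq_zero hw
  refine ⟨w, ⟨hwl.1, hzero, hl.mono fun u => mem_of_ne_zero, q, fun u hu =>
    hq _ (mem_of_ne_zero hu)⟩, ?_⟩
  rw [← affineRelation_slack (sum_smul_normal_eq_zero fun i => hzero (Sum.inr i)) q]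
  refine Finset.sum_nonneg fun u _ => ?_
  by_cases hu : w u = 0
  · rw [hu, zero_mul]
  · exact mul_nonneg (hwl.1.1 u) (hq u (mem_of_ne_zero hu)).le

/-- As the half-spaces at infinity recede, the zeros they support would have pairing tending to
`-∞`; compactness then gives a zero that does not involve them. -/
theorem exists_mem_zeros_inr_eq_zero
    (hr : ∀ g j j' h h', r (j, h) (j', h') → r (j, g + h) (j', g + h'))
    (hacyclic : ∀ C, ∀ m < (d + 1) * Fintype.card K, AcyclicAt K (configurations y b r C) m) :
    ∃ w ∈ zeros y b r, ∀ i, w (Sum.inr i) = 0 := by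
  have hexists C := exists_mem_zeros_sum_mul_offset_nonneg hr (hacyclic C)
  obtain ⟨w₀, hw₀, hmin⟩ := isCompact_zeros.exists_isMinOn
    (f := fun w : LabelledIndex J K (d + 1) → ℝ => ∑ i, w (Sum.inr i))
    ((hexists 0).imp fun _ => And.left) (by fun_prop)
  have hnonneg (i : Fin (d + 1)) : 0 ≤ w₀ (Sum.inr i) := hw₀.1.1 _
  refine ⟨w₀, hw₀, ?_⟩
  by_contra! hne
  have mass_pos : 0 < ∑ i, w₀ (Sum.inr i) :=
    Finset.sum_pos' (fun i _ => hnonneg i) (hne.imp fun i hi =>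
      ⟨Finset.mem_univ i, (hnonneg i).lt_of_ne' hi⟩)
  set B := ∑ u : J × K, |b u.1|
  have B_nonneg : 0 ≤ B := Finset.sum_nonneg fun _ _ => abs_nonneg _
  obtain ⟨w, hw, hpairing⟩ := hexists ((B + 1) / ∑ i, w₀ (Sum.inr i))
  have mass_le : ∑ i, w₀ (Sum.inr i) ≤ ∑ i, w (Sum.inr i) := hmin hw
  have sum_le : ∑ u : J × K, w (Sum.inl u) * b u.1 ≤ B := Finset.sum_le_sum fun u _ =>
    (mul_le_mul_of_nonneg_left (le_abs_self _) (hw.1.1 _)).trans <|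
      mul_le_of_le_one_left (abs_nonneg _) (mem_Icc_of_mem_stdSimplex hw.1 _).2
  have le_mul : B + 1 ≤ (∑ i, w (Sum.inr i)) * ((B + 1) / ∑ i, w₀ (Sum.inr i)) := by
    rw [mul_div_left_comm]
    exact le_mul_of_one_le_right (by positivity) ((one_le_div mass_pos).2 mass_le)
  simp only [Fintype.sum_sum_type, offset, Sum.elim_inl, Sum.elim_inr, ← Finset.sum_mul] at hpairing
  linarith

end Configurations

section ColoredConfigurations

variable {I K C R : Type*} {d : ℕ}

/-- The normals `σ • v i` of the two sides of the hyperplanes; for the sign `σ = 0` the resulting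
half-space is empty. -/
def orientedNormal (v : I → EuclideanSpace ℝ (Fin d)) (j : I × SignType) :
    EuclideanSpace ℝ (Fin d) :=
  (j.2 : ℝ) • v j.1

/-- The constants of the half-spaces with normals `orientedNormal v`. -/
def orientedOffset (c : I → ℝ) (j : I × SignType) : ℝ := j.2 * c j.1

/-- Two labelled half-spaces may be chosen together if they come from different hyperplanes, and
from hyperplanes of different colors if they have the same label. -/
def Compatible (col : I → C) (u w : (I × SignType) × K) : Prop :=
  u.1.1 ≠ w.1.1 ∧ (col u.1.1 = col w.1.1 → u.2 ≠ w.2)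

variable {v : I → EuclideanSpace ℝ (Fin d)} {c : I → ℝ} {col : I → C} {B : ℝ}
  {q : EuclideanSpace ℝ (Fin d)}

theorem slack_oriented (j : I × SignType) :
    slack (orientedNormal v j) (orientedOffset c j) q = j.2 * slack (v j.1) (c j.1) q :=
  slack_smul _

theorem coe_signType_mul_pos_iff {σ : SignType} {x : ℝ} :
    0 < σ * x ↔ σ ≠ 0 ∧ SignType.sign x = σ := by
  cases σ <;> simp [sign_eq_one_iff, sign_eq_neg_one_iff]

theorem mem_halfSpace_oriented_iff {u : (I × SignType) × K} :
    q ∈ halfSpace (orientedNormal v) (orientedOffset c) B (Sum.inl u) ↔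
      u.1.2 ≠ 0 ∧ SignType.sign (slack (v u.1.1) (c u.1.1) q) = u.1.2 := by
  rw [← coe_signType_mul_pos_iff, ← slack_oriented]
  rfl

/-- The side containing `q` of the hyperplane `x.1`, with label `x.2`. -/
noncomputable def sideContaining (v : I → EuclideanSpace ℝ (Fin d)) (c : I → ℝ)
    (q : EuclideanSpace ℝ (Fin d)) (x : I × K) : (I × SignType) × K :=
  ((x.1, SignType.sign (slack (v x.1) (c x.1) q)), x.2)

theorem injective_sideContaining :
    Function.Injective (sideContaining v c q : I × K → (I × SignType) × K) :=
  fun _ _ h => Prod.ext (congrArg (fun u : (I × SignType) × K => u.1.1) h)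
    (congrArg (fun u : (I × SignType) × K => u.2) h)

theorem nerve_singleton_eq_map_chessboard [Fintype I] [Fintype K]
    (hq : ∀ i, q ∉ halfSpace (K := K) (orientedNormal v) (orientedOffset c) B (Sum.inr i)) :
    nerve {l | {u | Sum.inl u ∈ l}.Pairwise (Compatible col)}
        (halfSpace (K := K) (orientedNormal v) (orientedOffset c) B) {q} =
      List.map (fun x => Sum.inl (sideContaining v c q x)) ''
        chessboard col {i | slack (v i) (c i) q ≠ 0} (fun _ => Finset.univ) := by
  ext l
  constructor
  · rintro ⟨hl, q, rfl, hO⟩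
    obtain ⟨l, rfl⟩ : l ∈ Set.range (List.map fun x => Sum.inl (sideContaining v c q x)) := by
      rw [Set.range_list_map]
      rintro (⟨⟨i, σ⟩, g⟩ | i) hu
      · have sign_eq : SignType.sign (slack (v i) (c i) q) = σ :=
          (mem_halfSpace_oriented_iff.1 (hO _ hu)).2
        exact ⟨(i, g), by simp only [sideContaining, sign_eq]⟩
      · exact (hq i (hO _ hu)).elim
    refine ⟨l, ⟨fun x hx => ?_, fun x hx x' hx' h => by_contra fun hne => ?_⟩, rfl⟩
    · have hsign := (mem_halfSpace_oriented_iff.1 (hO _ (List.mem_map_of_mem hx))).1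
      simpa [sideContaining, sign_eq_zero_iff] using hsign
    · have compatible : Compatible col (sideContaining v c q x) (sideContaining v c q x') :=
        hl (List.mem_map.2 ⟨x, hx, rfl⟩) (List.mem_map.2 ⟨x', hx', rfl⟩)
          (injective_sideContaining.ne hne)
      exact h.elim compatible.1 fun h => compatible.2 h.1 h.2
  · rintro ⟨l, ⟨hl, hinj⟩, rfl⟩
    refine ⟨?_, q, rfl, List.forall_mem_map.2 fun x hx => mem_halfSpace_oriented_iff.2 ⟨?_, rfl⟩⟩
    · intro u hu u' hu' hne
      obtain ⟨x, hx, ⟨⟩⟩ := List.mem_map.1 hu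
      obtain ⟨x', hx', ⟨⟩⟩ := List.mem_map.1 hu'
      have not_conflict := mt (hinj x hx x' hx') fun h => hne (by rw [h])
      exact ⟨fun h => not_conflict (.inl h), fun h h' => not_conflict (.inr ⟨h, h'⟩)⟩
    · simpa [sideContaining, sign_eq_zero_iff] using (hl x hx).1

variable [Fintype I] [Fintype K] [Fintype C] [DecidableEq C] [Ring R] {m : ℕ}

theorem acyclicAt_nerve_halfSpace_singleton
    (hcol : ∀ k, 2 * Fintype.card K ≤ Finset.card {i | col i = k} + 1)
    (hm : m + Finset.card {i | slack (v i) (c i) q = 0} < Fintype.card C * Fintype.card K) :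
    AcyclicAt R (nerve {l | {u | Sum.inl u ∈ l}.Pairwise (Compatible col)}
      (halfSpace (K := K) (orientedNormal v) (orientedOffset c) B) {q}) m := by
  classical
  by_cases hq : ∃ i, q ∈ halfSpace (K := K) (orientedNormal v) (orientedOffset c) B (Sum.inr i)
  · obtain ⟨i, hi⟩ := hq
    refine acyclicAt_of_cons_mem (Sum.inr i) fun l ⟨hl, _, rfl, hO⟩ => ⟨?_, q, rfl, ?_⟩
    · simpa using hl
    · exact List.forall_mem_cons.2 ⟨hi, hO⟩
  rw [nerve_singleton_eq_map_chessboard (not_exists.1 hq)]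
  set zeroCount : C → ℕ := fun k => Finset.card {i | slack (v i) (c i) q = 0 ∧ col i = k}
  have zeroCount_add (k : C) :
      zeroCount k + Finset.card {i ∈ {i | slack (v i) (c i) q ≠ 0} | col i = k} =
        Finset.card {i | col i = k} := by
    rw [← Finset.card_filter_add_card_filter_not (s := {i | col i = k})
      (p := fun i => slack (v i) (c i) q = 0), Finset.filter_filter, Finset.filter_filter,
      Finset.filter_filter]
    simp only [and_comm, zeroCount, ne_eq]
  have sum_zeroCount : ∑ k, zeroCount k = Finset.card {i | slack (v i) (c i) q = 0} := by
    rw [Finset.card_eq_sum_card_fiberwise (f := col) (t := Finset.univ)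
      fun _ _ => Finset.mem_univ _]
    simp only [Finset.filter_filter, zeroCount]
  refine (acyclicAt_chessboard (fun k => Fintype.card K - zeroCount k)
    (fun k => Nat.sub_le _ _) (fun k hk => ?_) ?_).image_map
      (Sum.inl_injective.comp injective_sideContaining)
  · have := zeroCount_add k
    have := hcol k
    rw [Finset.card_univ]
    omega
  · have card_mul_le : Fintype.card C * Fintype.card K ≤
        ∑ k, (Fintype.card K - zeroCount k) + ∑ k, zeroCount k := by
      rw [← Finset.sum_add_distrib, ← Finset.card_univ, ← smul_eq_mul, ← Finset.sum_const]
      exact Finset.sum_le_sum fun k _ => le_tsub_add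
    omega

theorem acyclicAt_configurations [Zero K]
    (hgen : InGenericPosition fun i => slack (v i) (c i)) (hI : d ≤ Fintype.card I)
    (hcol : ∀ k, 2 * Fintype.card K ≤ Finset.card {i | col i = k} + 1)
    (hm : m < Fintype.card C * Fintype.card K) :
    AcyclicAt R (configurations (K := K) (orientedNormal v) (orientedOffset c)
      (Compatible col) B) m := by
  set φ : I ↪ LabelledIndex (I × SignType) K (d + 1) :=
    ⟨fun i => Sum.inl ((i, 1), 0), fun i j h => by simpa using h⟩
  have slack_φ (i : I) : slack (normal (orientedNormal v) (φ i)) (offset (orientedOffset c) B (φ i))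
      = slack (v i) (c i) := by
    change slack (((1 : SignType) : ℝ) • v i) (((1 : SignType) : ℝ) * c i) = _
    rw [SignType.coe_one, one_smul, one_mul]
  refine acyclicAt_nerve_of_cutsProperly sublistClosed_pairwise (by simp)
    isOpenPolyhedron_halfSpace (Finset.univ.map φ) (CutsProperly.map ?_) convex_univ
    Set.univ_nonempty fun q _ m' hm' => acyclicAt_nerve_halfSpace_singleton hcol ?_
  · simpa only [slack_φ] using hgen.cutsProperly (by rwa [finrank_euclideanSpace_fin])
  · simp only [Finset.filter_map, Finset.card_map, Function.comp_def, slack_φ] at hm'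
    exact hm'.trans_lt hm

end ColoredConfigurations

section RainbowSimplices

open Module

variable {I C ι κ E : Type*} [AddCommGroup E] [Module ℝ E] [TopologicalSpace E]

/-- Pairwise disjoint rainbow subfamilies of the hyperplanes `ℓ i = 0`, bounding simplexes with a
common interior point. -/
structure AreRainbowSimplices (ℓ : I → E →ᵃ[ℝ] ℝ) (col : I → C) (S : ι → Finset I) : Prop where
  disjoint : ∀ a b, a ≠ b → Disjoint (S a) (S b)
  card_eq : ∀ a, (S a).card = finrank ℝ E + 1
  exists_color : ∀ a k, ∃ i ∈ S a, col i = k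
  exists_mem_interior : ∃ q, ∀ a, q ∈ interior (convexHull ℝ (simplexVertices ℓ (S a)))

variable {ℓ : I → E →ᵃ[ℝ] ℝ} {col : I → C}

theorem surjective_of_two_mul_le_card_fiber [Fintype I] [DecidableEq C] {n : ℕ} (hn : 0 < n)
    (h : ∀ k, 2 * n ≤ Finset.card {i | col i = k} + 1) : Function.Surjective col := fun k => by
  have card_color := h k
  obtain ⟨i, hi⟩ := Finset.card_pos.1 (show 0 < Finset.card {i | col i = k} by omega)
  exact ⟨i, (Finset.mem_filter.1 hi).2⟩

theorem AreRainbowSimplices.comp {S : ι → Finset I} (h : AreRainbowSimplices ℓ col S)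
    {f : κ → ι} (hf : Function.Injective f) : AreRainbowSimplices ℓ col (S ∘ f) where
  disjoint _ _ hab := h.disjoint _ _ (hf.ne hab)
  card_eq _ := h.card_eq _
  exists_color _ := h.exists_color _
  exists_mem_interior := h.exists_mem_interior.imp fun _ hq _ => hq _

theorem exists_areRainbowSimplices_of_subsingleton [Subsingleton ι] [Fintype C]
    [FiniteDimensional ℝ E] (hgen : InGenericPosition ℓ) (hℓ : ∀ i, Continuous (ℓ i))
    (hC : Fintype.card C = finrank ℝ E + 1) (hcol : Function.Surjective col) :
    ∃ S : ι → Finset I, AreRainbowSimplices ℓ col S := by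
  classical
  obtain ⟨f, hf⟩ := hcol.hasRightInverse
  have card_eq : (Finset.univ.image f).card = finrank ℝ E + 1 := by
    rw [Finset.card_image_of_injective _ hf.injective, Finset.card_univ, hC]
  obtain ⟨q, hq⟩ := hgen.nonempty_interior_convexHull_simplexVertices hℓ card_eq
  exact ⟨fun _ => Finset.univ.image f, fun a b hab => (hab (Subsingleton.elim a b)).elim,
    fun _ => card_eq, fun _ k => ⟨f k, Finset.mem_image_of_mem f (Finset.mem_univ k), hf k⟩,
    q, fun _ => hq⟩

end RainbowSimplices

section FromZeros

open Module

variable {I K C : Type*} {d : ℕ} {v : I → EuclideanSpace ℝ (Fin d)} {c : I → ℝ} {col : I → C}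
  {w : LabelledIndex (I × SignType) K (d + 1) → ℝ} {q : EuclideanSpace ℝ (Fin d)} {a : K} {i : I}

theorem eq_of_pairwise_compatible {σ : Set ((I × SignType) × K)} (hσ : σ.Pairwise (Compatible col))
    {u u' : (I × SignType) × K} (hu : u ∈ σ) (hu' : u' ∈ σ)
    (h : u.1.1 = u'.1.1 ∨ col u.1.1 = col u'.1.1 ∧ u.2 = u'.2) : u = u' :=
  by_contra fun hne => h.elim (hσ hu hu' hne).1 fun h => (hσ hu hu' hne).2 h.1 h.2

/-- The coefficient of the vector `v i` in the part of `w` with label `a`. -/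
def labelCoeff (w : LabelledIndex (I × SignType) K (d + 1) → ℝ) (a : K) (i : I) : ℝ :=
  ∑ σ : SignType, w (Sum.inl ((i, σ), a)) * σ

theorem labelCoeff_mul_slack_pos (hw : ∀ u, 0 ≤ w u)
    (hq : ∀ u ∈ {u | w (Sum.inl u) ≠ 0},
      0 < slack (orientedNormal v u.1) (orientedOffset c u.1) q)
    (hi : ∃ σ, w (Sum.inl ((i, σ), a)) ≠ 0) : 0 < labelCoeff w a i * slack (v i) (c i) q := by
  have term_pos (σ : SignType) (hσ : w (Sum.inl ((i, σ), a)) ≠ 0) :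
      0 < w (Sum.inl ((i, σ), a)) * σ * slack (v i) (c i) q := by
    rw [mul_assoc, ← slack_oriented (i, σ)]
    exact mul_pos ((hw _).lt_of_ne' hσ) (hq ((i, σ), a) hσ)
  rw [labelCoeff, Finset.sum_mul]
  refine Finset.sum_pos' (fun σ _ => ?_) (hi.imp fun σ hσ => ⟨Finset.mem_univ σ, term_pos σ hσ⟩)
  by_cases hσ : w (Sum.inl ((i, σ), a)) = 0
  · rw [hσ, zero_mul, zero_mul]
  · exact (term_pos σ hσ).le

open scoped Classical in
/-- The hyperplanes with a side of label `a` in the support of `w`. -/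
noncomputable def labelSupport [Fintype I] (w : LabelledIndex (I × SignType) K (d + 1) → ℝ)
    (a : K) : Finset I :=
  {i | ∃ σ, w (Sum.inl ((i, σ), a)) ≠ 0}

variable [Fintype I]

theorem mem_labelSupport : i ∈ labelSupport w a ↔ ∃ σ, w (Sum.inl ((i, σ), a)) ≠ 0 := by
  simp [labelSupport]

theorem disjoint_labelSupport
    (hw : {u | w (Sum.inl u) ≠ 0}.Pairwise (Compatible col)) {a b : K} (hab : a ≠ b) :
    Disjoint (labelSupport w a) (labelSupport w b) := by
  refine Finset.disjoint_left.2 fun i hia hib => hab ?_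
  obtain ⟨σ, hσ⟩ := mem_labelSupport.1 hia
  obtain ⟨τ, hτ⟩ := mem_labelSupport.1 hib
  exact congr(($(eq_of_pairwise_compatible hw hσ hτ (.inl rfl))).2)

theorem injOn_labelSupport (hw : {u | w (Sum.inl u) ≠ 0}.Pairwise (Compatible col)) :
    Set.InjOn col (labelSupport w a) := by
  intro i hi j hj hij
  obtain ⟨σ, hσ⟩ := mem_labelSupport.1 hi
  obtain ⟨τ, hτ⟩ := mem_labelSupport.1 hj
  exact congr(($(eq_of_pairwise_compatible hw hσ hτ (.inr ⟨hij, rfl⟩))).1.1)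

variable [Fintype K] [DecidableEq K]

theorem labelSupport_nonempty (hzero : ∀ a, combination (testMatrix (orientedNormal v)) a w = 0)
    (hw : w ∈ stdSimplex ℝ _) (hinf : ∀ i, w (Sum.inr i) = 0) : (labelSupport w a).Nonempty := by
  obtain ⟨⟨i, σ⟩, -, hσ⟩ := Finset.exists_ne_zero_of_sum_ne_zero <| right_ne_zero_of_mul <|
    ne_of_eq_of_ne (card_mul_sum_eq_one hzero hw hinf a) one_ne_zero
  exact ⟨i, mem_labelSupport.2 ⟨σ, hσ⟩⟩

theorem sum_labelCoeff_smul_eq_zero [Nonempty K]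
    (hzero : ∀ a, combination (testMatrix (orientedNormal v)) a w = 0)
    (hinf : ∀ i, w (Sum.inr i) = 0) : ∑ i ∈ labelSupport w a, labelCoeff w a i • v i = 0 := by
  rw [← sum_smul_eq_zero hzero hinf a, Fintype.sum_prod_type]
  simp only [orientedNormal, smul_smul, ← Finset.sum_smul]
  refine Finset.sum_subset (Finset.subset_univ _) fun i _ hi => ?_
  simp only [mem_labelSupport, not_exists, not_not] at hi
  simp only [labelCoeff, hi, zero_mul, Finset.sum_const_zero, zero_smul]

theorem areRainbowSimplices_labelSupport [Nonempty K] [Fintype C]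
    (hgen : InGenericPosition fun i => slack (v i) (c i)) (hC : Fintype.card C = d + 1)
    (hI : d ≤ Fintype.card I)
    (hw : w ∈ zeros (orientedNormal v) (orientedOffset c) (Compatible col))
    (hinf : ∀ i, w (Sum.inr i) = 0) :
    AreRainbowSimplices (fun i => slack (v i) (c i)) col (labelSupport w) := by
  obtain ⟨hsimplex, hzero, hpairwise, q, hq⟩ := hw
  have slack_pos (a : K) (i) (hi : i ∈ labelSupport w a) :
      0 < labelCoeff w a i * slack (v i) (c i) q :=
    labelCoeff_mul_slack_pos hsimplex.1 hq (mem_labelSupport.1 hi)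
  have relation (a : K) := affineRelation_slack (b := c)
    (sum_labelCoeff_smul_eq_zero (a := a) hzero hinf)
  have constant_ne_zero (a : K) : ∑ i ∈ labelSupport w a, labelCoeff w a i * c i ≠ 0 := by
    rw [← relation a q]
    exact (Finset.sum_pos (slack_pos a) (labelSupport_nonempty hzero hsimplex hinf)).ne'
  have card_le (a : K) : (labelSupport w a).card ≤ Fintype.card C :=
    Finset.card_le_card_of_injOn col (fun _ _ => Finset.mem_univ _) (injOn_labelSupport hpairwise)
  have card_eq (a : K) : (labelSupport w a).card = finrank ℝ (EuclideanSpace ℝ (Fin d)) + 1 := by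
    refine hgen.card_eq_of_affineRelation ?_ ?_ (relation a) (constant_ne_zero a) <;>
      rw [finrank_euclideanSpace_fin]
    exacts [hI, hC ▸ card_le a]
  refine ⟨fun a b => disjoint_labelSupport hpairwise, card_eq, fun a k => ?_, q, fun a =>
    hgen.mem_interior_convexHull_simplexVertices (fun _ => continuous_slack) (card_eq a)
      (relation a) (slack_pos a)⟩
  have card_univ_le : (Finset.univ : Finset C).card ≤ (labelSupport w a).card := by
    rw [card_eq, finrank_euclideanSpace_fin, Finset.card_univ, hC]
  exact Finset.surjOn_of_injOn_of_card_le col (fun _ _ => Finset.mem_univ _)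
    (injOn_labelSupport hpairwise) card_univ_le (Finset.mem_univ k)

theorem exists_areRainbowSimplices_field (K : Type*) [Fintype K] [Field K] [Fintype C]
    [DecidableEq C] (hgen : InGenericPosition fun i => slack (v i) (c i))
    (hC : Fintype.card C = d + 1)
    (hcol : ∀ k, 2 * Fintype.card K ≤ Finset.card {i | col i = k} + 1) :
    ∃ S : K → Finset I, AreRainbowSimplices (fun i => slack (v i) (c i)) col S := by
  classical
  have hI : d ≤ Fintype.card I := by
    have := Fintype.card_le_of_surjective col
      (surjective_of_two_mul_le_card_fiber Fintype.card_pos hcol)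
    omega
  obtain ⟨w, hw, hinf⟩ := exists_mem_zeros_inr_eq_zero
    (y := orientedNormal v) (b := orientedOffset c) (r := Compatible (K := K) col)
    (fun g j j' h h' hr => ⟨hr.1, fun hj => (add_right_injective g).ne (hr.2 hj)⟩)
    fun B m hm => acyclicAt_configurations hgen hI hcol (hC ▸ hm)
  exact ⟨labelSupport w, areRainbowSimplices_labelSupport hgen hC hI hw hinf⟩

theorem exists_areRainbowSimplices_fin [Fintype C] [DecidableEq C] {r : ℕ}
    (hr : ∃ p k : ℕ, p.Prime ∧ r = p ^ k) (hgen : InGenericPosition fun i => slack (v i) (c i))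
    (hC : Fintype.card C = d + 1) (hcol : ∀ k, 2 * r ≤ Finset.card {i | col i = k} + 1) :
    ∃ S : Fin r → Finset I, AreRainbowSimplices (fun i => slack (v i) (c i)) col S := by
  obtain ⟨p, k, hp, rfl⟩ := hr
  rcases k.eq_zero_or_pos with rfl | hk
  · rw [pow_zero] at hcol ⊢
    exact exists_areRainbowSimplices_of_subsingleton hgen (fun _ => continuous_slack)
      (by rw [hC, finrank_euclideanSpace_fin])
      (surjective_of_two_mul_le_card_fiber Nat.one_pos hcol)
  · have : Fact p.Prime := ⟨hp⟩
    have := Fintype.ofFinite (GaloisField p k)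
    have card_field : Fintype.card (GaloisField p k) = p ^ k := by
      rw [← Nat.card_eq_fintype_card, GaloisField.card p k hk.ne']
    obtain ⟨S, hS⟩ := exists_areRainbowSimplices_field (GaloisField p k) hgen hC
      (by rwa [card_field])
    exact ⟨_, hS.comp (Fintype.equivFinOfCardEq card_field).symm.injective⟩

end FromZeros

section Hyperplanes

variable {d n : ℕ} {v : Fin n → EuclideanSpace ℝ (Fin d)} {c : Fin n → ℝ}

theorem slack_eq_zero_iff {E : Type*} [NormedAddCommGroup E] [InnerProductSpace ℝ E] {n q : E}
    {b : ℝ} : slack n b q = 0 ↔ ⟪q, n⟫_ℝ = b := by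
  rw [slack_apply, sub_eq_zero, eq_comm]

theorem inGenericPosition_slack (h : InGeneralPosition fun i => {q | ⟪q, v i⟫_ℝ = c i}) :
    InGenericPosition fun i => slack (v i) (c i) := by
  constructor <;> simp only [slack_eq_zero_iff, finrank_euclideanSpace_fin]
  exacts [h.1, h.2]

theorem simplexVerticesOf_eq_simplexVertices (s : Finset (Fin n)) :
    SimplexVerticesOf (fun i => {q | ⟪q, v i⟫_ℝ = c i}) s =
      simplexVertices (fun i => slack (v i) (c i)) s := by
  simp only [simplexVertices, slack_eq_zero_iff]
  rfl

end Hyperplanes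

end DualColorfulTverberg

/-- The dual colorful Tverberg theorem: `(d+1)t` hyperplanes in general position in
`ℝ^d`, colored with `d+1` colors with each color used exactly `t` times, with `r` a
prime power and `t ≥ 2r-1`. Then there are `r` pairwise disjoint subfamilies of `d+1`
hyperplanes each, every subfamily carrying all `d+1` colors, such that the simplexes
formed by the subfamilies have a common interior point. -/
theorem dual_colorful_tverberg (d r t : ℕ) (hd : 1 ≤ d)
    (hr : ∃ p k : ℕ, p.Prime ∧ r = p ^ k) (ht : 2 * r - 1 ≤ t)
    (H : Fin ((d + 1) * t) → Set (EuclideanSpace ℝ (Fin d)))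
    (hH : ∀ i, IsHyperplane (H i))
    (hgp : InGeneralPosition H)
    (col : Fin ((d + 1) * t) → Fin (d + 1))
    (hcol : ∀ c : Fin (d + 1), {i | col i = c}.ncard = t) :
    ∃ S : Fin r → Finset (Fin ((d + 1) * t)),
      (∀ a b, a ≠ b → Disjoint (S a) (S b)) ∧
      (∀ a, (S a).card = d + 1) ∧
      (∀ a, ∀ c : Fin (d + 1), ∃ i ∈ S a, col i = c) ∧
      ∃ b : EuclideanSpace ℝ (Fin d), ∀ a : Fin r,
        b ∈ interior (convexHull ℝ (SimplexVerticesOf H (S a))) := by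
  choose v c _ hvc using hH
  obtain rfl : H = fun i => {q | ⟪q, v i⟫_ℝ = c i} := funext hvc
  have card_color (k : Fin (d + 1)) : 2 * r ≤ Finset.card {i | col i = k} + 1 := by
    rw [← Set.ncard_coe_finset, Finset.coe_filter_univ, hcol k]
    omega
  obtain ⟨S, hS⟩ := DualColorfulTverberg.exists_areRainbowSimplices_fin hr
    (DualColorfulTverberg.inGenericPosition_slack hgp) (Fintype.card_fin _) card_color
  refine ⟨S, hS.disjoint, fun a => ?_, hS.exists_color, ?_⟩
  · rw [hS.card_eq, finrank_euclideanSpace_fin]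
  · simpa only [DualColorfulTverberg.simplexVerticesOf_eq_simplexVertices] using
      hS.exists_mem_interior
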